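/- Let G be a graph with maximum degree Δ(G) ≥ 4 such that every block of G is either a bipartite graph, a chordless graph, a series-parallel graph, a wheel graph, or a planar graph of girth at least 7. Then χ'_trans(G) ≤ 4. -/

import Mathlib

/-!
Call a set of edges linked for a color set `C` if any two of its proper colorings with colors from
`C` are connected by steps changing at most four color classes (`Linked`). For every `C`,
linkedness is proved for the blocks and passed on to the whole graph: where two pieces share
only a cutvertex, the colors of one piece can be permuted, by steps changing few classes, to fit those
of the other (`Glued.linked`, `linked_of_blocks`, `main_of_good`). Blocks enter only through three
cases (`Good`): they are bipartite, or every subgraph has a vertex of degree at most two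
(`2`-degenerate), or they become `2`-degenerate after the removal of one edge between two vertices of
degree at most three. The last case covers wheels and reduces to the previous one, since with at
least five colors an edge with fewer conflicts than colors may be removed (`linked_of_erase`); with at
most four colors there is nothing to prove.

*Bipartite graphs.* Every color class is completed to an involution of the vertices by fixing those
which miss the color. For all `u` and `v`, the number of colors carrying `u` to `v` is the same for
any two colorings, and two families of permutations with this property are connected by steps changing
at most three permutations (`perm_chain`, `linked_of_colorable_two`).

*`2`-degenerate graphs.* With five colors, induction on the number of edges: either some edge has few
conflicts, or a vertex `y` of degree five has three neighbours of degree at most two. Then a fork, two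
edges from `y` to such neighbours `x₀` and `x₁`, is deleted and `x₁` is merged into `x₀`; colorings and
steps of the smaller multigraph lift back (`TwoDeg.linked_five`). For more colors, both colorings are
moved to colorings having a common class for one color, namely a matching covering the vertices of
large degree (`TwoDeg.exists_matching`), and this class is removed (`class_lift`, `TwoDeg.linked`).

*Which blocks are `2`-degenerate.* A chordless graph is, because a longest path inside a vertex set of
minimum degree three yields a cycle with a chord (`td_of_chordless`). A series-parallel graph is,
because minimum degree three yields a `K₄` minor (`minor_K4_of_dense`).

For a planar graph of girth at least seven (`td_of_planar`), planarity being the absence of `K₅` and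
`K₃,₃` minors, Euler's formula is needed. In a subgraph of minimum degree three, a smallest piece
attached at two linked vertices `u`, `v` has a `3`-connected torso with the same excluded minors
(`Piece.tri`, `Piece.minor`). A `3`-connected graph without these minors has an abstract dual, that is,
a labelling of the two sides of each edge by faces whose boundaries span the cycle space over `𝔽₂`
(`exists_dual`). This is proved by contracting an edge `x y` such that no third vertex forms a separator
of size three with its ends (`Tri.exists_edge`), deleting the contracted vertex, and putting `x` and `y`
back into the resulting face; their neighbours on the boundary of that face do not cross, as otherwise
a `K₅` or `K₃,₃` minor would appear (`Hub.sep`). Counting dimensions and edges then shows that the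
cycles avoiding `u v` cannot all have length at least seven (`no_dual_of_long`).
-/

open SimpleGraph Set

namespace EdgeTrans

universe u v

variable {V : Type*} {W : Type*}

/-- The degree of a vertex. -/
noncomputable def deg (G : SimpleGraph V) (x : V) : ℕ :=
  (G.neighborSet x).ncard

/-- The maximum degree `Δ(G)`. -/
noncomputable def maxDeg (G : SimpleGraph V) : ℕ :=
  ⨆ x, deg G x

/-- A proper `t`-edge-coloring of `G`, using the colors `1, …, t`. -/
def IsProperEdgeColoring (G : SimpleGraph V) (t : ℕ) (f : Sym2 V → ℕ) : Prop :=
  (∀ e ∈ G.edgeSet, f e ∈ Finset.Icc 1 t) ∧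
  ∀ e₁ ∈ G.edgeSet, ∀ e₂ ∈ G.edgeSet, e₁ ≠ e₂ → (∃ x, x ∈ e₁ ∧ x ∈ e₂) → f e₁ ≠ f e₂

/-- The color class `M(f, j)`: the set of edges of `G` colored `j` by `f`. -/
def colorClass (G : SimpleGraph V) (f : Sym2 V → ℕ) (j : ℕ) : Set (Sym2 V) :=
  {e | e ∈ G.edgeSet ∧ f e = j}

/-- `f` and `g` differ by at most `n` color classes. -/
def DifferAtMost (G : SimpleGraph V) (n : ℕ) (f g : Sym2 V → ℕ) : Prop :=
  {j : ℕ | colorClass G f j ≠ colorClass G g j}.ncard ≤ n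

/-- `f` and `g` are `n`-equivalent proper `t`-edge-colorings: one can be transformed into the
other by a sequence of proper `t`-edge-colorings in which consecutive colorings differ by at
most `n` color classes. -/
def NEquiv (G : SimpleGraph V) (t n : ℕ) (f g : Sym2 V → ℕ) : Prop :=
  ∃ (k : ℕ) (F : ℕ → Sym2 V → ℕ), 1 ≤ k ∧ F 0 = f ∧ F k = g ∧
    (∀ i ≤ k, IsProperEdgeColoring G t (F i)) ∧
    ∀ i < k, DifferAtMost G n (F i) (F (i + 1))

/-- The chromatic index `χ'(G)`. -/
noncomputable def chromIdx (G : SimpleGraph V) : ℕ :=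
  sInf {t | ∃ f, IsProperEdgeColoring G t f}

/-- The edge chromatic transformation index `χ'_trans(G)`: the minimum `n ≥ 2` such that any
two proper `χ'(G)`-edge-colorings of `G` are `n`-equivalent. -/
noncomputable def transIdx (G : SimpleGraph V) : ℕ :=
  sInf {n | 2 ≤ n ∧ ∀ f g, IsProperEdgeColoring G (chromIdx G) f →
      IsProperEdgeColoring G (chromIdx G) g → NEquiv G (chromIdx G) n f g}

/-- `v` is a cutvertex of `G`: some two other vertices are connected in `G`, but every walk
between them passes through `v`. -/
def IsCutVertex (G : SimpleGraph V) (x : V) : Prop :=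
  ∃ a b : V, a ≠ x ∧ b ≠ x ∧ G.Reachable a b ∧ ∀ p : G.Walk a b, x ∈ p.support

/-- A block of `G`: a maximal connected subgraph without a cutvertex of the subgraph. -/
def IsBlock (G : SimpleGraph V) (B : G.Subgraph) : Prop :=
  B.coe.Connected ∧ (∀ x, ¬ IsCutVertex B.coe x) ∧
    ∀ B' : G.Subgraph, B ≤ B' → B'.coe.Connected →
      (∀ x, ¬ IsCutVertex B'.coe x) → B' = B

/-- Membership in the class `𝒜(q)`: every subgraph `H` of `G` with `Δ(H) ≤ q` has a proper
`q`-edge-coloring. -/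
def MemA (q : ℕ) (G : SimpleGraph V) : Prop :=
  ∀ H : SimpleGraph V, H ≤ G → maxDeg H ≤ q → ∃ f, IsProperEdgeColoring H q f

/-- `G` is `k`-degenerate: every (nonempty) subgraph of `G` contains a vertex of degree
at most `k` in the subgraph. -/
def Degenerate (k : ℕ) (G : SimpleGraph V) : Prop :=
  ∀ H : G.Subgraph, H.verts.Nonempty → ∃ x ∈ H.verts, (H.neighborSet x).ncard ≤ k

/-- `G` has `H` as a minor (via branch sets). -/
def HasMinor (G : SimpleGraph V) (H : SimpleGraph W) : Prop :=
  ∃ F : W → Set V,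
    (∀ w, (G.induce (F w)).Connected) ∧
    (∀ w₁ w₂, w₁ ≠ w₂ → Disjoint (F w₁) (F w₂)) ∧
    (∀ w₁ w₂, H.Adj w₁ w₂ → ∃ v₁ ∈ F w₁, ∃ v₂ ∈ F w₂, G.Adj v₁ v₂)

/-- Planarity, via Wagner's characterization: no `K₅` minor and no `K₃,₃` minor. -/
def Planar (G : SimpleGraph V) : Prop :=
  ¬ HasMinor G (completeGraph (Fin 5)) ∧
  ¬ HasMinor G (completeBipartiteGraph (Fin 3) (Fin 3))

/-- Series-parallel: no `K₄` minor. -/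
def SeriesParallel (G : SimpleGraph V) : Prop :=
  ¬ HasMinor G (completeGraph (Fin 4))

/-- `G` is chordless: in every cycle, any two nonconsecutive vertices are non-adjacent,
i.e. every edge of `G` joining two vertices of a cycle is an edge of the cycle. -/
def Chordless (G : SimpleGraph V) : Prop :=
  ∀ (x : V) (c : G.Walk x x), c.IsCycle →
    ∀ a ∈ c.support, ∀ b ∈ c.support, G.Adj a b → s(a, b) ∈ c.edges

/-- The wheel graph with hub `none` and cycle `ZMod n`. -/
def wheelGraph (n : ℕ) : SimpleGraph (Option (ZMod n)) :=
  SimpleGraph.fromRel (fun a b =>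
    a = none ∨ ∃ i : ZMod n, a = some i ∧ b = some (i + 1))

/-- `G` is a wheel graph. -/
def IsWheel (G : SimpleGraph V) : Prop :=
  ∃ n : ℕ, 3 ≤ n ∧ Nonempty (G ≃g wheelGraph n)

/-- `G` is a Halin graph: `G` is planar and is the edge-disjoint union of a spanning tree `T`
on at least four vertices having no vertex of degree two, and a cycle through exactly the
leaves of `T`. -/
def IsHalin (G : SimpleGraph V) : Prop :=
  Planar G ∧ 4 ≤ Nat.card V ∧
  ∃ T : SimpleGraph V, T ≤ G ∧ T.IsTree ∧ (∀ x : V, deg T x ≠ 2) ∧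
    ∃ (x₀ : V) (c : G.Walk x₀ x₀), c.IsCycle ∧
      (∀ e : Sym2 V, e ∈ c.edges ↔ e ∈ G.edgeSet \ T.edgeSet) ∧
      (∀ u : V, u ∈ c.support ↔ deg T u = 1)

/-- The subgraph `G(f,g,t)`: the (spanning) subgraph of `G` with edge set
`M(f,t) △ M(g,t)`. -/
def diffGraph (G : SimpleGraph V) (t : ℕ) (f g : Sym2 V → ℕ) : SimpleGraph V :=
  SimpleGraph.fromEdgeSet (symmDiff (colorClass G f t) (colorClass G g t))

/-- The walk `p` (a path or a cycle) is an entire connected component of its ambient graph: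
every edge incident with a vertex of `p` is an edge of `p`. -/
def IsComponentWalk {G : SimpleGraph V} {u x : V} (p : G.Walk u x) : Prop :=
  ∀ a ∈ p.support, ∀ b, G.Adj a b → s(a, b) ∈ p.edges

/-- The color `i` is missing at `x` under `f`. -/
def MissingAt (G : SimpleGraph V) (f : Sym2 V → ℕ) (i : ℕ) (x : V) : Prop :=
  ∀ e ∈ G.edgeSet, x ∈ e → f e ≠ i

/-- The path `p` is alternately colored with colors `a` and `b` under `f`
(an `(a,b)`-colored path). -/
def AltColored (f : Sym2 V → ℕ) (a b : ℕ) {G : SimpleGraph V} {u x : V}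
    (p : G.Walk u x) : Prop :=
  (∀ i : Fin p.edges.length, f (p.edges.get i) = if Even i.1 then a else b) ∨
  (∀ i : Fin p.edges.length, f (p.edges.get i) = if Even i.1 then b else a)

/-- The path `p` is `t`-alternating: of any two consecutive edges, one is colored `t`. -/
def AltPath (f : Sym2 V → ℕ) (t : ℕ) {G : SimpleGraph V} {u x : V}
    (p : G.Walk u x) : Prop :=
  ∀ (i : ℕ) (h : i + 1 < p.edges.length),
    f (p.edges.get ⟨i, Nat.lt_of_succ_lt h⟩) = t ∨ f (p.edges.get ⟨i + 1, h⟩) = t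

/-- The cycle `c` is `t`-alternating: of any two (cyclically) consecutive edges, one is
colored `t`. -/
def IsAltCycle (f : Sym2 V → ℕ) (t : ℕ) {G : SimpleGraph V} {u : V}
    (c : G.Walk u u) : Prop :=
  ∀ i : Fin c.edges.length,
    f (c.edges.get i) = t ∨
    f (c.edges.get ⟨(i.1 + 1) % c.edges.length, Nat.mod_lt _ i.pos⟩) = t

/-- `G` is 2-connected. -/
def TwoConnected (G : SimpleGraph V) : Prop :=
  G.Connected ∧ 3 ≤ Nat.card V ∧ ∀ x, ¬ IsCutVertex G x

/-- The union of the cycle `c` and the ears `P j` for `j < i`, as a subgraph. -/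
noncomputable def earPrefix {G : SimpleGraph V} {v₀ : V} (c : G.Walk v₀ v₀) {n : ℕ}
    {x y : Fin n → V} (P : ∀ i : Fin n, G.Walk (x i) (y i)) (i : ℕ) : G.Subgraph :=
  c.toSubgraph ⊔ ⨆ j : Fin n, ⨆ _ : (j : ℕ) < i, (P j).toSubgraph

/-- `c, P 0, …, P (n-1)` is a `t`-alternating ear decomposition with respect to the cycle `c`:
`c` is a `t`-alternating cycle, and each `P i` is a `(cᵢ, t)`-colored path (`cᵢ ≤ t - 1`) which
is an ear of `c ∪ P 0 ∪ … ∪ P i`, i.e. its endpoints lie in the previous part and its internal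
vertices have degree 2 in `c ∪ P 0 ∪ … ∪ P i`. -/
def IsEarDecomp (G : SimpleGraph V) (f : Sym2 V → ℕ) (t : ℕ) {v₀ : V} (c : G.Walk v₀ v₀)
    (n : ℕ) (x y : Fin n → V) (P : ∀ i : Fin n, G.Walk (x i) (y i)) : Prop :=
  c.IsCycle ∧ IsAltCycle f t c ∧
  ∀ i : Fin n,
    (P i).IsPath ∧ 1 ≤ (P i).length ∧
    (∃ ci : ℕ, ci ≤ t - 1 ∧ AltColored f ci t (P i)) ∧
    x i ∈ (earPrefix c P (i : ℕ)).verts ∧ y i ∈ (earPrefix c P (i : ℕ)).verts ∧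
    ∀ a ∈ (P i).support, a ≠ x i → a ≠ y i →
      ((earPrefix c P ((i : ℕ) + 1)).neighborSet a).ncard = 2

/-- The line graph of `G`. -/
def lineGr (G : SimpleGraph V) : SimpleGraph G.edgeSet :=
  SimpleGraph.fromRel (fun e₁ e₂ => ∃ x, x ∈ (e₁ : Sym2 V) ∧ x ∈ (e₂ : Sym2 V))

/-- The clique number (in `ℕ∞`). -/
noncomputable def cliqueNumE (G : SimpleGraph V) : ℕ∞ :=
  sSup {n : ℕ∞ | ∃ (m : ℕ) (s : Finset V), n = (m : ℕ∞) ∧ G.IsNClique m s}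

/-- `G` is a perfect graph: every induced subgraph has chromatic number equal to its
clique number. -/
def IsPerfect (G : SimpleGraph V) : Prop :=
  ∀ s : Set V, (G.induce s).chromaticNumber = cliqueNumE (G.induce s)

/-- A partition of the vertex set of `G` into `n` cliques, each of size `sz`. -/
def IsCliquePartition (G : SimpleGraph V) (n sz : ℕ) (P : Set (Set V)) : Prop :=
  P.ncard = n ∧ (∀ s ∈ P, G.IsClique s ∧ s.ncard = sz) ∧
  ⋃₀ P = Set.univ ∧ P.Pairwise fun s₁ s₂ => Disjoint s₁ s₂

/-- A proper vertex `n`-coloring of `G`, viewed as a partition of the vertex set into `n`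
independent sets (color classes). -/
def IsIndepPartition (G : SimpleGraph V) (n : ℕ) (P : Set (Set V)) : Prop :=
  P.ncard = n ∧ (∀ s ∈ P, ∀ a ∈ s, ∀ b ∈ s, ¬ G.Adj a b) ∧
  ⋃₀ P = Set.univ ∧ P.Pairwise fun s₁ s₂ => Disjoint s₁ s₂

/-- The graph `H(p,n)`: vertex classes `V_1, …, V_{2n}` of size `p` (indexed here by
`ZMod (2n)`), with two vertices adjacent iff they lie in the same class or in (cyclically)
consecutive classes. -/
def Hgraph (p n : ℕ) : SimpleGraph (ZMod (2 * n) × Fin p) :=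
  SimpleGraph.fromRel (fun a b => a.1 = b.1 ∨ a.1 + 1 = b.1)

/-- The clique partition `{C_1, …, C_n}` of `H(p,n)`, `C_i = V_{2i-1} ∪ V_{2i}`. -/
def Cpart (p n : ℕ) : Set (Set (ZMod (2 * n) × Fin p)) :=
  {s | ∃ i : Fin n, s = {x | x.1 = ((2 * (i : ℕ) : ℕ) : ZMod (2 * n)) ∨
      x.1 = ((2 * (i : ℕ) + 1 : ℕ) : ZMod (2 * n))}}

/-- The clique partition `{R_1, …, R_n}` of `H(p,n)`, `R_1 = V_{2n} ∪ V_1` and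
`R_i = V_{2i-2} ∪ V_{2i-1}`. -/
def Rpart (p n : ℕ) : Set (Set (ZMod (2 * n) × Fin p)) :=
  {s | ∃ i : Fin n, s = {x | x.1 = ((2 * (i : ℕ) : ℕ) : ZMod (2 * n)) - 1 ∨
      x.1 = ((2 * (i : ℕ) : ℕ) : ZMod (2 * n))}}

/-- A multigraph on vertices `α` with edges `β`: each edge has two distinct endpoints. -/
structure Multigraph (α : Type u) (β : Type v) where
  ends : β → Sym2 α
  not_isDiag : ∀ e, ¬ (ends e).IsDiag

namespace Multigraph

variable {α : Type u} {β : Type v}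

/-- A proper `t`-edge-coloring of a multigraph, with colors `1, …, t`. -/
def IsProper (G : Multigraph α β) (t : ℕ) (f : β → ℕ) : Prop :=
  (∀ e, f e ∈ Finset.Icc 1 t) ∧
  ∀ e₁ e₂ : β, e₁ ≠ e₂ → (∃ x, x ∈ G.ends e₁ ∧ x ∈ G.ends e₂) → f e₁ ≠ f e₂

/-- The color class `M(f,j)` of a multigraph edge coloring. -/
def mColorClass (f : β → ℕ) (j : ℕ) : Set β := {e | f e = j}

/-- `f` and `g` differ by at most `n` color classes. -/
def MDifferAtMost (n : ℕ) (f g : β → ℕ) : Prop :=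
  {j : ℕ | mColorClass f j ≠ mColorClass g j}.ncard ≤ n

/-- `n`-equivalence of proper `t`-edge-colorings of a multigraph. -/
def MNEquiv (G : Multigraph α β) (t n : ℕ) (f g : β → ℕ) : Prop :=
  ∃ (k : ℕ) (F : ℕ → β → ℕ), 1 ≤ k ∧ F 0 = f ∧ F k = g ∧
    (∀ i ≤ k, G.IsProper t (F i)) ∧ ∀ i < k, MDifferAtMost n (F i) (F (i + 1))

/-- The chromatic index of a multigraph. -/
noncomputable def mChromIdx (G : Multigraph α β) : ℕ :=
  sInf {t | ∃ f, G.IsProper t f}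

/-- The edge chromatic transformation index of a multigraph. -/
noncomputable def mTransIdx (G : Multigraph α β) : ℕ :=
  sInf {n | 2 ≤ n ∧ ∀ f g, G.IsProper G.mChromIdx f → G.IsProper G.mChromIdx g →
      G.MNEquiv G.mChromIdx n f g}

/-- The degree of a vertex in a multigraph. -/
noncomputable def mDeg (G : Multigraph α β) (x : α) : ℕ := {e | x ∈ G.ends e}.ncard

/-- The underlying simple graph of a multigraph. -/
def toSimple (G : Multigraph α β) : SimpleGraph α :=
  SimpleGraph.fromEdgeSet (Set.range G.ends)

end Multigraph

set_option linter.unusedSectionVars false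

/-! ### Edge colorings of multigraphs and steps between them -/

section Core
variable {E X : Type*}

/-- `f` is a proper edge coloring with color set `C` of the multigraph whose edge set is `A` and
whose incidences are given by `en`.  Loops are not excluded. -/
def PC (A : Finset E) (en : E → Sym2 X) (C : Finset ℕ) (f : E → ℕ) : Prop :=
  (∀ e ∈ A, f e ∈ C) ∧
    ∀ e ∈ A, ∀ e' ∈ A, e ≠ e' → ∀ v, v ∈ en e → v ∈ en e' → f e ≠ f e'

/-- Two proper colorings which differ by a recoloring inside a set of at most four colors. -/
def Step (A : Finset E) (en : E → Sym2 X) (C : Finset ℕ) (f g : E → ℕ) : Prop :=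
  PC A en C f ∧ PC A en C g ∧
    ∃ S ⊆ C, S.card ≤ 4 ∧ ∀ e ∈ A, f e = g e ∨ (f e ∈ S ∧ g e ∈ S)

/-- Equivalence of colorings generated by `Step`. -/
def Eqv (A : Finset E) (en : E → Sym2 X) (C : Finset ℕ) : (E → ℕ) → (E → ℕ) → Prop :=
  Relation.ReflTransGen (Step A en C)

/-- All proper colorings with color set `C` are equivalent. -/
def Linked (A : Finset E) (en : E → Sym2 X) (C : Finset ℕ) : Prop :=
  ∀ f g, PC A en C f → PC A en C g → Eqv A en C f g

variable {A A' : Finset E} {en en' : E → Sym2 X} {C : Finset ℕ} {f g h : E → ℕ}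

lemma Step.symm (hs : Step A en C f g) : Step A en C g f := by
  obtain ⟨h1, h2, S, hS, hc, h⟩ := hs
  exact ⟨h2, h1, S, hS, hc, fun e he => (h e he).imp Eq.symm And.symm⟩

lemma Eqv.symm (hs : Eqv A en C f g) : Eqv A en C g f :=
  (@Relation.ReflTransGen.stdSymm _ _ ⟨fun _ _ => Step.symm⟩).symm _ _ hs

lemma Eqv.trans (h1 : Eqv A en C f g) (h2 : Eqv A en C g h) : Eqv A en C f h :=
  Relation.ReflTransGen.trans h1 h2

lemma Step.eqv (hs : Step A en C f g) : Eqv A en C f g := Relation.ReflTransGen.single hs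

lemma PC.mono (hA : A' ⊆ A) (hf : PC A en C f) : PC A' en C f :=
  ⟨fun e he => hf.1 e (hA he), fun e he e' he' => hf.2 e (hA he) e' (hA he')⟩

lemma PC.congr (hf : PC A en C f) (hfg : ∀ e ∈ A, f e = g e) : PC A en C g :=
  ⟨fun e he => hfg e he ▸ hf.1 e he, fun e he e' he' => hfg e he ▸ hfg e' he' ▸ hf.2 e he e' he'⟩

/-- The color set of a step need not be contained in `C`. -/
lemma Step.mk' (hf : PC A en C f) (hg : PC A en C g) (S : Finset ℕ) (hS : S.card ≤ 4)
    (h : ∀ e ∈ A, f e = g e ∨ (f e ∈ S ∧ g e ∈ S)) : Step A en C f g := by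
  refine ⟨hf, hg, S ∩ C, Finset.inter_subset_right,
    (Finset.card_le_card Finset.inter_subset_left).trans hS, fun e he => ?_⟩
  rcases h e he with h | h
  · exact Or.inl h
  · exact Or.inr ⟨Finset.mem_inter.2 ⟨h.1, hf.1 e he⟩, Finset.mem_inter.2 ⟨h.2, hg.1 e he⟩⟩

lemma Step.of_agree (hf : PC A en C f) (hfg : ∀ e ∈ A, f e = g e) : Step A en C f g :=
  Step.mk' hf (hf.congr hfg) ∅ (by simp) fun e he => Or.inl (hfg e he)

lemma linked_of_card_le (hC : C.card ≤ 4) : Linked A en C := fun _ _ hf hg =>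
  (Step.mk' hf hg C hC fun e he => Or.inr ⟨hf.1 e he, hg.1 e he⟩).eqv

lemma Eqv.pc (h : Eqv A en C f g) (hf : PC A en C f) : PC A en C g := by
  induction h with
  | refl => exact hf
  | tail _ h2 _ => exact h2.2.1

/-- Lifting of linkedness: if steps between colorings of a reduced multigraph `(A', en')` lift to
`(A, en)`, extensions of the same coloring are equivalent, and every coloring of `(A, en)` can be
moved to one that is proper for `(A', en')`, then linkedness of the reduced multigraph implies linkedness. -/
lemma lift
    (same : ∀ h h', PC A en C h → PC A en C h' → PC A' en' C h → (∀ e ∈ A', h e = h' e) →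
      Eqv A en C h h')
    (stp : ∀ F F', Step A' en' C F F' → ∃ h h', PC A en C h ∧ PC A en C h' ∧
      (∀ e ∈ A', h e = F e) ∧ (∀ e ∈ A', h' e = F' e) ∧ Eqv A en C h h')
    (ini : ∀ f, PC A en C f → ∃ f', Eqv A en C f f' ∧ PC A' en' C f')
    (lk : Linked A' en' C) : Linked A en C := by
  have key : ∀ F F', Eqv A' en' C F F' → PC A' en' C F → ∀ h h', PC A en C h → PC A en C h' →
      (∀ e ∈ A', h e = F e) → (∀ e ∈ A', h' e = F' e) → Eqv A en C h h' := by
    intro F F' hE hF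
    induction hE with
    | refl =>
      intro h h' hh hh' h1 h2
      exact same h h' hh hh' (hF.congr fun e he => (h1 e he).symm)
        fun e he => (h1 e he).trans (h2 e he).symm
    | tail h1 h2 ih =>
      intro h h' hh hh' e1 e2
      obtain ⟨k, k', hk, hk', k1, k2, k3⟩ := stp _ _ h2
      refine (ih h k hh hk e1 k1).trans (k3.trans ?_)
      exact same _ _ hk' hh' (h2.2.1.congr fun e he => (k2 e he).symm)
        fun e he => (k2 e he).trans (e2 e he).symm
  intro f g hf hg
  obtain ⟨f', hf1, hf2⟩ := ini f hf
  obtain ⟨g', hg1, hg2⟩ := ini g hg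
  refine hf1.trans (Eqv.trans ?_ hg1.symm)
  exact key _ _ (lk f' g' hf2 hg2) hf2 _ _ (hf1.pc hf) (hg1.pc hg) (fun _ _ => rfl) fun _ _ => rfl

open Classical in
lemma PC.update {e : E} {c : ℕ} (hF : PC (A.erase e) en C f) (hc : c ∈ C)
    (h : ∀ e' ∈ A, e' ≠ e → ∀ v, v ∈ en e → v ∈ en e' → f e' ≠ c) :
    PC A en C (Function.update f e c) := by
  constructor
  · intro e' he'
    by_cases h1 : e' = e
    · subst h1; simpa using hc
    · rw [Function.update_of_ne h1]; exact hF.1 _ (Finset.mem_erase.2 ⟨h1, he'⟩)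
  · intro a ha b hb hab v hva hvb
    by_cases h1 : a = e
    · subst h1
      rw [Function.update_self, Function.update_of_ne hab.symm]
      exact (h b hb hab.symm v hva hvb).symm
    · rw [Function.update_of_ne h1]
      by_cases h2 : b = e
      · subst h2
        rw [Function.update_self]
        exact h a ha hab v hvb hva
      · rw [Function.update_of_ne h2]
        exact hF.2 a (Finset.mem_erase.2 ⟨h1, ha⟩) b (Finset.mem_erase.2 ⟨h2, hb⟩) hab v hva hvb

open Classical in
/-- The edges of `A` in conflict with `e`. -/
noncomputable def conf (A : Finset E) (en : E → Sym2 X) (e : E) : Finset E :=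
  A.filter fun e' => e' ≠ e ∧ ∃ v, v ∈ en e ∧ v ∈ en e'

lemma exists_avail {e : E} (F : E → ℕ) (hc : (conf A en e).card < C.card) :
    ∃ c ∈ C, ∀ e' ∈ A, e' ≠ e → ∀ v, v ∈ en e → v ∈ en e' → F e' ≠ c := by
  have : ((conf A en e).image F).card < C.card := Finset.card_image_le.trans_lt hc
  obtain ⟨c, hc1, hc2⟩ := Finset.exists_mem_notMem_of_card_lt_card this
  refine ⟨c, hc1, fun e' he' hne v hv hv' hF => hc2 ?_⟩
  exact Finset.mem_image.2 ⟨e', by simp [conf, he', hne]; exact ⟨v, hv, hv'⟩, hF⟩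

open Classical in
/-- A coloring extends to an edge with fewer than `|C|` conflicting edges. -/
lemma pc_of_erase {e : E} (hc : (conf A en e).card < C.card)
    (h : ∃ f, PC (A.erase e) en C f) : ∃ f, PC A en C f := by
  obtain ⟨f, hf⟩ := h
  obtain ⟨c, hc1, hc2⟩ := exists_avail (A := A) (en := en) (C := C) (e := e) f hc
  exact ⟨_, hf.update hc1 hc2⟩

open Classical in
/-- An edge with fewer than `|C|` conflicting edges may be removed. -/
lemma linked_of_erase {e : E} (hc : (conf A en e).card < C.card)
    (h : Linked (A.erase e) en C) : Linked A en C := by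
  have upd : ∀ (F : E → ℕ) c, ∀ e' ∈ A.erase e, Function.update F e c e' = F e' := by
    intro F c e' he'
    rw [Function.update_of_ne (Finset.ne_of_mem_erase he')]
  refine lift (A' := A.erase e) (en' := en) ?_ ?_ ?_ h
  · intro h h' hh hh' _ hag
    refine (Step.mk' hh hh' {h e, h' e} (Finset.card_le_two.trans (by norm_num)) ?_).eqv
    intro a ha
    by_cases hae : a = e
    · subst hae; right; simp
    · exact Or.inl (hag a (Finset.mem_erase.2 ⟨hae, ha⟩))
  · -- a color available for one coloring outside `S` is available for the other one
    intro F F' hs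
    obtain ⟨hF, hF', S, hS, hS4, hFF⟩ := hs
    have tr : ∀ G G' : E → ℕ, (∀ a ∈ A.erase e, G a = G' a ∨ (G a ∈ S ∧ G' a ∈ S)) →
        ∀ c, c ∉ S → (∀ e' ∈ A, e' ≠ e → ∀ v, v ∈ en e → v ∈ en e' → G e' ≠ c) →
        (∀ e' ∈ A, e' ≠ e → ∀ v, v ∈ en e → v ∈ en e' → G' e' ≠ c) := by
      intro G G' hG c hcS hav e' he' hne v hv hv' heq
      rcases hG e' (Finset.mem_erase.2 ⟨hne, he'⟩) with h | h
      · exact hav e' he' hne v hv hv' (h.trans heq)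
      · exact hcS (heq ▸ h.2)
    obtain ⟨c, hc1, hc2⟩ := exists_avail (A := A) (en := en) (C := C) (e := e) F hc
    obtain ⟨c', hc1', hc2'⟩ := exists_avail (A := A) (en := en) (C := C) (e := e) F' hc
    have fin : ∀ d d', d ∈ C → d' ∈ C → (d = d' ∨ (d ∈ S ∧ d' ∈ S)) →
        (∀ e' ∈ A, e' ≠ e → ∀ v, v ∈ en e → v ∈ en e' → F e' ≠ d) →
        (∀ e' ∈ A, e' ≠ e → ∀ v, v ∈ en e → v ∈ en e' → F' e' ≠ d') →
        ∃ h h', PC A en C h ∧ PC A en C h' ∧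
      (∀ a ∈ A.erase e, h a = F a) ∧ (∀ a ∈ A.erase e, h' a = F' a) ∧ Eqv A en C h h' := by
      intro d d' hd hd' hdd h1 h2
      refine ⟨_, _, hF.update hd h1, hF'.update hd' h2, upd _ _, upd _ _, ?_⟩
      refine (Step.mk' (hF.update hd h1) (hF'.update hd' h2) S hS4 ?_).eqv
      intro a ha
      by_cases hae : a = e
      · subst hae; simpa using hdd
      · rw [Function.update_of_ne hae, Function.update_of_ne hae]
        exact hFF a (Finset.mem_erase.2 ⟨hae, ha⟩)
    by_cases k : c ∈ S
    · by_cases k' : c' ∈ S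
      · exact fin c c' hc1 hc1' (Or.inr ⟨k, k'⟩) hc2 hc2'
      · exact fin c' c' hc1' hc1' (Or.inl rfl)
          (tr F' F (fun a ha => (hFF a ha).imp Eq.symm And.symm) c' k' hc2') hc2'
    · exact fin c c hc1 hc1 (Or.inl rfl) hc2 (tr F F' hFF c k hc2)
  · intro f hf
    exact ⟨f, Relation.ReflTransGen.refl, hf.mono (Finset.erase_subset _ _)⟩

end Core

/-! ### 2-degenerate multigraphs: forks, colorings, and matchings -/

section TwoDegenerate
variable {E X : Type*}
open Classical

/-- The degree of `v` in the multigraph `(A, en)` (a loop counts once). -/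
noncomputable def dg (A : Finset E) (en : E → Sym2 X) (v : X) : ℕ := (A.filter (v ∈ en ·)).card

/-- The multigraph `(A, en)` is 2-degenerate: every nonempty vertex set `W` has a vertex lying on
at most two edges inside `W`. -/
def TwoDeg (A : Finset E) (en : E → Sym2 X) : Prop :=
  ∀ W : Finset X, W.Nonempty →
    ∃ w ∈ W, (A.filter fun e => w ∈ en e ∧ ∀ v ∈ en e, v ∈ W).card ≤ 2

/-- The map identifying `x₁` with `x₀`. -/
noncomputable def mrg (x₀ x₁ : X) (en : E → Sym2 X) : E → Sym2 X :=
  fun e => (en e).map fun v => if v = x₁ then x₀ else v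

variable {A A' : Finset E} {en en' : E → Sym2 X} {C : Finset ℕ} {f g h F : E → ℕ}

lemma TwoDeg.mono (hA : A' ⊆ A) (h : TwoDeg A en) : TwoDeg A' en := fun W hW => by
  obtain ⟨w, hw, h2⟩ := h W hW
  exact ⟨w, hw, (Finset.card_le_card (Finset.filter_subset_filter _ hA)).trans h2⟩

lemma dg_mono (hA : A' ⊆ A) (v : X) : dg A' en v ≤ dg A en v :=
  Finset.card_le_card (Finset.filter_subset_filter _ hA)

lemma dg_le_of_pc (hf : PC A en C f) (v : X) : dg A en v ≤ C.card := by
  refine Finset.card_le_card_of_injOn f ?_ ?_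
  · intro e he
    simp only [Finset.coe_filter, mem_ofPred_eq] at he
    exact hf.1 e he.1
  · intro e he e' he' hee
    simp only [Finset.coe_filter, mem_ofPred_eq] at he he'
    by_contra hne
    exact hf.2 e he.1 e' he'.1 hne v he.2 he'.2 hee

lemma dg_erase {e : E} {v : X} (he : e ∈ A) (hv : v ∈ en e) :
    dg (A.erase e) en v + 1 = dg A en v := by
  unfold dg
  rw [Finset.filter_erase, Finset.card_erase_add_one]
  simp [he, hv]

lemma mem_mrg {x₀ x₁ v : X} {e : E} :
    v ∈ mrg x₀ x₁ en e ↔ (v ∈ en e ∧ v ≠ x₁) ∨ (v = x₀ ∧ x₁ ∈ en e) := by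
  simp only [mrg, Sym2.mem_map]
  constructor
  · rintro ⟨a, ha, rfl⟩
    by_cases h : a = x₁
    · subst h; right; simp [ha]
    · left; simp [h, ha]
  · rintro (⟨h1, h2⟩ | ⟨rfl, h2⟩)
    · exact ⟨v, h1, by simp [h2]⟩
    · exact ⟨x₁, h2, by simp⟩

/-- At a vertex of degree at most two there is at most one edge besides a given one. -/
lemma low_uniq {e o o' : E} {x : X} (he : e ∈ A) (hex : x ∈ en e) (hd : dg A en x ≤ 2)
    (ho : o ∈ A) (ho' : o' ∈ A) (hx : x ∈ en o) (hx' : x ∈ en o')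
    (h : o ≠ e) (h' : o' ≠ e) : o = o' := by
  by_contra hne
  have : ({e, o, o'} : Finset E) ⊆ A.filter (x ∈ en ·) := by
    intro a ha
    simp only [Finset.mem_insert, Finset.mem_singleton] at ha
    rcases ha with rfl | rfl | rfl
    · simp [he, hex]
    · simp [ho, hx]
    · simp [ho', hx']
  have h2 := Finset.card_le_card this
  rw [Finset.card_eq_three.2 ⟨e, o, o', h.symm, h'.symm, hne, rfl⟩] at h2
  unfold dg at hd
  omega

/-- A fork: two distinct edges `e₀ = x₀y` and `e₁ = x₁y`, where `x₀` and `x₁` have degree at most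
two, `y` has degree at least three, and no edge joins `x₀` to `x₁` unless `x₀ = x₁`. A fork is
reduced by deleting its two edges and merging `x₁` into `x₀`; in the merged multigraph `x₀` has
degree at most two, and the remaining edges at `x₀` and `x₁` receive distinct colors. -/
structure Fork (A : Finset E) (en : E → Sym2 X) (e₀ e₁ : E) (x₀ x₁ y : X) : Prop where
  m0 : e₀ ∈ A
  m1 : e₁ ∈ A
  ne : e₀ ≠ e₁
  h0 : en e₀ = s(x₀, y)
  h1 : en e₁ = s(x₁, y)
  d0 : dg A en x₀ ≤ 2
  d1 : dg A en x₁ ≤ 2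
  dy : 3 ≤ dg A en y
  nadj : ∀ e ∈ A, x₀ ∈ en e → x₁ ∈ en e → x₀ = x₁

namespace Fork
variable {e₀ e₁ : E} {x₀ x₁ y : X} (K : Fork A en e₀ e₁ x₀ x₁ y)
include K

lemma symm : Fork A en e₁ e₀ x₁ x₀ y :=
  ⟨K.m1, K.m0, K.ne.symm, K.h1, K.h0, K.d1, K.d0, K.dy, fun e he h h' => (K.nadj e he h' h).symm⟩

lemma y0 : y ≠ x₀ := fun h => by have := K.d0; have := K.dy; rw [h] at this; omega
lemma y1 : y ≠ x₁ := fun h => by have := K.d1; have := K.dy; rw [h] at this; omega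

lemma uniq {o o' : E} (ho : o ∈ A) (ho' : o' ∈ A) (hx : x₀ ∈ en o) (hx' : x₀ ∈ en o')
    (h : o ≠ e₀) (h' : o' ≠ e₀) : o = o' :=
  low_uniq K.m0 (by simp [K.h0]) K.d0 ho ho' hx hx' h h'

/-- The other edges at `x₀`, `x₁` are distinct. -/
lemma o_ne {o o' : E} (ho : o ∈ A) (ho' : o' ∈ A) (hx : x₀ ∈ en o) (hx' : x₁ ∈ en o')
    (h : o ≠ e₀) (h1 : o ≠ e₁) : o ≠ o' := by
  rintro rfl
  have := K.nadj o ho hx hx'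
  subst this
  exact h1 (K.uniq ho K.m1 hx (by simp [K.h1]) h K.ne.symm)

lemma x_ne {o : E} (ho : o ∈ A) (hx : x₀ ∈ en o)
    (h : o ≠ e₀) (h1 : o ≠ e₁) : x₀ ≠ x₁ := by
  rintro rfl
  exact h1 (K.uniq ho K.m1 hx (by simp [K.h1]) h K.ne.symm)

variable (hA' : A' ⊆ (A.erase e₀).erase e₁)
include hA'

omit K hA' in
lemma dg_le : ∀ v, v ≠ x₀ → dg A' (mrg x₀ x₁ en) v ≤ dg A' en v := by
  intro v hv
  refine Finset.card_le_card fun e => ?_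
  simp only [Finset.mem_filter, mem_mrg]
  tauto

lemma dg_x0 : dg A' (mrg x₀ x₁ en) x₀ ≤ 2 := by
  have h2 : dg A' (mrg x₀ x₁ en) x₀ ≤
      dg (A.erase e₀) en x₀ + dg (A.erase e₁) en x₁ := by
    refine (Finset.card_le_card ?_).trans (Finset.card_union_le _ _)
    intro e
    simp only [Finset.mem_filter, mem_mrg, Finset.mem_union]
    rintro ⟨h1, h2⟩
    have := hA' h1
    simp only [Finset.mem_erase] at this ⊢
    tauto
  have := dg_erase (en := en) (v := x₀) K.m0 (by simp [K.h0])
  have := dg_erase (en := en) (v := x₁) K.m1 (by simp [K.h1])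
  have := K.d0
  have := K.d1
  omega

lemma twoDeg (hT : TwoDeg A en) : TwoDeg A' (mrg x₀ x₁ en) := by
  intro W hW
  by_cases hx : x₀ ∈ W
  · refine ⟨x₀, hx, (Finset.card_le_card ?_).trans (K.dg_x0 hA')⟩
    intro e
    simp only [Finset.mem_filter]
    tauto
  · obtain ⟨w, hw, h2⟩ := hT W hW
    refine ⟨w, hw, (Finset.card_le_card ?_).trans h2⟩
    intro e
    simp only [Finset.mem_filter]
    rintro ⟨h1, h3, h4⟩
    have hx1 : x₁ ∉ en e := fun h => hx (h4 _ (mem_mrg.2 (Or.inr ⟨rfl, h⟩)))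
    have hx0 : x₀ ∉ en e := fun h => hx (h4 _ (mem_mrg.2 (Or.inl ⟨h, fun h' => hx1 (h' ▸ h)⟩)))
    have := hA' h1
    simp only [Finset.mem_erase] at this
    refine ⟨this.2.2, ?_, fun v hv => h4 v (mem_mrg.2 (Or.inl ⟨hv, fun h' => hx1 (h' ▸ hv)⟩))⟩
    rcases mem_mrg.1 h3 with h | h
    · exact h.1
    · exact absurd h.2 hx1

omit K hA' in
lemma pc_en (hF : PC A' (mrg x₀ x₁ en) C F) : PC A' en C F := by
  refine ⟨hF.1, fun e he e' he' hne v hv hv' => ?_⟩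
  by_cases hv1 : v = x₁
  · subst hv1
    exact hF.2 e he e' he' hne x₀ (mem_mrg.2 (Or.inr ⟨rfl, hv⟩)) (mem_mrg.2 (Or.inr ⟨rfl, hv'⟩))
  · exact hF.2 e he e' he' hne v (mem_mrg.2 (Or.inl ⟨hv, hv1⟩)) (mem_mrg.2 (Or.inl ⟨hv', hv1⟩))

lemma pc_cross (hF : PC A' (mrg x₀ x₁ en) C F) : ∀ o ∈ A', ∀ o' ∈ A', x₀ ∈ en o → x₁ ∈ en o' →
    F o ≠ F o' := by
  intro o ho o' ho' hx hx'
  have h1 := hA' ho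
  have h2 := hA' ho'
  simp only [Finset.mem_erase] at h1 h2
  refine hF.2 o ho o' ho' (K.o_ne h1.2.2 h2.2.2 hx hx' h1.2.1 h1.1) x₀ ?_
    (mem_mrg.2 (Or.inr ⟨rfl, hx'⟩))
  exact mem_mrg.2 (Or.inl ⟨hx, K.x_ne h1.2.2 hx h1.2.1 h1.1⟩)

omit hA' in
lemma pc_mrg (hF : PC A' en C F) (hc : ∀ o ∈ A', ∀ o' ∈ A', x₀ ∈ en o → x₁ ∈ en o' →
    F o ≠ F o') : PC A' (mrg x₀ x₁ en) C F := by
  refine ⟨hF.1, fun e he e' he' hne v hv hv' => ?_⟩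
  rcases mem_mrg.1 hv with ⟨h1, h2⟩ | ⟨rfl, h2⟩ <;> rcases mem_mrg.1 hv' with ⟨h3, h4⟩ | ⟨h5, h4⟩
  · exact hF.2 e he e' he' hne v h1 h3
  · subst h5
    exact hc e he e' he' h1 h4
  · exact (hc e' he' e he h3 h2).symm
  · exact hF.2 e he e' he' hne x₁ h2 h4

end Fork

/-- Extending a coloring from `A'` to `A`. -/
lemma pc_union (hF : PC A' en C F) (hh : ∀ e ∈ A', h e = F e)
    (hC : ∀ e ∈ A, e ∉ A' → h e ∈ C)
    (h1 : ∀ e ∈ A, e ∉ A' → ∀ e' ∈ A, e' ∉ A' → e ≠ e' → h e ≠ h e')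
    (h2 : ∀ e ∈ A, e ∉ A' → ∀ e' ∈ A', ∀ v, v ∈ en e → v ∈ en e' → h e ≠ F e') :
    PC A en C h := by
  have hF' := hF.congr fun e he => (hh e he).symm
  constructor
  · intro e he
    by_cases k : e ∈ A'
    · exact hF'.1 e k
    · exact hC e he k
  · intro e he e' he' hne v hv hv'
    by_cases k : e ∈ A' <;> by_cases k' : e' ∈ A'
    · exact hF'.2 e k e' k' hne v hv hv'
    · rw [hh e k]; exact (h2 e' he' k' e k v hv' hv).symm
    · rw [hh e' k']; exact h2 e he k e' k' v hv hv'
    · exact h1 e he k e' he' k' hne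

/-- Two distinct colors can be assigned to two edges, each of which excludes colors by a
predicate, provided no color is excluded twice and each edge excludes at most one color. -/
lemma pick2 {p q : ℕ → Prop} {r r' : ℕ} (hr : r ≠ r')
    (hp : ∀ a b, p a → p b → a = b) (hq : ∀ a b, q a → q b → a = b)
    (hpq : (¬ (p r ∧ q r) ∧ ¬ (p r' ∧ q r')) ∨ (¬ p r ∧ ¬ p r') ∨ (¬ q r ∧ ¬ q r')) :
    ∃ a b, ((a = r ∧ b = r') ∨ (a = r' ∧ b = r)) ∧ ¬ p a ∧ ¬ q b := by
  have h1 := hp r r'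
  have h2 := hq r r'
  by_cases k : ¬ p r ∧ ¬ q r'
  · exact ⟨r, r', Or.inl ⟨rfl, rfl⟩, k⟩
  · exact ⟨r', r, Or.inr ⟨rfl, rfl⟩, by tauto, by tauto⟩

/-- A coloring of the reduced multigraph extends to the two edges of the fork: two colors are free at
`y`, and neither is forbidden at both ends `x₀` and `x₁`, whose other edges have distinct colors. -/
lemma Fork.ext2 {e₀ e₁ : E} {x₀ x₁ y : X} (K : Fork A en e₀ e₁ x₀ x₁ y)
    (hF : PC ((A.erase e₀).erase e₁) (mrg x₀ x₁ en) C F) (hy : dg A en y ≤ C.card) :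
    ∃ h, PC A en C h ∧ ∀ e ∈ (A.erase e₀).erase e₁, h e = F e := by
  set A' := (A.erase e₀).erase e₁ with hA'
  have hsub : A' ⊆ (A.erase e₀).erase e₁ := le_rfl
  have hmem : ∀ e, e ∈ A' ↔ e ≠ e₁ ∧ e ≠ e₀ ∧ e ∈ A := by intro e; simp [hA']
  have hne := K.ne
  have hdy : dg A' en y + 2 = dg A en y := by
    rw [← dg_erase K.m0 (by simp [K.h0]), ← dg_erase (A := A.erase e₀) (e := e₁) (v := y)
      (by simp [K.m1, K.ne.symm]) (by simp [K.h1])]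
  have h2 : 1 < (C \ (A'.filter (y ∈ en ·)).image F).card := by
    have := Finset.le_card_sdiff ((A'.filter (y ∈ en ·)).image F) C
    have h3 : ((A'.filter (y ∈ en ·)).image F).card ≤ dg A' en y := Finset.card_image_le
    omega
  obtain ⟨r, hr, r', hr', hrr⟩ := Finset.one_lt_card.1 h2
  have hcr := K.pc_cross hsub hF
  obtain ⟨a, b, hab, ha, hb⟩ := pick2 (p := fun c => ∃ o ∈ A', x₀ ∈ en o ∧ F o = c)
    (q := fun c => ∃ o ∈ A', x₁ ∈ en o ∧ F o = c) hrr
    (by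
      rintro _ _ ⟨o, ho, hx, rfl⟩ ⟨o', ho', hx', rfl⟩
      rw [hmem] at ho ho'
      rw [K.uniq ho.2.2 ho'.2.2 hx hx' ho.2.1 ho'.2.1])
    (by
      rintro _ _ ⟨o, ho, hx, rfl⟩ ⟨o', ho', hx', rfl⟩
      rw [hmem] at ho ho'
      rw [K.symm.uniq ho.2.2 ho'.2.2 hx hx' ho.1 ho'.1])
    (Or.inl (by
      constructor
      all_goals
        rintro ⟨⟨o, ho, hx, h⟩, ⟨o', ho', hx', h'⟩⟩
        exact hcr o ho o' ho' hx hx' (h.trans h'.symm)))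
  have hab' : a ≠ b ∧ a ∈ C \ (A'.filter (y ∈ en ·)).image F ∧
      b ∈ C \ (A'.filter (y ∈ en ·)).image F := by
    rcases hab with ⟨rfl, rfl⟩ | ⟨rfl, rfl⟩
    · exact ⟨hrr, hr, hr'⟩
    · exact ⟨hrr.symm, hr', hr⟩
  obtain ⟨hne2, ha2, hb2⟩ := hab'
  simp only [Finset.mem_sdiff, Finset.mem_image, Finset.mem_filter, not_exists, not_and] at ha2 hb2
  let h : E → ℕ := fun e => if e = e₀ then a else if e = e₁ then b else F e
  have hh0 : h e₀ = a := by simp [h]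
  have hh1 : h e₁ = b := by simp [h, hne.symm]
  have hag : ∀ e ∈ A', h e = F e := by
    intro e he
    rw [hmem] at he
    simp [h, he.1, he.2.1]
  have hnot : ∀ e ∈ A, e ∉ A' → e = e₀ ∨ e = e₁ := by
    intro e he h; rw [hmem] at h; tauto
  refine ⟨h, pc_union (A' := A') (Fork.pc_en hF) hag ?_ ?_ ?_, hag⟩
  · intro e he he'
    rcases hnot e he he' with rfl | rfl
    · rw [hh0]; exact ha2.1
    · rw [hh1]; exact hb2.1
  · intro e he he' e' h1 h1' hee
    rcases hnot e he he' with rfl | rfl <;> rcases hnot e' h1 h1' with rfl | rfl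
    · exact absurd rfl hee
    · rw [hh0, hh1]; exact hne2
    · rw [hh0, hh1]; exact hne2.symm
    · exact absurd rfl hee
  · intro e he he' e' h1 v hv hv'
    rcases hnot e he he' with rfl | rfl
    · rw [hh0]
      rw [K.h0, Sym2.mem_iff] at hv
      rcases hv with rfl | rfl
      · exact fun h => ha ⟨e', h1, hv', h.symm⟩
      · exact fun h => ha2.2 e' ⟨h1, hv'⟩ h.symm
    · rw [hh1]
      rw [K.h1, Sym2.mem_iff] at hv
      rcases hv with rfl | rfl
      · exact fun h => hb ⟨e', h1, hv', h.symm⟩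
      · exact fun h => hb2.2 e' ⟨h1, hv'⟩ h.symm

/-- An edge joining a vertex of degree at most two to a vertex of degree less than `k` is in conflict
with fewer than `k` edges. -/
lemma conf_lt {e : E} {x y : X} {k : ℕ} (he : e ∈ A) (h : en e = s(x, y)) (hx : dg A en x ≤ 2)
    (hy : dg A en y < k) : (conf A en e).card < k := by
  have h2 : (conf A en e).card ≤ dg (A.erase e) en x + dg (A.erase e) en y := by
    refine (Finset.card_le_card ?_).trans (Finset.card_union_le _ _)
    intro a
    simp only [conf, Finset.mem_filter, Finset.mem_union, Finset.mem_erase, h, Sym2.mem_iff]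
    rintro ⟨h1, h2, v, rfl | rfl, h3⟩ <;> tauto
  have := dg_erase (en := en) (v := x) he (by simp [h])
  have := dg_erase (en := en) (v := y) he (by simp [h])
  omega

/-- Structure of 2-degenerate multigraphs: either some edge joins a vertex of degree at most two
to a vertex of degree less than `k`, or some vertex `y` of degree at least `k` has all but two of
its edges going to vertices of degree at most two. -/
lemma TwoDeg.struct [Finite X] (hT : TwoDeg A en) (hA : A.Nonempty) {k : ℕ} (hk : 3 ≤ k) :
    (∃ e ∈ A, ∃ x y, en e = s(x, y) ∧ dg A en x ≤ 2 ∧ dg A en y < k) ∨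
    (∃ y, k ≤ dg A en y ∧
      dg A en y ≤ (A.filter fun e => ∃ x, en e = s(x, y) ∧ dg A en x ≤ 2).card + 2) := by
  have := Fintype.ofFinite X
  by_cases hU : ((Finset.univ : Finset X).filter fun v => 3 ≤ dg A en v).Nonempty
  · obtain ⟨y, hy, h2⟩ := hT _ hU
    simp only [Finset.mem_filter, Finset.mem_univ, true_and] at hy h2
    have hy2 : dg A en y ≤ (A.filter fun e => ∃ x, en e = s(x, y) ∧ dg A en x ≤ 2).card + 2 := by
      refine le_trans (le_trans (Finset.card_le_card ?_) (Finset.card_union_le _ _))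
        (Nat.add_le_add_left h2 _)
      intro e he
      simp only [Finset.mem_filter, Finset.mem_union] at he ⊢
      by_cases k : ∀ v ∈ en e, 3 ≤ dg A en v
      · exact Or.inr ⟨he.1, he.2, k⟩
      · left
        push Not at k
        obtain ⟨x, hx, hx2⟩ := k
        refine ⟨he.1, x, ?_, by omega⟩
        refine ((Sym2.mem_and_mem_iff ?_).1 ⟨hx, he.2⟩)
        rintro rfl; omega
    by_cases hyk : k ≤ dg A en y
    · exact Or.inr ⟨y, hyk, by convert hy2⟩
    · left
      have : 0 < (A.filter fun e => ∃ x, en e = s(x, y) ∧ dg A en x ≤ 2).card := by omega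
      obtain ⟨e, he⟩ := Finset.card_pos.1 this
      simp only [Finset.mem_filter] at he
      obtain ⟨he, x, hx, hx2⟩ := he
      exact ⟨e, he, x, y, hx, hx2, by omega⟩
  · left
    obtain ⟨e, he⟩ := hA
    have h3 : ∀ v, dg A en v ≤ 2 := by
      intro v
      by_contra hv
      exact hU ⟨v, by simp; omega⟩
    induction hz : en e with
    | _ x y => exact ⟨e, he, x, y, hz, h3 x, by have := h3 y; omega⟩

/-- If no edge joins a vertex of degree at most two to one of degree less than `k`, then two edges
from vertices of degree at most two to a vertex of degree at least `k` form a fork. -/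
lemma exists_fork {y : X} {k : ℕ} (hk : 3 ≤ k) (hy : k ≤ dg A en y)
    (ha : ¬ ∃ e ∈ A, ∃ x y, en e = s(x, y) ∧ dg A en x ≤ 2 ∧ dg A en y < k)
    {e₀ e₁ : E} {x₀ x₁ : X} (hne : e₀ ≠ e₁) (m0 : e₀ ∈ A) (m1 : e₁ ∈ A)
    (h0 : en e₀ = s(x₀, y)) (h1 : en e₁ = s(x₁, y)) (d0 : dg A en x₀ ≤ 2)
    (d1 : dg A en x₁ ≤ 2) : Fork A en e₀ e₁ x₀ x₁ y := by
  refine ⟨m0, m1, hne, h0, h1, d0, d1, by omega, fun e he hx hx' => ?_⟩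
  by_contra hxx
  exact ha ⟨e, he, x₀, x₁, (Sym2.mem_and_mem_iff hxx).1 ⟨hx, hx'⟩, d0, by omega⟩

/-- A 2-degenerate multigraph with degrees at most `|C|`, where `|C| ≥ 4`, is `C`-colorable. -/
lemma TwoDeg.exists_pc [Finite X] (hC : 4 ≤ C.card) (hT : TwoDeg A en)
    (hd : ∀ v, dg A en v ≤ C.card) : ∃ f, PC A en C f := by
  induction hn : A.card using Nat.strong_induction_on generalizing A en with
  | _ n ih =>
  subst hn
  rcases A.eq_empty_or_nonempty with rfl | hA
  · exact ⟨fun _ => 0, by simp [PC]⟩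
  by_cases hα : ∃ e ∈ A, ∃ x y, en e = s(x, y) ∧ dg A en x ≤ 2 ∧ dg A en y < C.card
  · obtain ⟨e, he, x, y, h, hx, hy⟩ := hα
    refine pc_of_erase (conf_lt he h hx hy) ?_
    exact ih _ (Finset.card_erase_lt_of_mem he) (hT.mono (Finset.erase_subset _ _))
      (fun v => (dg_mono (Finset.erase_subset _ _) v).trans (hd v)) rfl
  · obtain h | ⟨y, hy, hy2⟩ := hT.struct hA (k := C.card) (by omega)
    · exact absurd h hα
    have : 1 < (A.filter fun e => ∃ x, en e = s(x, y) ∧ dg A en x ≤ 2).card := by omega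
    obtain ⟨e₀, h0, e₁, h1, hne⟩ := Finset.one_lt_card.1 this
    simp only [Finset.mem_filter] at h0 h1
    obtain ⟨m0, x₀, h0, d0⟩ := h0
    obtain ⟨m1, x₁, h1, d1⟩ := h1
    have K := exists_fork (by omega) hy hα hne m0 m1 h0 h1 d0 d1
    have hs : (A.erase e₀).erase e₁ ⊆ A :=
      (Finset.erase_subset _ _).trans (Finset.erase_subset _ _)
    obtain ⟨F, hF⟩ := ih _ (lt_of_le_of_lt (Finset.card_le_card (Finset.erase_subset _ _))
      (Finset.card_erase_lt_of_mem m0)) (K.twoDeg le_rfl hT) (fun v => by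
        by_cases hv : v = x₀
        · subst hv; exact (K.dg_x0 le_rfl).trans (by omega)
        · exact ((Fork.dg_le v hv).trans (dg_mono hs v)).trans (hd v)) rfl
    obtain ⟨h, hh, _⟩ := K.ext2 hF (hd y)
    exact ⟨h, hh⟩

/-- A 2-degenerate multigraph has a matching covering all vertices of degree at least four. -/
lemma TwoDeg.exists_matching [Finite X] (hT : TwoDeg A en) : ∃ M ⊆ A,
    (∀ a ∈ M, ∀ b ∈ M, a ≠ b → ∀ v, v ∈ en a → v ∉ en b) ∧
    ∀ v, 4 ≤ dg A en v → ∃ a ∈ M, v ∈ en a := by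
  induction hn : A.card using Nat.strong_induction_on generalizing A en with
  | _ n ih =>
  subst hn
  rcases A.eq_empty_or_nonempty with rfl | hA
  · exact ⟨∅, le_rfl, by simp, by simp [dg]⟩
  -- deleting an edge whose ends have degree different from four
  have del : ∀ e ∈ A, (∀ v ∈ en e, dg A en v ≠ 4) → ∃ M ⊆ A,
      (∀ a ∈ M, ∀ b ∈ M, a ≠ b → ∀ v, v ∈ en a → v ∉ en b) ∧
      ∀ v, 4 ≤ dg A en v → ∃ a ∈ M, v ∈ en a := by
    intro e he h4
    obtain ⟨M, hM, h1, h2⟩ := ih _ (Finset.card_erase_lt_of_mem he)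
      (hT.mono (Finset.erase_subset _ _)) rfl
    refine ⟨M, hM.trans (Finset.erase_subset _ _), h1, fun v hv => h2 v ?_⟩
    by_cases hve : v ∈ en e
    · have := dg_erase he hve
      have := h4 v hve
      omega
    · refine hv.trans (Finset.card_le_card fun a => ?_)
      simp only [Finset.mem_filter, Finset.mem_erase]
      rintro ⟨h1, h2⟩
      exact ⟨⟨fun h => hve (h ▸ h2), h1⟩, h2⟩
  by_cases hα : ∃ e ∈ A, ∃ x y, en e = s(x, y) ∧ dg A en x ≤ 2 ∧ dg A en y < 4
  · obtain ⟨e, he, x, y, h, hx, hy⟩ := hα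
    refine del e he fun v hv => ?_
    rw [h, Sym2.mem_iff] at hv
    rcases hv with rfl | rfl <;> omega
  obtain h | ⟨y, hy, hy2⟩ := hT.struct hA (k := 4) (by omega)
  · exact absurd h hα
  have : 1 < (A.filter fun e => ∃ x, en e = s(x, y) ∧ dg A en x ≤ 2).card := by omega
  obtain ⟨e₀, h0, e₁, h1, hne⟩ := Finset.one_lt_card.1 this
  simp only [Finset.mem_filter] at h0 h1
  obtain ⟨m0, x₀, h0, d0⟩ := h0
  obtain ⟨m1, x₁, h1, d1⟩ := h1
  by_cases hy4 : dg A en y = 4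
  swap
  · refine del e₀ m0 fun v hv => ?_
    rw [h0, Sym2.mem_iff] at hv
    rcases hv with rfl | rfl <;> omega
  -- `y` has degree exactly four: reduce the fork and take a matching of the merged multigraph. It
  -- uses at most one edge at `x₀` and `x₁` together, so one edge of the fork can be added to cover
  -- `y` if necessary.
  have K := exists_fork (by omega) hy hα hne m0 m1 h0 h1 d0 d1
  set A' := (A.erase e₀).erase e₁ with hA'
  have hmem : ∀ e, e ∈ A' ↔ e ≠ e₁ ∧ e ≠ e₀ ∧ e ∈ A := by intro e; simp [hA']
  obtain ⟨M, hM, hM1, hM2⟩ := ih _ (lt_of_le_of_lt (Finset.card_le_card (Finset.erase_subset _ _))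
      (Finset.card_erase_lt_of_mem m0)) (K.twoDeg le_rfl hT) rfl
  have hMA : M ⊆ A := fun a ha => ((hmem a).1 (hM ha)).2.2
  have hM1' : ∀ a ∈ M, ∀ b ∈ M, a ≠ b → ∀ v, v ∈ en a → v ∉ en b := by
    intro a ha b hb hab v hva hvb
    by_cases hv1 : v = x₁
    · subst hv1
      exact hM1 a ha b hb hab x₀ (mem_mrg.2 (Or.inr ⟨rfl, hva⟩)) (mem_mrg.2 (Or.inr ⟨rfl, hvb⟩))
    · exact hM1 a ha b hb hab v (mem_mrg.2 (Or.inl ⟨hva, hv1⟩)) (mem_mrg.2 (Or.inl ⟨hvb, hv1⟩))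
  have hcov : ∀ v, v ≠ y → 4 ≤ dg A en v → ∃ a ∈ M, v ∈ en a := by
    intro v hvy hv
    have hv0 : v ≠ x₀ := by rintro rfl; omega
    have hv1 : v ≠ x₁ := by rintro rfl; omega
    obtain ⟨a, ha, hva⟩ := hM2 v (hv.trans (Finset.card_le_card fun a => by
      simp only [Finset.mem_filter, mem_mrg, Finset.mem_erase]
      rintro ⟨h2, h3⟩
      refine ⟨⟨?_, ?_, h2⟩, Or.inl ⟨h3, hv1⟩⟩
      · rintro rfl; rw [h1, Sym2.mem_iff] at h3; tauto
      · rintro rfl; rw [h0, Sym2.mem_iff] at h3; tauto))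
    refine ⟨a, ha, ?_⟩
    rcases mem_mrg.1 hva with h | h
    · exact h.1
    · exact absurd h.1 hv0
  by_cases hyM : ∃ a ∈ M, y ∈ en a
  · refine ⟨M, hMA, hM1', fun v hv => ?_⟩
    by_cases hvy : v = y
    · exact hvy ▸ hyM
    · exact hcov v hvy hv
  have add : ∀ e ∈ A, ∀ x, en e = s(x, y) → (∀ a ∈ M, x ∉ en a) → ∃ M ⊆ A,
      (∀ a ∈ M, ∀ b ∈ M, a ≠ b → ∀ v, v ∈ en a → v ∉ en b) ∧
      ∀ v, 4 ≤ dg A en v → ∃ a ∈ M, v ∈ en a := by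
    intro e he x hx hxM
    have hnew : ∀ a ∈ M, ∀ v, v ∈ en e → v ∉ en a := by
      intro a ha v hv hva
      rw [hx, Sym2.mem_iff] at hv
      rcases hv with rfl | rfl
      · exact hxM a ha hva
      · exact hyM ⟨a, ha, hva⟩
    refine ⟨insert e M, Finset.insert_subset he hMA, ?_, fun v hv => ?_⟩
    · intro a ha b hb hab v hva hvb
      rcases Finset.mem_insert.1 ha with h1 | h1 <;> rcases Finset.mem_insert.1 hb with h2 | h2
      · exact hab (h1.trans h2.symm)
      · exact hnew b h2 v (h1 ▸ hva) hvb
      · exact hnew a h1 v (h2 ▸ hvb) hva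
      · exact hM1' a h1 b h2 hab v hva hvb
    · by_cases hvy : v = y
      · exact ⟨e, Finset.mem_insert_self _ _, by simp [hx, hvy]⟩
      · obtain ⟨a, ha, h⟩ := hcov v hvy hv
        exact ⟨a, Finset.mem_insert_of_mem ha, h⟩
  by_cases hx0 : ∀ a ∈ M, x₀ ∉ en a
  · exact add e₀ m0 x₀ h0 hx0
  · push Not at hx0
    obtain ⟨a, ha, hxa⟩ := hx0
    refine add e₁ m1 x₁ h1 fun b hb hxb => ?_
    have ha' := (hmem a).1 (hM ha)
    refine hM1 a ha b hb (K.o_ne ha'.2.2 (hMA hb) hxa hxb ha'.2.1 ha'.1) x₀ ?_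
      (mem_mrg.2 (Or.inr ⟨rfl, hxb⟩))
    exact mem_mrg.2 (Or.inl ⟨hxa, K.x_ne ha'.2.2 hxa ha'.2.1 ha'.1⟩)

end TwoDegenerate

/-! ### Colorings of 2-degenerate multigraphs are equivalent -/

section TwoDegLinked
variable {E X : Type*}
open Classical
variable {A A' : Finset E} {en en' : E → Sym2 X} {C : Finset ℕ} {f g h F : E → ℕ}

/-- Completing a coloring at three edges `a`, `b`, `c` of a common vertex `y`, with `a` receiving a
prescribed color `s₀`. -/
lemma assign3 {a b c : E} {xa xb xc y : X} {s₀ : ℕ} (hA' : A' = ((A.erase a).erase b).erase c)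
    (hab : a ≠ b) (hac : a ≠ c) (hbc : b ≠ c)
    (ma : a ∈ A) (mb : b ∈ A) (mc : c ∈ A)
    (ea : en a = s(xa, y)) (eb : en b = s(xb, y)) (ec : en c = s(xc, y))
    (hC : C.card = 5) (hy : dg A en y ≤ 5) (hF : PC A' en C F)
    (db : dg A en xb ≤ 2) (dc : dg A en xc ≤ 2)
    (hs : s₀ ∈ C) (hsy : ∀ o ∈ A', y ∈ en o → F o ≠ s₀) (hsx : ∀ o ∈ A', xa ∈ en o → F o ≠ s₀)
    (hbcF : ∀ o ∈ A', ∀ o' ∈ A', xb ∈ en o → xc ∈ en o' → F o = F o' → F o = s₀) :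
    ∃ h, PC A en C h ∧ (∀ e ∈ A', h e = F e) ∧ h a = s₀ ∧ h b ≠ s₀ ∧ h c ≠ s₀ := by
  have hmem : ∀ e, e ∈ A' ↔ e ≠ c ∧ e ≠ b ∧ e ≠ a ∧ e ∈ A := by intro e; simp [hA']
  have hdy : dg A' en y + 3 = dg A en y := by
    rw [← dg_erase ma (by simp [ea]), ← dg_erase (A := A.erase a) (e := b) (v := y)
      (by simp [mb, hab.symm]) (by simp [eb]), ← dg_erase (A := (A.erase a).erase b) (e := c) (v := y)
      (by simp [mc, hac.symm, hbc.symm]) (by simp [ec]), hA']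
  have h2 : 1 < ((C \ (A'.filter (y ∈ en ·)).image F).erase s₀).card := by
    have h1 := Finset.le_card_sdiff ((A'.filter (y ∈ en ·)).image F) C
    have h3 : ((A'.filter (y ∈ en ·)).image F).card ≤ dg A' en y := Finset.card_image_le
    have h4 := Finset.pred_card_le_card_erase (a := s₀)
      (s := C \ (A'.filter (y ∈ en ·)).image F)
    omega
  obtain ⟨r, hr, r', hr', hrr⟩ := Finset.one_lt_card.1 h2
  have un : ∀ {e : E} {x : X}, e ∈ A → e ∉ A' → en e = s(x, y) → dg A en x ≤ 2 → ∀ r r',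
      (∃ o ∈ A', x ∈ en o ∧ F o = r) → (∃ o ∈ A', x ∈ en o ∧ F o = r') → r = r' := by
    rintro e x he he' hex hd _ _ ⟨o, ho, hx, rfl⟩ ⟨o', ho', hx', rfl⟩
    rw [low_uniq he (by simp [hex]) hd ((hmem _).1 ho).2.2.2 ((hmem _).1 ho').2.2.2 hx hx'
      (fun h => he' (h ▸ ho)) (fun h => he' (h ▸ ho'))]
  obtain ⟨p, q, hpq, hp, hq⟩ := pick2 (p := fun r => ∃ o ∈ A', xb ∈ en o ∧ F o = r)
    (q := fun r => ∃ o ∈ A', xc ∈ en o ∧ F o = r) hrr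
    (un mb (by simp [hmem]) eb db) (un mc (by simp [hmem]) ec dc)
    (Or.inl (by
      constructor
      · rintro ⟨⟨o, ho, hx, h⟩, ⟨o', ho', hx', h'⟩⟩
        exact (Finset.mem_erase.1 hr).1 (h ▸ hbcF o ho o' ho' hx hx' (h.trans h'.symm))
      · rintro ⟨⟨o, ho, hx, h⟩, ⟨o', ho', hx', h'⟩⟩
        exact (Finset.mem_erase.1 hr').1 (h ▸ hbcF o ho o' ho' hx hx' (h.trans h'.symm))))
  have hpq' : p ≠ q ∧ p ∈ (C \ (A'.filter (y ∈ en ·)).image F).erase s₀ ∧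
      q ∈ (C \ (A'.filter (y ∈ en ·)).image F).erase s₀ := by
    rcases hpq with ⟨rfl, rfl⟩ | ⟨rfl, rfl⟩
    · exact ⟨hrr, hr, hr'⟩
    · exact ⟨hrr.symm, hr', hr⟩
  obtain ⟨hne2, hp2, hq2⟩ := hpq'
  simp only [Finset.mem_erase, Finset.mem_sdiff, Finset.mem_image, Finset.mem_filter, not_exists,
    not_and] at hp2 hq2
  let h : E → ℕ := fun e => if e = a then s₀ else if e = b then p else if e = c then q else F e
  have hha : h a = s₀ := by simp [h]
  have hhb : h b = p := by simp [h, hab.symm]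
  have hhc : h c = q := by simp [h, hac.symm, hbc.symm]
  have hag : ∀ e ∈ A', h e = F e := by
    intro e he
    rw [hmem] at he
    simp [h, he.1, he.2.1, he.2.2.1]
  have hnot : ∀ e ∈ A, e ∉ A' → e = a ∨ e = b ∨ e = c := by
    intro e he h; rw [hmem] at h; tauto
  refine ⟨h, pc_union (A' := A') hF hag ?_ ?_ ?_, hag, hha, hhb ▸ hp2.1, hhc ▸ hq2.1⟩
  · intro e he he'
    rcases hnot e he he' with rfl | rfl | rfl
    · rwa [hha]
    · rw [hhb]; exact hp2.2.1
    · rw [hhc]; exact hq2.2.1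
  · intro e he he' e' h1 h1' hee
    rcases hnot e he he' with rfl | rfl | rfl <;> rcases hnot e' h1 h1' with rfl | rfl | rfl <;>
      simp only [hha, hhb, hhc] <;> first | exact absurd rfl hee | skip
    · exact hp2.1.symm
    · exact hq2.1.symm
    · exact hp2.1
    · exact hne2
    · exact hq2.1
    · exact hne2.symm
  · intro e he he' e' h1 v hv hv'
    rcases hnot e he he' with rfl | rfl | rfl
    · rw [hha]
      rw [ea, Sym2.mem_iff] at hv
      rcases hv with rfl | rfl
      · exact (hsx e' h1 hv').symm
      · exact (hsy e' h1 hv').symm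
    · rw [hhb]
      rw [eb, Sym2.mem_iff] at hv
      rcases hv with rfl | rfl
      · exact fun h => hp ⟨e', h1, hv', h.symm⟩
      · exact fun h => hp2.2.2 e' ⟨h1, hv'⟩ h.symm
    · rw [hhc]
      rw [ec, Sym2.mem_iff] at hv
      rcases hv with rfl | rfl
      · exact fun h => hq ⟨e', h1, hv', h.symm⟩
      · exact fun h => hq2.2.2 e' ⟨h1, hv'⟩ h.symm

/-- Equivalences between colorings of `A ∖ M` give equivalences of colorings of `A` in which `M`
is the class of color `c`. -/
lemma class_lift {M : Finset E} {c : ℕ} (hc : c ∈ C)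
    (hM : ∀ e ∈ M, ∀ e' ∈ M, e ≠ e' → ∀ v, v ∈ en e → v ∉ en e')
    (h : Linked (A \ M) en (C.erase c)) (hf : PC A en C f) (hg : PC A en C g)
    (hfM : ∀ e ∈ A, f e = c ↔ e ∈ M) (hgM : ∀ e ∈ A, g e = c ↔ e ∈ M) : Eqv A en C f g := by
  let L : (E → ℕ) → E → ℕ := fun F e => if e ∈ M then c else F e
  have hL : ∀ F, PC (A \ M) en (C.erase c) F → PC A en C (L F) := by
    intro F hF
    have hne : ∀ e ∈ A, e ∉ M → F e ≠ c := fun e he hm =>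
      (Finset.mem_erase.1 (hF.1 e (Finset.mem_sdiff.2 ⟨he, hm⟩))).1
    constructor
    · intro e he
      by_cases hm : e ∈ M
      · simpa [L, hm] using hc
      · simpa [L, hm] using Finset.mem_of_mem_erase (hF.1 e (Finset.mem_sdiff.2 ⟨he, hm⟩))
    · intro e he e' he' hee v hv hv'
      by_cases hm : e ∈ M <;> by_cases hm' : e' ∈ M
      · exact absurd hv' (hM e hm e' hm' hee v hv)
      · simpa [L, hm, hm'] using (hne e' he' hm').symm
      · simpa [L, hm, hm'] using hne e he hm
      · simpa [L, hm, hm'] using hF.2 e (Finset.mem_sdiff.2 ⟨he, hm⟩) e'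
          (Finset.mem_sdiff.2 ⟨he', hm'⟩) hee v hv hv'
  have restr : ∀ F, PC A en C F → (∀ e ∈ A, F e = c ↔ e ∈ M) →
      PC (A \ M) en (C.erase c) F ∧ ∀ e ∈ A, F e = L F e := by
    intro F hF hm
    refine ⟨⟨fun e he => ?_, (hF.mono Finset.sdiff_subset).2⟩, fun e he => ?_⟩
    · rw [Finset.mem_sdiff] at he
      exact Finset.mem_erase.2 ⟨fun h => he.2 ((hm e he.1).1 h), hF.1 e he.1⟩
    · by_cases h : e ∈ M
      · simp [L, h, (hm e he).2 h]
      · simp [L, h]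
  obtain ⟨f1, f2⟩ := restr f hf hfM
  obtain ⟨g1, g2⟩ := restr g hg hgM
  refine (Step.of_agree hf f2).eqv.trans (Eqv.trans ?_ (Step.of_agree hg g2).eqv.symm)
  refine Relation.ReflTransGen.lift (p := Step A en C) L ?_ f g (h f g f1 g1)
  rintro F G ⟨hF, hG, S, _, hS4, hS⟩
  refine Step.mk' (hL F hF) (hL G hG) S hS4 fun e he => ?_
  by_cases hm : e ∈ M
  · simp [L, hm]
  · simpa [L, hm] using hS e (Finset.mem_sdiff.2 ⟨he, hm⟩)

/-- Colorings of 2-degenerate multigraphs with five colors are equivalent. -/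
lemma TwoDeg.linked_five [Finite X] (hC : C.card = 5) (hT : TwoDeg A en) : Linked A en C := by
  induction hn : A.card using Nat.strong_induction_on generalizing A en with
  | _ n ih =>
  subst hn
  by_cases hex : ∃ f, PC A en C f
  swap
  · exact fun f g hf => absurd ⟨f, hf⟩ hex
  obtain ⟨f₀, hf₀⟩ := hex
  have hd := fun v => dg_le_of_pc hf₀ v
  rcases A.eq_empty_or_nonempty with rfl | hA
  · exact fun f g hf _ => (Step.of_agree hf (by simp)).eqv
  by_cases hα : ∃ e ∈ A, ∃ x y, en e = s(x, y) ∧ dg A en x ≤ 2 ∧ dg A en y < 5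
  · obtain ⟨e, he, x, y, h, hx, hy⟩ := hα
    refine linked_of_erase (hC ▸ conf_lt he h hx hy) ?_
    exact ih _ (Finset.card_erase_lt_of_mem he) (hT.mono (Finset.erase_subset _ _)) rfl
  obtain h | ⟨y, hy, hy2⟩ := hT.struct hA (k := 5) (by omega)
  · exact absurd h hα
  have : 2 < (A.filter fun e => ∃ x, en e = s(x, y) ∧ dg A en x ≤ 2).card := by omega
  obtain ⟨e₀, h0, e₁, h1, e₂, h2, n01, n02, n12⟩ := Finset.two_lt_card.1 this
  simp only [Finset.mem_filter] at h0 h1 h2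
  obtain ⟨m0, x₀, h0, d0⟩ := h0
  obtain ⟨m1, x₁, h1, d1⟩ := h1
  obtain ⟨m2, x₂, h2, d2⟩ := h2
  have hdy := hC ▸ hd y
  have K := exists_fork (by omega) hy hα n01 m0 m1 h0 h1 d0 d1
  -- Now `y` has degree five and three neighbours of degree at most two. Reduce the fork `e₀`, `e₁`
  -- and also delete `e₂`; the claim is lifted from the reduced multigraph.
  set A' := ((A.erase e₀).erase e₁).erase e₂ with hA'
  have hmem : ∀ e, e ∈ A' ↔ e ≠ e₂ ∧ e ≠ e₁ ∧ e ≠ e₀ ∧ e ∈ A := by intro e; simp [hA']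
  have hnot : ∀ e ∈ A, e ∉ A' → e = e₀ ∨ e = e₁ ∨ e = e₂ := by
    intro e he h; rw [hmem] at h; tauto
  have hsub : A' ⊆ (A.erase e₀).erase e₁ := Finset.erase_subset _ _
  have hsub' : A' ⊆ A := fun e he => ((hmem e).1 he).2.2.2
  have hsy0 : y ∈ en e₀ := by simp [h0]
  have hsy1 : y ∈ en e₁ := by simp [h1]
  have hsy2 : y ∈ en e₂ := by simp [h2]
  have atx : ∀ {e : E} {x : X}, e ∈ A → e ∉ A' → x ∈ en e → dg A en x ≤ 2 → ∀ o ∈ A', ∀ o' ∈ A',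
      x ∈ en o → x ∈ en o' → o = o' := fun he he' hx hd o ho o' ho' hxo hxo' =>
    low_uniq he hx hd (hsub' ho) (hsub' ho') hxo hxo' (fun h => he' (h ▸ ho))
      (fun h => he' (h ▸ ho'))
  -- the extension with a prescribed color `s` on one of the edges
  have ext2 : ∀ F s, PC A' (mrg x₀ x₁ en) C F → s ∈ C → (∀ o ∈ A', y ∈ en o → F o ≠ s) →
      (∀ o ∈ A', x₂ ∈ en o → F o ≠ s) →
      ∃ h, PC A en C h ∧ (∀ e ∈ A', h e = F e) ∧ h e₂ = s ∧ h e₀ ≠ s ∧ h e₁ ≠ s := by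
    intro F s hF hs h3 h4
    refine assign3 (a := e₂) (b := e₀) (c := e₁) (by rw [hA']; ext; simp; tauto) n02.symm n12.symm
      n01 m2 m0 m1 h2 h0 h1 hC hdy (Fork.pc_en hF) d0 d1 hs h3 h4 ?_
    exact fun o ho o' ho' hx hx' h => absurd h (K.pc_cross hsub hF o ho o' ho' hx hx')
  have ext0 : ∀ F s, PC A' (mrg x₀ x₁ en) C F → s ∈ C → (∀ o ∈ A', y ∈ en o → F o ≠ s) →
      (∃ o ∈ A', x₂ ∈ en o ∧ F o = s) → (∀ o ∈ A', x₀ ∈ en o → F o ≠ s) →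
      ∃ h, PC A en C h ∧ (∀ e ∈ A', h e = F e) ∧ h e₀ = s ∧ h e₁ ≠ s ∧ h e₂ ≠ s := by
    rintro F s hF hs h3 ⟨p, hp, hp1, hp2⟩ h4
    refine assign3 (a := e₀) (b := e₁) (c := e₂) hA' n01 n02
      n12 m0 m1 m2 h0 h1 h2 hC hdy (Fork.pc_en hF) d1 d2 hs h3 h4 ?_
    intro o ho o' ho' hx hx' h
    rw [h, atx m2 (by simp [hmem]) (by simp [h2]) d2 o' ho' p hp hx' hp1, hp2]
  have ext1 : ∀ F s, PC A' (mrg x₀ x₁ en) C F → s ∈ C → (∀ o ∈ A', y ∈ en o → F o ≠ s) →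
      (∃ o ∈ A', x₂ ∈ en o ∧ F o = s) → (∃ o ∈ A', x₀ ∈ en o ∧ F o = s) →
      ∃ h, PC A en C h ∧ (∀ e ∈ A', h e = F e) ∧ h e₁ = s ∧ h e₀ ≠ s ∧ h e₂ ≠ s := by
    rintro F s hF hs h3 ⟨p, hp, hp1, hp2⟩ ⟨q, hq, hq1, hq2⟩
    refine assign3 (a := e₁) (b := e₀) (c := e₂) (by rw [hA']; ext; simp; tauto) n01.symm n12
      n02 m1 m0 m2 h1 h0 h2 hC hdy (Fork.pc_en hF) d0 d2 hs h3 ?_ ?_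
    · intro o ho hx h
      exact K.pc_cross hsub hF q hq o ho hq1 hx (hq2.trans h.symm)
    · intro o ho o' ho' hx hx' h
      rw [h, atx m2 (by simp [hmem]) (by simp [h2]) d2 o' ho' p hp hx' hp1, hp2]
  have hYn : (A'.filter (y ∈ en ·)).Nonempty := by
    rw [← Finset.card_pos]
    have h6 : dg A' en y + 3 = dg A en y := by
      rw [← dg_erase m0 hsy0, ← dg_erase (A := A.erase e₀) (e := e₁) (v := y)
        (by simp [m1, n01.symm]) hsy1, ← dg_erase (A := (A.erase e₀).erase e₁) (e := e₂) (v := y)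
        (by simp [m2, n02.symm, n12.symm]) hsy2]
    unfold dg at h6 hy
    omega
  have hyne : ∀ h, PC A en C h → ∀ o ∈ A', y ∈ en o → ∀ e ∈ A, e ∉ A' → h e ≠ h o := by
    intro h hh o ho hyo e he he'
    refine hh.2 e he o (hsub' ho) (fun h => he' (h ▸ ho)) y ?_ hyo
    rcases hnot e he he' with rfl | rfl | rfl <;> assumption
  refine lift (A' := A') (en' := mrg x₀ x₁ en) ?_ ?_ ?_
    (ih _ (Finset.card_lt_card (Finset.ssubset_iff_of_subset hsub' |>.2
      ⟨e₀, m0, by simp [hmem]⟩)) (K.twoDeg hsub hT) rfl)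
  -- Colorings agreeing on `A'` differ only on the three edges, none of which uses the color of a
  -- fourth edge at `y`.
  · intro h h' hh hh' _ hag
    obtain ⟨o, ho⟩ := hYn
    rw [Finset.mem_filter] at ho
    refine (Step.mk' hh hh' (C.erase (h o)) ?_ ?_).eqv
    · have := Finset.card_erase_of_mem (hh.1 o (hsub' ho.1))
      omega
    · intro e he
      by_cases he' : e ∈ A'
      · exact Or.inl (hag e he')
      · refine Or.inr ⟨Finset.mem_erase.2 ⟨hyne h hh o ho.1 ho.2 e he he', hh.1 e he⟩,
          Finset.mem_erase.2 ⟨?_, hh'.1 e he⟩⟩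
        rw [hag o ho.1]
        exact hyne h' hh' o ho.1 ho.2 e he he'
  -- A step between colorings `F`, `F'` of the reduced multigraph leaves some class `s` fixed. Both are
  -- extended so that `s` is used on none, or on the same one, of the three edges.
  · rintro F F' ⟨hF, hF', S, hSC, hS4, hS⟩
    obtain ⟨S4, hSS, hSC4, hcard⟩ := Finset.exists_subsuperset_card_eq hSC hS4 (by omega)
    have : (C \ S4).card = 1 := by
      rw [Finset.card_sdiff_of_subset hSC4]; omega
    obtain ⟨s, hs⟩ := Finset.card_eq_one.1 this
    have hs1 : s ∈ C ∧ s ∉ S4 := by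
      rw [← Finset.mem_sdiff, hs]; simp
    have hs2 : ∀ c ∈ C, c ≠ s → c ∈ S4 := by
      intro c hc hcs
      by_contra h
      have := Finset.mem_sdiff.2 ⟨hc, h⟩
      rw [hs] at this
      exact hcs (Finset.mem_singleton.1 this)
    have hsF : ∀ o ∈ A', F o = s ↔ F' o = s := by
      intro o ho
      rcases hS o ho with h | h
      · rw [h]
      · constructor
        · rintro rfl; exact absurd (hSS h.1) hs1.2
        · rintro rfl; exact absurd (hSS h.2) hs1.2
    have key : ∀ h h', PC A en C h → PC A en C h' → (∀ e ∈ A', h e = F e) →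
        (∀ e ∈ A', h' e = F' e) → (∀ e ∈ A, e ∉ A' → h e = h' e ∨ (h e ≠ s ∧ h' e ≠ s)) →
        Eqv A en C h h' := by
      intro h h' hh hh' hF hF' hx
      refine (Step.mk' hh hh' S4 hcard.le ?_).eqv
      intro e he
      by_cases he' : e ∈ A'
      · rw [hF e he', hF' e he']
        exact (hS e he').imp_right fun h => ⟨hSS h.1, hSS h.2⟩
      · exact (hx e he he').imp_right fun h => ⟨hs2 _ (hh.1 e he) h.1, hs2 _ (hh'.1 e he) h.2⟩
    by_cases hsy : ∃ o ∈ A', y ∈ en o ∧ F o = s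
    · obtain ⟨o, ho, hyo, hos⟩ := hsy
      -- any extensions will do; they avoid `s` on the three edges
      have anyext : ∀ F, PC A' (mrg x₀ x₁ en) C F →
          ∃ h, PC A en C h ∧ ∀ e ∈ A', h e = F e := by
        intro F hF
        have hdy' : dg A' en y ≤ 2 := by
          have h6 : dg A' en y + 3 = dg A en y := by
            rw [← dg_erase m0 hsy0, ← dg_erase (A := A.erase e₀) (e := e₁) (v := y)
              (by simp [m1, n01.symm]) hsy1, ← dg_erase (A := (A.erase e₀).erase e₁) (e := e₂)
              (v := y) (by simp [m2, n02.symm, n12.symm]) hsy2]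
          omega
        have : ((A'.filter (y ∈ en ·)).image F).card < C.card :=
          lt_of_le_of_lt (Finset.card_image_le.trans hdy') (by omega)
        obtain ⟨r, hr, hr'⟩ := Finset.exists_mem_notMem_of_card_lt_card this
        have hr2 : ∀ o ∈ A', y ∈ en o → F o ≠ r := fun o ho hyo h =>
          hr' (Finset.mem_image.2 ⟨o, Finset.mem_filter.2 ⟨ho, hyo⟩, h⟩)
        by_cases k2 : ∃ o ∈ A', x₂ ∈ en o ∧ F o = r
        · by_cases k0 : ∃ o ∈ A', x₀ ∈ en o ∧ F o = r
          · obtain ⟨h, a, b, _⟩ := ext1 F r hF hr hr2 k2 k0; exact ⟨h, a, b⟩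
          · push Not at k0
            obtain ⟨h, a, b, _⟩ := ext0 F r hF hr hr2 k2 k0; exact ⟨h, a, b⟩
        · push Not at k2
          obtain ⟨h, a, b, _⟩ := ext2 F r hF hr hr2 k2; exact ⟨h, a, b⟩
      obtain ⟨h, hh, hh1⟩ := anyext F hF
      obtain ⟨h', hh', hh1'⟩ := anyext F' hF'
      refine ⟨h, h', hh, hh', hh1, hh1', key h h' hh hh' hh1 hh1' fun e he he' => Or.inr ⟨?_, ?_⟩⟩
      · rw [← hos, ← hh1 o ho]; exact hyne h hh o ho hyo e he he'
      · rw [← (hsF o ho).1 hos, ← hh1' o ho]; exact hyne h' hh' o ho hyo e he he'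
    · have hsy1 : ∀ o ∈ A', y ∈ en o → F o ≠ s := fun o ho h h' => hsy ⟨o, ho, h, h'⟩
      have hsy2 : ∀ o ∈ A', y ∈ en o → F' o ≠ s := fun o ho h h' => hsy1 o ho h ((hsF o ho).2 h')
      have tr : ∀ x, (∃ o ∈ A', x ∈ en o ∧ F o = s) → ∃ o ∈ A', x ∈ en o ∧ F' o = s :=
        fun x ⟨o, ho, hx, h⟩ => ⟨o, ho, hx, (hsF o ho).1 h⟩
      have tr' : ∀ x, (∀ o ∈ A', x ∈ en o → F o ≠ s) → ∀ o ∈ A', x ∈ en o → F' o ≠ s :=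
        fun x k o ho hx h => k o ho hx ((hsF o ho).2 h)
      by_cases k2 : ∃ o ∈ A', x₂ ∈ en o ∧ F o = s
      · by_cases k0 : ∃ o ∈ A', x₀ ∈ en o ∧ F o = s
        · obtain ⟨h, a, b, c1, c2, c3⟩ := ext1 F s hF hs1.1 hsy1 k2 k0
          obtain ⟨h', a', b', c1', c2', c3'⟩ := ext1 F' s hF' hs1.1 hsy2 (tr _ k2) (tr _ k0)
          refine ⟨h, h', a, a', b, b', key h h' a a' b b' fun e he he' => ?_⟩
          rcases hnot e he he' with rfl | rfl | rfl
          exacts [Or.inr ⟨c2, c2'⟩, Or.inl (c1.trans c1'.symm), Or.inr ⟨c3, c3'⟩]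
        · push Not at k0
          obtain ⟨h, a, b, c1, c2, c3⟩ := ext0 F s hF hs1.1 hsy1 k2 k0
          obtain ⟨h', a', b', c1', c2', c3'⟩ := ext0 F' s hF' hs1.1 hsy2 (tr _ k2) (tr' _ k0)
          refine ⟨h, h', a, a', b, b', key h h' a a' b b' fun e he he' => ?_⟩
          rcases hnot e he he' with rfl | rfl | rfl
          exacts [Or.inl (c1.trans c1'.symm), Or.inr ⟨c2, c2'⟩, Or.inr ⟨c3, c3'⟩]
      · push Not at k2
        obtain ⟨h, a, b, c1, c2, c3⟩ := ext2 F s hF hs1.1 hsy1 k2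
        obtain ⟨h', a', b', c1', c2', c3'⟩ := ext2 F' s hF' hs1.1 hsy2 (tr' _ k2)
        refine ⟨h, h', a, a', b, b', key h h' a a' b b' fun e he he' => ?_⟩
        rcases hnot e he he' with rfl | rfl | rfl
        exacts [Or.inr ⟨c2, c2'⟩, Or.inr ⟨c3, c3'⟩, Or.inl (c1.trans c1'.symm)]
  · -- separating the colors of the other edges at `x₀` and `x₁`
    intro f hf
    by_cases hc : ∀ o ∈ A', ∀ o' ∈ A', x₀ ∈ en o → x₁ ∈ en o' → f o ≠ f o'
    · exact ⟨f, Relation.ReflTransGen.refl, K.pc_mrg (hf.mono hsub') hc⟩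
    push Not at hc
    obtain ⟨o, ho, o', ho', hx, hx', hoo⟩ := hc
    -- Keep the class of a color `r` unused on `o`, `o'`, `e₀`, `e₁`, and recolor the other edges with
    -- the four remaining colors by extending a coloring of the reduced multigraph.
    have : ({f o, f e₀, f e₁} : Finset ℕ).card < C.card :=
      lt_of_le_of_lt Finset.card_le_three (by omega)
    obtain ⟨r, hr, hr'⟩ := Finset.exists_mem_notMem_of_card_lt_card this
    simp only [Finset.mem_insert, Finset.mem_singleton, not_or] at hr'
    have hCr : (C.erase r).card = 4 := by rw [Finset.card_erase_of_mem hr]; omega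
    let B := A.filter fun e => f e ≠ r
    have hBA : B ⊆ A := Finset.filter_subset _ _
    have hfB : PC B en (C.erase r) f :=
      ⟨fun e he => Finset.mem_erase.2 ⟨(Finset.mem_filter.1 he).2, hf.1 e (hBA he)⟩,
        (hf.mono hBA).2⟩
    by_cases hdB : 3 ≤ dg B en y
    swap
    · exfalso
      -- at most one edge of the class `r` is at `y`
      have h7 : dg A en y ≤ dg B en y + 1 := by
        have : A.filter (y ∈ en ·) ⊆ B.filter (y ∈ en ·) ∪
            A.filter (fun e => y ∈ en e ∧ f e = r) := by
          intro e; simp only [B, Finset.mem_filter, Finset.mem_union]; tauto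
        refine (Finset.card_le_card this).trans ((Finset.card_union_le _ _).trans
          (Nat.add_le_add_left ?_ _))
        rw [Finset.card_le_one]
        intro a ha b hb
        simp only [Finset.mem_filter] at ha hb
        by_contra hab
        exact hf.2 a ha.1 b hb.1 hab y ha.2.1 hb.2.1 (ha.2.2.trans hb.2.2.symm)
      omega
    have KB : Fork B en e₀ e₁ x₀ x₁ y :=
      ⟨Finset.mem_filter.2 ⟨m0, Ne.symm hr'.2.1⟩, Finset.mem_filter.2 ⟨m1, Ne.symm hr'.2.2⟩, n01,
        h0, h1, (dg_mono hBA _).trans d0, (dg_mono hBA _).trans d1, hdB,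
        fun e he => K.nadj e (hBA he)⟩
    have hBdg : ∀ v, dg B en v ≤ (C.erase r).card := fun v => dg_le_of_pc hfB v
    obtain ⟨F, hF⟩ := TwoDeg.exists_pc (C := C.erase r) hCr.ge
      (KB.twoDeg le_rfl (hT.mono hBA)) (fun v => by
        by_cases hv : v = x₀
        · subst hv; exact (KB.dg_x0 le_rfl).trans (by omega)
        · exact ((Fork.dg_le v hv).trans (dg_mono ((Finset.erase_subset _ _).trans
            (Finset.erase_subset _ _)) v)).trans (hBdg v))
    obtain ⟨h, hh, hag⟩ := KB.ext2 hF (hBdg y)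
    let f' : E → ℕ := fun e => if f e = r then r else h e
    have hB : ∀ e ∈ A, f e ≠ r → e ∈ B := fun e he h => Finset.mem_filter.2 ⟨he, h⟩
    have hh1 : ∀ e ∈ A, f e ≠ r → h e ∈ C ∧ h e ≠ r := fun e he hr =>
      (Finset.mem_erase.1 (hh.1 e (hB e he hr))).symm
    have hf' : PC A en C f' := by
      constructor
      · intro e he
        by_cases k : f e = r
        · simpa [f', k] using hr
        · simpa [f', k] using (hh1 e he k).1
      · intro a ha b hb hab v hva hvb
        by_cases k : f a = r <;> by_cases k' : f b = r
        · exact absurd (k.trans k'.symm) (hf.2 a ha b hb hab v hva hvb)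
        · simpa [f', k, k'] using (hh1 b hb k').2.symm
        · simpa [f', k, k'] using (hh1 a ha k).2
        · simpa [f', k, k'] using hh.2 a (hB a ha k) b (hB b hb k') hab v hva hvb
    refine ⟨f', (Step.mk' hf hf' (C.erase r) hCr.le fun e he => ?_).eqv, ?_⟩
    · by_cases k : f e = r
      · simp [f', k]
      · right
        simpa [f', k, hf.1 e he] using (hh1 e he k).symm
    · refine K.pc_mrg (hf'.mono hsub') fun p hp p' hp' hxp hxp' => ?_
      rw [atx m0 (by simp [hmem]) (by simp [h0]) d0 p hp o ho hxp hx,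
        atx m1 (by simp [hmem]) (by simp [h1]) d1 p' hp' o' ho' hxp' hx']
      have k : f o ≠ r := Ne.symm hr'.1
      have k' : f o' ≠ r := hoo ▸ k
      simp only [f', k, k', if_false]
      have hoB : o ∈ (B.erase e₀).erase e₁ := by
        have := (hmem o).1 ho
        simp [B, this, k]
      have hoB' : o' ∈ (B.erase e₀).erase e₁ := by
        have := (hmem o').1 ho'
        simp [B, this, k']
      rw [hag o hoB, hag o' hoB']
      exact KB.pc_cross le_rfl hF o hoB o' hoB' hx hx'

/-- Colorings of 2-degenerate multigraphs are equivalent, for any number of colors. -/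
lemma TwoDeg.linked [Finite X] (hT : TwoDeg A en) : Linked A en C := by
  induction hn : C.card using Nat.strong_induction_on generalizing A C with
  | _ n ih =>
  subst hn
  rcases le_or_gt C.card 4 with h4 | h4
  · exact linked_of_card_le h4
  rcases (show 5 ≤ C.card from h4).eq_or_lt with h5 | h6
  · exact hT.linked_five h5.symm
  intro f g hf hg
  obtain ⟨c₀, hc₀, c₁, hc₁, hcc⟩ := Finset.one_lt_card.1 (show 1 < C.card by omega)
  have hCe : (C.erase c₀).card < C.card := Finset.card_erase_lt_of_mem hc₀
  -- A matching `Q` covering the vertices of degree at least four outside the two classes of `c₀` can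
  -- be made the class of `c₀` from both sides; then `Q` is removed together with `c₀`.
  let M := A.filter fun e => f e = c₀
  let N := A.filter fun e => g e = c₀
  obtain ⟨Q, hQ, hQ1, hQ2⟩ := TwoDeg.exists_matching (A := A \ (M ∪ N))
    (hT.mono Finset.sdiff_subset)
  have hQA : Q ⊆ A := hQ.trans Finset.sdiff_subset
  -- from `f` move to a coloring in which `Q` is the class of `c₀`
  have main : ∀ f g, PC A en C f → PC A en C g →
      Q ⊆ A \ (A.filter (fun e => f e = c₀)) →
      (∀ v, 4 ≤ dg (A \ (A.filter (fun e => f e = c₀) ∪ A.filter fun e => g e = c₀)) en v →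
        ∃ a ∈ Q, v ∈ en a) →
      ∃ k, Eqv A en C f k ∧ ∀ e ∈ A, k e = c₀ ↔ e ∈ Q := by
    intro f g hf hg hQf hQ2
    let M := A.filter fun e => f e = c₀
    have hM : ∀ e ∈ M, ∀ e' ∈ M, e ≠ e' → ∀ v, v ∈ en e → v ∉ en e' := by
      intro e he e' he' hne v hv hv'
      simp only [M, Finset.mem_filter] at he he'
      exact hf.2 e he.1 e' he'.1 hne v hv hv' (he.2.trans he'.2.symm)
    have hQM : ∀ e ∈ Q, e ∉ M := fun e he => (Finset.mem_sdiff.1 (hQf he)).2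
    have hrest : PC (A \ M) en (C.erase c₀) f := by
      refine ⟨fun e he => ?_, (hf.mono Finset.sdiff_subset).2⟩
      simp only [M, Finset.mem_sdiff, Finset.mem_filter, not_and] at he
      exact Finset.mem_erase.2 ⟨he.2 he.1, hf.1 e he.1⟩
    have hC2 : ((C.erase c₀).erase c₁).card + 2 = C.card := by
      rw [Finset.card_erase_of_mem (Finset.mem_erase.2 ⟨hcc.symm, hc₁⟩),
        Finset.card_erase_of_mem hc₀]
      omega
    -- outside `M ∪ Q` all degrees are at most `|C| - 2`, so two colors can be saved for `M` and `Q`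
    obtain ⟨h, hh⟩ := TwoDeg.exists_pc (A := (A \ M) \ Q) (C := (C.erase c₀).erase c₁)
      (by omega) (hT.mono (Finset.sdiff_subset.trans Finset.sdiff_subset)) (fun v => by
        by_cases hv : ∃ a ∈ Q, v ∈ en a
        · obtain ⟨a, ha, hva⟩ := hv
          have haA : a ∈ A \ M := Finset.mem_sdiff.2 ⟨hQA ha, hQM a ha⟩
          have h1 := dg_erase haA hva
          have h2 := dg_le_of_pc hrest v
          have h3 : dg ((A \ M) \ Q) en v ≤ dg ((A \ M).erase a) en v := dg_mono (by
            intro e he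
            rw [Finset.mem_sdiff] at he
            exact Finset.mem_erase.2 ⟨fun h => he.2 (h ▸ ha), he.1⟩) v
          rw [Finset.card_erase_of_mem hc₀] at h2
          omega
        · have h1 : ¬ 4 ≤ dg (A \ (M ∪ A.filter fun e => g e = c₀)) en v := fun h => hv (hQ2 v h)
          have h2 : dg ((A \ M) \ Q) en v ≤
              dg (A \ (M ∪ A.filter fun e => g e = c₀)) en v + 1 := by
            have : ((A \ M) \ Q).filter (v ∈ en ·) ⊆
                (A \ (M ∪ A.filter fun e => g e = c₀)).filter (v ∈ en ·) ∪
                A.filter (fun e => v ∈ en e ∧ g e = c₀) := by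
              intro e
              simp only [Finset.mem_filter, Finset.mem_union, Finset.mem_sdiff]
              tauto
            refine (Finset.card_le_card this).trans ((Finset.card_union_le _ _).trans
              (Nat.add_le_add_left ?_ _))
            rw [Finset.card_le_one]
            intro a ha b hb
            simp only [Finset.mem_filter] at ha hb
            by_contra hab
            exact hg.2 a ha.1 b hb.1 hab v ha.2.1 hb.2.1 (ha.2.2.trans hb.2.2.symm)
          omega)
    have hhC : ∀ e ∈ A, e ∉ M → e ∉ Q → h e ∈ C ∧ h e ≠ c₀ ∧ h e ≠ c₁ := by
      intro e he hm hq
      have := hh.1 e (Finset.mem_sdiff.2 ⟨Finset.mem_sdiff.2 ⟨he, hm⟩, hq⟩)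
      simp only [Finset.mem_erase] at this
      tauto
    -- both orders of the two colors on `M` and `Q`
    have col : ∀ a b, a ∈ C → b ∈ C → a ≠ b → (∀ e ∈ A, e ∉ M → e ∉ Q → h e ≠ a ∧ h e ≠ b) →
        PC A en C fun e => if e ∈ M then a else if e ∈ Q then b else h e := by
      intro a b ha hb hab hne
      constructor
      · intro e he
        by_cases hm : e ∈ M
        · simpa [hm] using ha
        · by_cases hq : e ∈ Q
          · simpa [hm, hq] using hb
          · simpa [hm, hq] using (hhC e he hm hq).1
      · intro e he e' he' hee v hv hv'
        by_cases hm : e ∈ M <;> by_cases hm' : e' ∈ M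
        · exact absurd hv' (hM e hm e' hm' hee v hv)
        · by_cases hq' : e' ∈ Q
          · simpa [hm, hm', hq'] using hab
          · simpa [hm, hm', hq'] using (hne e' he' hm' hq').1.symm
        · by_cases hq : e ∈ Q
          · simpa [hm, hm', hq] using hab.symm
          · simpa [hm, hm', hq] using (hne e he hm hq).1
        · by_cases hq : e ∈ Q <;> by_cases hq' : e' ∈ Q
          · exact absurd hv' (hQ1 e hq e' hq' hee v hv)
          · simpa [hm, hm', hq, hq'] using (hne e' he' hm' hq').2.symm
          · simpa [hm, hm', hq, hq'] using (hne e he hm hq).2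
          · simpa [hm, hm', hq, hq'] using hh.2 e
              (Finset.mem_sdiff.2 ⟨Finset.mem_sdiff.2 ⟨he, hm⟩, hq⟩) e'
              (Finset.mem_sdiff.2 ⟨Finset.mem_sdiff.2 ⟨he', hm'⟩, hq'⟩) hee v hv hv'
    have k1 := col c₀ c₁ hc₀ hc₁ hcc fun e he hm hq => (hhC e he hm hq).2
    have k2 := col c₁ c₀ hc₁ hc₀ hcc.symm fun e he hm hq => (hhC e he hm hq).2.symm
    refine ⟨_, Eqv.trans (class_lift hc₀ hM (ih _ hCe (hT.mono Finset.sdiff_subset) rfl) hf k1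
      (fun e he => by simp [M, he]) (fun e he => ?_)) (Step.mk' k1 k2 {c₀, c₁}
        (Finset.card_le_two.trans (by norm_num)) fun e he => ?_).eqv, fun e he => ?_⟩
    · by_cases hm : e ∈ M
      · simp [hm]
      · by_cases hq : e ∈ Q
        · simp [hm, hq, hcc.symm]
        · simp [hm, hq, (hhC e he hm hq).2.1]
    · by_cases hm : e ∈ M
      · simp [hm]
      · by_cases hq : e ∈ Q
        · simp [hm, hq]
        · simp [hm, hq]
    · by_cases hm : e ∈ M
      · simp [hm, hcc.symm]; exact fun hq => hQM e hq hm
      · by_cases hq : e ∈ Q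
        · simp [hm, hq]
        · simp [hm, hq, (hhC e he hm hq).2.1]
  obtain ⟨k, hk, hkQ⟩ := main f g hf hg
    (hQ.trans (Finset.sdiff_subset_sdiff le_rfl Finset.subset_union_left)) hQ2
  obtain ⟨l, hl, hlQ⟩ := main g f hg hf
    (hQ.trans (Finset.sdiff_subset_sdiff le_rfl Finset.subset_union_right))
    (by rw [Finset.union_comm]; exact hQ2)
  exact hk.trans ((class_lift hc₀ hQ1 (ih _ hCe (hT.mono Finset.sdiff_subset) rfl)
    (hk.pc hf) (hl.pc hg) hkQ hlQ).trans hl.symm)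

end TwoDegLinked

/-! ### Recoloring by permutations -/

section Bipartite
open Classical Equiv

/-- The permutation matrix of `σ`, with natural number entries. -/
noncomputable def pm (σ : Perm V) (u v : V) : ℕ := if σ u = v then 1 else 0

lemma pm_row [Fintype V] (σ : Perm V) (u : V) : ∑ v, pm σ u v = 1 := by
  simp [pm]

lemma pm_col [Fintype V] (σ : Perm V) (v : V) : ∑ u, pm σ u v = 1 := by
  have : ∀ u, (σ u = v) ↔ (u = σ.symm v) := fun u => by rw [Equiv.eq_symm_apply]
  simp [pm, this]

/-- Hall's theorem for nonnegative integer matrices. -/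
lemma exists_perm_le [Fintype V] (D : V → V → ℕ) (k : ℕ) (hr : ∀ u, k ≤ ∑ v, D u v)
    (hc : ∀ N : Finset V, ∑ v ∈ N, ∑ u, D u v < k * (N.card + 1)) :
    ∃ σ : Perm V, ∀ u v, pm σ u v ≤ D u v := by
  obtain ⟨f, hf, hf2⟩ := (Finset.all_card_le_biUnion_card_iff_exists_injective
    (fun u : V => Finset.univ.filter fun v => D u v ≠ 0)).1 (by
      intro S
      set N := S.biUnion fun u : V => Finset.univ.filter fun v => D u v ≠ 0 with hN
      have h1 : k * S.card ≤ ∑ v ∈ N, ∑ u, D u v := by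
        calc k * S.card = ∑ u ∈ S, k := by simp [mul_comm]
          _ ≤ ∑ u ∈ S, ∑ v, D u v := Finset.sum_le_sum fun u _ => hr u
          _ = ∑ u ∈ S, ∑ v ∈ N, D u v := by
            refine Finset.sum_congr rfl fun u hu => ?_
            refine (Finset.sum_subset (Finset.subset_univ _) fun v _ hv => ?_).symm
            by_contra h
            exact hv (Finset.mem_biUnion.2 ⟨u, hu, by simpa using h⟩)
          _ = ∑ v ∈ N, ∑ u ∈ S, D u v := Finset.sum_comm
          _ ≤ _ := Finset.sum_le_sum fun v _ =>
            Finset.sum_le_sum_of_subset (Finset.subset_univ _)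
      have h2 := lt_of_le_of_lt h1 (hc N)
      have := Nat.lt_of_mul_lt_mul_left h2
      omega)
  have hb : Function.Bijective f := Finite.injective_iff_bijective.1 hf
  refine ⟨Equiv.ofBijective f hb, fun u v => ?_⟩
  have := hf2 u
  simp only [Finset.mem_filter, Finset.mem_univ, true_and] at this
  unfold pm
  split_ifs with h
  · simp only [Equiv.ofBijective_apply] at h
    subst h; omega
  · omega

/-- A 2-regular nonnegative integer matrix is a sum of two permutation matrices. -/
lemma exists_perm_add [Fintype V] (D : V → V → ℕ) (hr : ∀ u, ∑ v, D u v = 2)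
    (hc : ∀ v, ∑ u, D u v = 2) : ∃ σ τ : Perm V, ∀ u v, D u v = pm σ u v + pm τ u v := by
  obtain ⟨σ, hσ⟩ := exists_perm_le D 2 (fun u => (hr u).ge) (fun N => by simp [hc]; omega)
  let D' : V → V → ℕ := fun u v => D u v - pm σ u v
  have hD : ∀ u v, D' u v + pm σ u v = D u v := fun u v => Nat.sub_add_cancel (hσ u v)
  have hr' : ∀ u, ∑ v, D' u v = 1 := by
    intro u
    have : ∑ v, (D' u v + pm σ u v) = 2 := by simp only [hD, hr]
    rw [Finset.sum_add_distrib, pm_row] at this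
    omega
  have hc' : ∀ v, ∑ u, D' u v = 1 := by
    intro v
    have : ∑ u, (D' u v + pm σ u v) = 2 := by simp only [hD, hc]
    rw [Finset.sum_add_distrib, pm_col] at this
    omega
  obtain ⟨τ, hτ⟩ := exists_perm_le D' 1 (fun u => (hr' u).ge) (fun N => by simp [hc'])
  refine ⟨σ, τ, fun u v => ?_⟩
  have h0 : ∑ v, (D' u v - pm τ u v) = 0 := by
    have : ∑ v, ((D' u v - pm τ u v) + pm τ u v) = 1 := by
      simp only [Nat.sub_add_cancel (hτ _ _), hr']
    rw [Finset.sum_add_distrib, pm_row] at this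
    omega
  have h1 := (Finset.sum_eq_zero_iff.1 h0) v (Finset.mem_univ _)
  have := hτ u v
  have := hD u v
  omega

variable {C : Finset ℕ}

/-- The number of colors in `C` whose permutation sends `u` to `v`. -/
noncomputable def cnt (C : Finset ℕ) (p : ℕ → Perm V) (u v : V) : ℕ := ∑ c ∈ C, pm (p c) u v

/-- Two families of permutations with the same counts, differing in at most three places. -/
def PStep (C : Finset ℕ) (p p' : ℕ → Perm V) : Prop :=
  (∀ u v, cnt C p u v = cnt C p' u v) ∧
    ∃ S : Finset ℕ, S.card ≤ 3 ∧ ∀ c ∈ C, c ∉ S → p c = p' c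

lemma PStep.chain_cnt {p p' : ℕ → Perm V} (h : Relation.ReflTransGen (PStep C) p p') (u v : V) :
    cnt C p u v = cnt C p' u v := by
  induction h with
  | refl => rfl
  | tail _ h ih => exact ih.trans (h.1 u v)

lemma cnt_pos {p : ℕ → Perm V} {u v : V} : 0 < cnt C p u v ↔ ∃ c ∈ C, p c u = v := by
  rw [Nat.pos_iff_ne_zero, Ne, cnt, Finset.sum_eq_zero_iff]
  simp [pm]

/-- Replacing the permutations of three colors. -/
lemma pstep_three {p : ℕ → Perm V} {a b t : ℕ} (ha : a ∈ C) (hb : b ∈ C) (ht : t ∈ C)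
    (hab : a ≠ b) (hat : a ≠ t) (hbt : b ≠ t) (α β τ : Perm V)
    (h : ∀ u v, pm (p a) u v + pm (p b) u v + pm (p t) u v = pm α u v + pm β u v + pm τ u v) :
    PStep C p fun c => if c = a then α else if c = b then β else if c = t then τ else p c := by
  constructor
  · intro u v
    have key : ∀ g : ℕ → ℕ, ∑ c ∈ C, g c = g a + g b + g t + ∑ c ∈ C \ {a, b, t}, g c := by
      intro g
      have hs : ({a, b, t} : Finset ℕ) ⊆ C := by
        intro x; simp only [Finset.mem_insert, Finset.mem_singleton]
        rintro (rfl | rfl | rfl) <;> assumption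
      rw [← Finset.sum_sdiff hs, add_comm]
      congr 1
      rw [Finset.sum_insert (by simp [hab, hat]), Finset.sum_pair hbt, add_assoc]
    unfold cnt
    rw [key, key (fun c => pm _ u v)]
    simp only [if_true, if_neg hab.symm, if_neg hat.symm, if_neg hbt.symm]
    rw [h]
    congr 1
    refine Finset.sum_congr rfl fun c hc => ?_
    simp only [Finset.mem_sdiff, Finset.mem_insert, Finset.mem_singleton, not_or] at hc
    simp [hc.2.1, hc.2.2.1, hc.2.2.2]
  · refine ⟨{a, b, t}, Finset.card_le_three, fun c _ hc => ?_⟩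
    simp only [Finset.mem_insert, Finset.mem_singleton, not_or] at hc
    simp [hc.1, hc.2.1, hc.2.2]

/-- Replacing the permutations of two colors. -/
lemma pstep_two {p : ℕ → Perm V} {a t : ℕ} (ha : a ∈ C) (ht : t ∈ C)
    (hat : a ≠ t) (α τ : Perm V)
    (h : ∀ u v, pm (p a) u v + pm (p t) u v = pm α u v + pm τ u v) :
    PStep C p fun c => if c = a then α else if c = t then τ else p c := by
  constructor
  · intro u v
    have key : ∀ g : ℕ → ℕ, ∑ c ∈ C, g c = g a + g t + ∑ c ∈ C \ {a, t}, g c := by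
      intro g
      have hs : ({a, t} : Finset ℕ) ⊆ C := by
        intro x; simp only [Finset.mem_insert, Finset.mem_singleton]
        rintro (rfl | rfl) <;> assumption
      rw [← Finset.sum_sdiff hs, add_comm]
      congr 1
      rw [Finset.sum_pair hat]
    unfold cnt
    rw [key, key (fun c => pm _ u v)]
    simp only [if_true, if_neg hat.symm]
    rw [h]
    congr 1
    refine Finset.sum_congr rfl fun c hc => ?_
    simp only [Finset.mem_sdiff, Finset.mem_insert, Finset.mem_singleton, not_or] at hc
    simp [hc.2.1, hc.2.2]
  · refine ⟨{a, t}, Finset.card_le_two.trans (by norm_num), fun c _ hc => ?_⟩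
    simp only [Finset.mem_insert, Finset.mem_singleton, not_or] at hc
    simp [hc.1, hc.2]

/-- If every row of `m` agrees with the row of `α` or of `β`, then removing `m` from the sum of the
permutation matrices of `α` and `β` leaves a permutation matrix. -/
lemma split_two [Fintype V] {α β m : Perm V} (h : ∀ u, m u = α u ∨ m u = β u) :
    ∃ γ : Perm V, ∀ u v, pm α u v + pm β u v = pm γ u v + pm m u v := by
  have hle : ∀ u v, pm m u v ≤ pm α u v + pm β u v := by
    intro u v
    by_cases k : m u = v
    · rcases h u with h | h
      · simp [pm, k, h ▸ k]
      · simp [pm, k, h ▸ k]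
    · simp [pm, k]
  let D : V → V → ℕ := fun u v => pm α u v + pm β u v - pm m u v
  have hD : ∀ u v, D u v + pm m u v = pm α u v + pm β u v := fun u v => Nat.sub_add_cancel (hle u v)
  have hr : ∀ u, ∑ v, D u v = 1 := by
    intro u
    have := Finset.sum_congr rfl fun v (_ : v ∈ Finset.univ) => hD u v
    simp only [Finset.sum_add_distrib, pm_row] at this
    omega
  have hc : ∀ v, ∑ u, D u v = 1 := by
    intro v
    have := Finset.sum_congr rfl fun u (_ : u ∈ Finset.univ) => hD u v
    simp only [Finset.sum_add_distrib, pm_col] at this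
    omega
  obtain ⟨τ, hτ⟩ := exists_perm_le D 1 (fun u => (hr u).ge) (fun N => by simp [hc])
  refine ⟨τ, fun u v => ?_⟩
  have h0 : ∑ v, (D u v - pm τ u v) = 0 := by
    have : ∑ v, ((D u v - pm τ u v) + pm τ u v) = 1 := by
      simp only [Nat.sub_add_cancel (hτ _ _), hr]
    rw [Finset.sum_add_distrib, pm_row] at this
    omega
  have h1 := (Finset.sum_eq_zero_iff.1 h0) v (Finset.mem_univ _)
  have := hτ u v
  have := hD u v
  omega

/-- Off the row `x`, the permutation `m` is contained in the sum of `α`, `β`, `γ`; then the sum can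
be redistributed as `α' + β' + γ'` so that `m` is, off `x`, contained in `α' + γ'`. -/
lemma redistribute [Fintype V] {α β γ m : Perm V} {x : V}
    (h : ∀ u, u ≠ x → m u = α u ∨ m u = β u ∨ m u = γ u) :
    ∃ α' β' γ' : Perm V,
      (∀ u v, pm α u v + pm β u v + pm γ u v = pm α' u v + pm β' u v + pm γ' u v) ∧
      ∀ u, u ≠ x → m u = α' u ∨ m u = γ' u := by
  let T : V → V → ℕ := fun u v => pm α u v + pm β u v + pm γ u v
  let o : V → V → ℕ := fun u v => if u = x then 0 else pm m u v
  have hle : ∀ u v, o u v ≤ T u v := by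
    intro u v
    by_cases hu : u = x
    · simp [o, hu]
    by_cases k : m u = v
    · rcases h u hu with h | h | h
      · simp [o, hu, T, pm, k, h ▸ k]; omega
      · simp [o, hu, T, pm, k, h ▸ k]; omega
      · simp [o, hu, T, pm, k, h ▸ k]
    · simp [o, hu, pm, k]
  let D : V → V → ℕ := fun u v => T u v - o u v
  have hD : ∀ u v, D u v + o u v = T u v := fun u v => Nat.sub_add_cancel (hle u v)
  have hTr : ∀ u, ∑ v, T u v = 3 := by
    intro u; simp only [T, Finset.sum_add_distrib, pm_row]
  have hTc : ∀ v, ∑ u, T u v = 3 := by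
    intro v; simp only [T, Finset.sum_add_distrib, pm_col]
  have hor : ∀ u, ∑ v, o u v ≤ 1 := by
    intro u
    by_cases hu : u = x
    · simp [o, hu]
    · simp only [o, hu, if_false, pm_row, le_refl]
  have hoc : ∀ v, 1 ≤ ∑ u, o u v + (if v = m x then 1 else 0) := by
    intro v
    by_cases hv : v = m x
    · simp [hv]
    · have hne : m.symm v ≠ x := by
        intro h; apply hv; rw [← h]; simp
      have : o (m.symm v) v ≤ ∑ u, o u v :=
        Finset.single_le_sum (f := fun u => o u v) (fun _ _ => Nat.zero_le _) (Finset.mem_univ _)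
      simp [o, hne, pm] at this
      simp only [o, pm]
      omega
  -- A permutation in `T - o`, where `o` is `m` without the row `x`, exists by Hall's condition:
  -- the rows of `T - o` have sum at least two, and its columns at most two, with one exception.
  obtain ⟨σ, hσ⟩ := exists_perm_le D 2 (by
      intro u
      have := Finset.sum_congr rfl fun v (_ : v ∈ Finset.univ) => hD u v
      rw [Finset.sum_add_distrib, hTr] at this
      have := hor u
      omega) (by
      intro N
      have h1 : ∀ v, ∑ u, D u v ≤ 2 + if v = m x then 1 else 0 := by
        intro v
        have h1 := Finset.sum_congr rfl fun u (_ : u ∈ Finset.univ) => hD u v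
        rw [Finset.sum_add_distrib, hTc] at h1
        have := hoc v
        omega
      refine lt_of_le_of_lt (Finset.sum_le_sum fun v _ => h1 v) ?_
      rw [Finset.sum_add_distrib, Finset.sum_const, Finset.sum_ite_eq']
      split_ifs <;> simp <;> omega)
  have hσT : ∀ u v, pm σ u v ≤ T u v := fun u v => (hσ u v).trans (Nat.sub_le _ _)
  let R : V → V → ℕ := fun u v => T u v - pm σ u v
  have hR : ∀ u v, R u v + pm σ u v = T u v := fun u v => Nat.sub_add_cancel (hσT u v)
  obtain ⟨α', γ', hαγ⟩ := exists_perm_add R (by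
      intro u
      have := Finset.sum_congr rfl fun v (_ : v ∈ Finset.univ) => hR u v
      rw [Finset.sum_add_distrib, hTr, pm_row] at this
      omega) (by
      intro v
      have := Finset.sum_congr rfl fun u (_ : u ∈ Finset.univ) => hR u v
      rw [Finset.sum_add_distrib, hTc, pm_col] at this
      omega)
  refine ⟨α', σ, γ', fun u v => ?_, fun u hu => ?_⟩
  · have h1 := hR u v
    rw [hαγ] at h1
    change T u v = _
    omega
  · have h1 := hαγ u (m u)
    have h2 := hD u (m u)
    have h3 := hσ u (m u)
    have h4 := hR u (m u)
    have h5 : o u (m u) = 1 := by simp [o, hu, pm]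
    by_contra hcon
    push Not at hcon
    have h6 : pm α' u (m u) = 0 := by simp [pm, hcon.1.symm]
    have h7 : pm γ' u (m u) = 0 := by simp [pm, hcon.2.symm]
    omega

/-- A permutation `N` contained in the sum of all permutations of `p` can be made the permutation of
color `t`. The induction is on the number of rows in which an auxiliary permutation `m` differs
from `N`; off one exceptional row `q`, `m` is contained in the sum of the permutations of the colors
`a` and `t`. -/
lemma reach_perm [Fintype V] {t : ℕ} (ht : t ∈ C) (N : Perm V) (k : ℕ) :
    ∀ (p : ℕ → Perm V) (m : Perm V) (q : V) (a : ℕ), a ∈ C → a ≠ t →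
      (∀ u, 0 < cnt C p u (N u)) → (∀ u, u ≠ q → m u = p a u ∨ m u = p t u) →
      (Finset.univ.filter fun u => m u ≠ N u).card ≤ k →
      ∃ p', Relation.ReflTransGen (PStep C) p p' ∧ p' t = N := by
  -- progress is made when the exceptional row `q` is not yet correct
  have prog : ∀ k, (∀ (p : ℕ → Perm V) (m : Perm V) (q : V) (a : ℕ), a ∈ C → a ≠ t →
      (∀ u, 0 < cnt C p u (N u)) → (∀ u, u ≠ q → m u = p a u ∨ m u = p t u) →
      (Finset.univ.filter fun u => m u ≠ N u).card < k →
      ∃ p', Relation.ReflTransGen (PStep C) p p' ∧ p' t = N) →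
      ∀ (p : ℕ → Perm V) (m : Perm V) (q : V) (a : ℕ), a ∈ C → a ≠ t →
      (∀ u, 0 < cnt C p u (N u)) → (∀ u, u ≠ q → m u = p a u ∨ m u = p t u) →
      (Finset.univ.filter fun u => m u ≠ N u).card ≤ k → m q ≠ N q →
      ∃ p', Relation.ReflTransGen (PStep C) p p' ∧ p' t = N := by
    intro k ih p m q a ha hat hN hm hk hq
    -- Swap the rows `q` and `x` of `m`, so that the row `q` becomes correct; the row `x` was not
    -- correct before, and is the new exceptional row. The color `b` supplies the row `q` of `N`.
    obtain ⟨b, hb, hbq⟩ := cnt_pos.1 (hN q)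
    set x := m.symm (N q) with hx
    have hmx : m x = N q := by simp [hx]
    have hxq : x ≠ q := by rintro h; exact hq (h ▸ hmx)
    have hNx : N x ≠ N q := fun h => hxq (N.injective h)
    let m' : Perm V := (Equiv.swap q x).trans m
    have m'q : m' q = N q := by simp [m', hmx]
    have m'u : ∀ u, u ≠ q → u ≠ x → m' u = m u := by
      intro u h1 h2; simp [m', Equiv.swap_apply_of_ne_of_ne h1 h2]
    have hcard : (Finset.univ.filter fun u => m' u ≠ N u).card < k := by
      refine lt_of_lt_of_le (Finset.card_lt_card ?_) hk
      rw [Finset.ssubset_iff_of_subset]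
      · exact ⟨q, by simpa using hq, by simp [m'q]⟩
      · intro u
        simp only [Finset.mem_filter, Finset.mem_univ, true_and]
        intro hu
        by_cases h1 : u = q
        · subst h1; exact absurd m'q hu
        · by_cases h2 : u = x
          · subst h2; rw [hmx]; exact hNx.symm
          · rwa [m'u u h1 h2] at hu
    by_cases hbat : b = a ∨ b = t
    · refine ih p m' x a ha hat hN (fun u hu => ?_) hcard
      by_cases h1 : u = q
      · subst h1
        rw [m'q, ← hbq]
        rcases hbat with rfl | rfl <;> simp
      · rw [m'u u h1 hu]; exact hm u h1
    · push Not at hbat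
      obtain ⟨α, β, τ, hsum, hm'⟩ := redistribute (α := p a) (β := p b) (γ := p t) (m := m')
        (x := x) (fun u hu => by
          by_cases h1 : u = q
          · subst h1; rw [m'q, ← hbq]; simp
          · rw [m'u u h1 hu]; exact (hm u h1).imp_right Or.inr)
      have hst := pstep_three ha hb ht hbat.1.symm hat hbat.2 α β τ hsum
      obtain ⟨p', hp, hpt⟩ := ih _ m' x a ha hat (fun u => (hst.1 u (N u)) ▸ hN u)
        (fun u hu => by simpa [hat.symm, hbat.2.symm] using hm' u hu) hcard
      exact ⟨p', Relation.ReflTransGen.head hst hp, hpt⟩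
  induction k using Nat.strong_induction_on with
  | _ k ih =>
  intro p m q a ha hat hN hm hk
  have ih' : ∀ (p : ℕ → Perm V) (m : Perm V) (q : V) (a : ℕ), a ∈ C → a ≠ t →
      (∀ u, 0 < cnt C p u (N u)) → (∀ u, u ≠ q → m u = p a u ∨ m u = p t u) →
      (Finset.univ.filter fun u => m u ≠ N u).card < k →
      ∃ p', Relation.ReflTransGen (PStep C) p p' ∧ p' t = N :=
    fun p m q a ha hat hN hm hk => ih _ hk p m q a ha hat hN hm le_rfl
  by_cases hq : m q = N q
  swap
  · exact prog k ih' p m q a ha hat hN hm hk hq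
  -- now `m` is available as a whole, and becomes the permutation of `t`
  have close : ∃ p', Relation.ReflTransGen (PStep C) p p' ∧ p' t = m := by
    obtain ⟨b, hb, hbq⟩ := cnt_pos.1 (hN q)
    by_cases hbat : b = a ∨ b = t
    · obtain ⟨γ, hγ⟩ := split_two (α := p a) (β := p t) (m := m) (fun u => by
        by_cases h1 : u = q
        · subst h1
          rw [hq, ← hbq]
          rcases hbat with rfl | rfl <;> simp
        · exact hm u h1)
      exact ⟨_, Relation.ReflTransGen.single (pstep_two ha ht hat γ m hγ), by simp [hat.symm]⟩
    · push Not at hbat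
      obtain ⟨α, β, hαβ⟩ : ∃ α β : Perm V, ∀ u v,
          pm (p a) u v + pm (p b) u v + pm (p t) u v - pm m u v = pm α u v + pm β u v := by
        have hle : ∀ u v, pm m u v ≤ pm (p a) u v + pm (p b) u v + pm (p t) u v := by
          intro u v
          by_cases k : m u = v
          · by_cases h1 : u = q
            · subst h1
              rw [hq] at k
              simp [pm, hq, hbq, k]; omega
            · rcases hm u h1 with h | h
              · simp [pm, k, h ▸ k]; omega
              · simp [pm, k, h ▸ k]
          · simp [pm, k]
        apply exists_perm_add
        · intro u
          have := Finset.sum_congr rfl fun v (_ : v ∈ Finset.univ) => Nat.sub_add_cancel (hle u v)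
          simp only [Finset.sum_add_distrib, pm_row] at this
          omega
        · intro v
          have := Finset.sum_congr rfl fun u (_ : u ∈ Finset.univ) => Nat.sub_add_cancel (hle u v)
          simp only [Finset.sum_add_distrib, pm_col] at this
          omega
      have hle : ∀ u v, pm m u v ≤ pm (p a) u v + pm (p b) u v + pm (p t) u v := by
        intro u v
        by_cases k : m u = v
        · by_cases h1 : u = q
          · subst h1
            rw [hq] at k
            simp [pm, hq, hbq, k]; omega
          · rcases hm u h1 with h | h
            · simp [pm, k, h ▸ k]; omega
            · simp [pm, k, h ▸ k]
        · simp [pm, k]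
      refine ⟨_, Relation.ReflTransGen.single (pstep_three ha hb ht hbat.1.symm hat hbat.2 α β m
        fun u v => ?_), by simp [hat.symm, hbat.2.symm]⟩
      have := hle u v
      have := hαβ u v
      omega
  obtain ⟨p', hp', hpt⟩ := close
  by_cases hmN : m = N
  · exact ⟨p', hp', hpt.trans hmN⟩
  · obtain ⟨q', hq'⟩ : ∃ q', m q' ≠ N q' := by
      by_contra h; push Not at h; exact hmN (Equiv.ext h)
    obtain ⟨p'', h1, h2⟩ := prog k ih' p' m q' a ha hat
      (fun u => (PStep.chain_cnt hp' u (N u)) ▸ hN u) (fun u _ => Or.inr (by rw [hpt])) hk hq'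
    exact ⟨p'', hp'.trans h1, h2⟩

/-- Two families of permutations with the same counts are connected by steps which change at most
three permutations and preserve the counts. -/
lemma perm_chain [Fintype V] (C : Finset ℕ) : ∀ p q : ℕ → Perm V,
    (∀ u v, cnt C p u v = cnt C q u v) →
    ∃ q', Relation.ReflTransGen (PStep C) p q' ∧ ∀ c ∈ C, q' c = q c := by
  induction C using Finset.induction_on with
  | empty => exact fun p q _ => ⟨p, Relation.ReflTransGen.refl, by simp⟩
  | insert t C htC ih =>
  intro p q hpq
  obtain ⟨p₁, hp₁, hp₁t⟩ : ∃ p₁, Relation.ReflTransGen (PStep (insert t C)) p p₁ ∧ p₁ t = q t := by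
    have hN : ∀ u, 0 < cnt (insert t C) p u (q t u) := fun u => by
      rw [hpq]; exact cnt_pos.2 ⟨t, Finset.mem_insert_self _ _, rfl⟩
    rcases C.eq_empty_or_nonempty with rfl | ⟨a, ha⟩
    · refine ⟨p, Relation.ReflTransGen.refl, Equiv.ext fun u => ?_⟩
      obtain ⟨c, hc, h⟩ := cnt_pos.1 (hN u)
      simp only [Finset.mem_insert, Finset.notMem_empty, or_false] at hc
      subst hc; exact h
    · by_cases hV : Nonempty V
      · obtain ⟨q₀⟩ := hV
        exact reach_perm (Finset.mem_insert_self t C) (q t) _ p (p t) q₀ a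
          (Finset.mem_insert_of_mem ha) (by rintro rfl; exact htC ha) hN
          (fun u _ => Or.inr rfl) le_rfl
      · exact ⟨p, Relation.ReflTransGen.refl, Equiv.ext fun u => absurd ⟨u⟩ hV⟩
  have hc : ∀ u v, cnt C p₁ u v = cnt C q u v := by
    intro u v
    have h1 := (PStep.chain_cnt hp₁ u v).symm.trans (hpq u v)
    unfold cnt at h1 ⊢
    rw [Finset.sum_insert htC, Finset.sum_insert htC, hp₁t] at h1
    omega
  obtain ⟨q', hq', hq2⟩ := ih p₁ q hc
  let L : (ℕ → Perm V) → ℕ → Perm V := fun r c => if c = t then q t else r c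
  have hLC : ∀ r c, c ∈ C → L r c = r c := by
    intro r c hc
    have : c ≠ t := by rintro rfl; exact htC hc
    simp [L, this]
  have hLt : ∀ r, L r t = q t := fun r => by simp [L]
  have hL : L p₁ = p₁ := by
    funext c
    by_cases h : c = t
    · subst h; simp [L, hp₁t]
    · simp [L, h]
  refine ⟨L q', hp₁.trans ?_, ?_⟩
  · rw [← hL]
    refine Relation.ReflTransGen.lift L ?_ p₁ q' hq'
    rintro r r' ⟨h1, S, hS, h2⟩
    refine ⟨fun u v => ?_, S, hS, fun c hc hcS => ?_⟩
    · unfold cnt at h1 ⊢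
      rw [Finset.sum_insert htC, Finset.sum_insert htC, hLt, hLt]
      have e : ∀ r, ∑ c ∈ C, pm (L r c) u v = ∑ c ∈ C, pm (r c) u v :=
        fun r => Finset.sum_congr rfl fun c hc => by rw [hLC r c hc]
      rw [e, e, h1]
    · rcases Finset.mem_insert.1 hc with rfl | hc
      · rw [hLt, hLt]
      · rw [hLC _ _ hc, hLC _ _ hc]; exact h2 c hc hcS
  · intro c hc
    rcases Finset.mem_insert.1 hc with rfl | hc
    · exact hLt _
    · rw [hLC _ _ hc]; exact hq2 c hc

end Bipartite

/-! ### Colorings of bipartite graphs are equivalent -/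

section BipartiteLinked
open Classical Equiv

/-- The edge set of a finite graph, as a finset. -/
noncomputable def ed [Finite V] (H : SimpleGraph V) : Finset (Sym2 V) :=
  (Set.toFinite H.edgeSet).toFinset

lemma mem_ed [Finite V] {H : SimpleGraph V} {e : Sym2 V} : e ∈ ed H ↔ e ∈ H.edgeSet := by
  simp [ed]

variable [Fintype V] {H : SimpleGraph V} {C : Finset ℕ} {f : Sym2 V → ℕ}

lemma PC.adj_uniq (hf : PC (ed H) id C f) {u v w : V} (h1 : H.Adj u v) (h2 : H.Adj u w)
    (h : f s(u, v) = f s(u, w)) : v = w := by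
  by_contra hne
  refine hf.2 _ (mem_ed.2 h1) _ (mem_ed.2 h2) ?_ u (by simp) (by simp) h
  simp only [ne_eq, Sym2.eq_iff, not_or, not_and]
  exact ⟨fun _ => hne, fun h => absurd h h2.ne⟩

/-- The neighbour of `v` along its edge of color `c`, or `v` if there is no such edge. -/
noncomputable def mate (H : SimpleGraph V) (f : Sym2 V → ℕ) (c : ℕ) (v : V) : V :=
  if h : ∃ w, H.Adj v w ∧ f s(v, w) = c then h.choose else v

lemma mate_eq (hf : PC (ed H) id C f) {u v : V} (h : H.Adj u v) : mate H f (f s(u, v)) u = v := by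
  have h' : ∃ w, H.Adj u w ∧ f s(u, w) = f s(u, v) := ⟨v, h, rfl⟩
  unfold mate
  rw [dif_pos h']
  exact hf.adj_uniq h'.choose_spec.1 h h'.choose_spec.2

lemma mate_cases (c : ℕ) (u : V) : mate H f c u = u ∨
    (H.Adj u (mate H f c u) ∧ f s(u, mate H f c u) = c) := by
  by_cases h' : ∃ w, H.Adj u w ∧ f s(u, w) = c
  · right; unfold mate; rw [dif_pos h']; exact h'.choose_spec
  · left; unfold mate; rw [dif_neg h']

lemma mate_invol (hf : PC (ed H) id C f) (c : ℕ) : Function.Involutive (mate H f c) := by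
  intro u
  rcases mate_cases (H := H) (f := f) c u with h | ⟨h1, h2⟩
  · rw [h, h]
  · have := mate_eq hf h1.symm
    rwa [Sym2.eq_swap, h2] at this

/-- Families of permutations encoding proper edge colorings of `H`: for `u ≠ v`, one color sends `u`
to `v` if `uv` is an edge, and none does otherwise. Fixed points are not constrained. -/
def Adm (H : SimpleGraph V) (C : Finset ℕ) (p : ℕ → Perm V) : Prop :=
  ∀ u v, u ≠ v → cnt C p u v = if H.Adj u v then 1 else 0

/-- The family of involutions given by the color classes of `f`. -/
noncomputable def perms (hf : PC (ed H) id C f) (c : ℕ) : Perm V := (mate_invol hf c).toPerm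

lemma perms_adm (hf : PC (ed H) id C f) : Adm H C (perms hf) := by
  intro u v huv
  have : ∀ c ∈ C, pm (perms hf c) u v = if H.Adj u v ∧ f s(u, v) = c then 1 else 0 := by
    intro c _
    unfold pm
    refine if_congr ?_ rfl rfl
    simp only [perms, Function.Involutive.coe_toPerm]
    constructor
    · intro h
      rcases mate_cases (H := H) (f := f) c u with h1 | h1
      · exact absurd (h1.symm.trans h) huv
      · rwa [h] at h1
    · rintro ⟨h1, rfl⟩; exact mate_eq hf h1
  unfold cnt
  rw [Finset.sum_congr rfl this]
  by_cases h : H.Adj u v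
  · have hm := hf.1 _ (mem_ed.2 (show s(u, v) ∈ H.edgeSet from h))
    simp [h, hm]
  · simp [h]

lemma cnt_row (p : ℕ → Perm V) (u : V) : ∑ v, cnt C p u v = C.card := by
  unfold cnt
  rw [Finset.sum_comm]
  simp [pm_row]

/-- The diagonal counts are determined as well, because every row of `cnt` sums to `|C|`. -/
lemma Adm.cnt_eq {p q : ℕ → Perm V} (hp : Adm H C p) (hq : Adm H C q) (u v : V) :
    cnt C p u v = cnt C q u v := by
  have off : ∀ v, u ≠ v → cnt C p u v = cnt C q u v := fun v h => (hp u v h).trans (hq u v h).symm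
  by_cases h : u = v
  · subst h
    have h1 := cnt_row (C := C) p u
    have h2 := cnt_row (C := C) q u
    rw [← Finset.add_sum_erase _ _ (Finset.mem_univ u)] at h1 h2
    have : ∑ v ∈ Finset.univ.erase u, cnt C p u v = ∑ v ∈ Finset.univ.erase u, cnt C q u v :=
      Finset.sum_congr rfl fun v hv => off v (Finset.ne_of_mem_erase hv).symm
    omega
  · exact off v h

/-- The edge coloring encoded by a family of permutations, read off from the side `L`. -/
noncomputable def colOf (L : Set V) (C : Finset ℕ) (p : ℕ → Perm V) (e : Sym2 V) : ℕ :=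
  if h : ∃ c, c ∈ C ∧ ∃ u v, e = s(u, v) ∧ u ∈ L ∧ v ∉ L ∧ p c u = v then h.choose else 0

lemma colOf_spec {L : Set V} {p : ℕ → Perm V} (hp : Adm H C p) {u v : V} (h : H.Adj u v)
    (hu : u ∈ L) (hv : v ∉ L) : colOf L C p s(u, v) ∈ C ∧ p (colOf L C p s(u, v)) u = v := by
  have h' : ∃ c, c ∈ C ∧ ∃ u' v', s(u, v) = s(u', v') ∧ u' ∈ L ∧ v' ∉ L ∧ p c u' = v' := by
    have : 0 < cnt C p u v := by rw [hp u v h.ne, if_pos h]; exact one_pos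
    obtain ⟨c, hc, hcu⟩ := cnt_pos.1 this
    exact ⟨c, hc, u, v, rfl, hu, hv, hcu⟩
  unfold colOf
  rw [dif_pos h']
  obtain ⟨h1, u', v', h2, h3, h4, h5⟩ := h'.choose_spec
  refine ⟨h1, ?_⟩
  rcases Sym2.eq_iff.1 h2 with ⟨rfl, rfl⟩ | ⟨rfl, rfl⟩
  · exact h5
  · exact absurd h3 hv

lemma Adm.uniq {p : ℕ → Perm V} (hp : Adm H C p) {u v : V} (huv : u ≠ v) {c d : ℕ} (hc : c ∈ C)
    (hd : d ∈ C) (h1 : p c u = v) (h2 : p d u = v) : c = d := by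
  by_contra hne
  have h : cnt C p u v ≤ 1 := by rw [hp u v huv]; split_ifs <;> omega
  have : ∑ x ∈ {c, d}, pm (p x) u v ≤ cnt C p u v :=
    Finset.sum_le_sum_of_subset (by intro x; simp; rintro (rfl | rfl) <;> assumption)
  rw [Finset.sum_pair hne] at this
  simp [pm, h1, h2] at this
  omega

lemma side_cases {L : Set V} (hL : ∀ u v, H.Adj u v → (u ∈ L ↔ v ∉ L)) {e : Sym2 V}
    (he : e ∈ ed H) : ∃ u v, e = s(u, v) ∧ H.Adj u v ∧ u ∈ L ∧ v ∉ L := by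
  rw [mem_ed] at he
  induction e using Sym2.ind with
  | _ u v =>
    by_cases hu : u ∈ L
    · exact ⟨u, v, rfl, he, hu, (hL u v he).1 hu⟩
    · refine ⟨v, u, Sym2.eq_swap, he.symm, ?_, hu⟩
      have := hL u v he
      tauto

lemma colOf_pc {L : Set V} (hL : ∀ u v, H.Adj u v → (u ∈ L ↔ v ∉ L)) {p : ℕ → Perm V}
    (hp : Adm H C p) : PC (ed H) id C (colOf L C p) := by
  constructor
  · intro e he
    obtain ⟨u, v, rfl, h, hu, hv⟩ := side_cases hL he
    exact (colOf_spec hp h hu hv).1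
  · intro e he e' he' hne x hx hx' heq
    obtain ⟨u, v, rfl, h, hu, hv⟩ := side_cases hL he
    obtain ⟨u', v', rfl, h', hu', hv'⟩ := side_cases hL he'
    have h1 := (colOf_spec hp h hu hv).2
    have h2 := (colOf_spec hp h' hu' hv').2
    rw [heq] at h1
    simp only [id, Sym2.mem_iff] at hx hx'
    rcases hx with rfl | rfl <;> rcases hx' with rfl | rfl
    · rw [h1] at h2; exact hne (by rw [h2])
    · exact hv' hu
    · exact hv hu'
    · exact hne (by rw [(p _).injective (h1.trans h2.symm)])

lemma colOf_chain {L : Set V} (hL : ∀ u v, H.Adj u v → (u ∈ L ↔ v ∉ L)) {p q : ℕ → Perm V}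
    (hp : Adm H C p) (hpq : Relation.ReflTransGen (PStep C) p q) :
    Eqv (ed H) id C (colOf L C p) (colOf L C q) := by
  induction hpq with
  | refl => exact Relation.ReflTransGen.refl
  | @tail r r' h1 h2 ih =>
    have a1 : Adm H C r := fun u v h => by rw [← PStep.chain_cnt h1, hp u v h]
    have a2 : Adm H C r' := fun u v h => by
      rw [← PStep.chain_cnt (h1.tail h2), hp u v h]
    refine ih.tail ?_
    obtain ⟨_, S, hS, hrr⟩ := h2
    refine Step.mk' (colOf_pc hL a1) (colOf_pc hL a2) S (by omega) fun e he => ?_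
    obtain ⟨u, v, rfl, h, hu, hv⟩ := side_cases hL he
    obtain ⟨k1, k2⟩ := colOf_spec a1 h hu hv
    obtain ⟨k3, k4⟩ := colOf_spec a2 h hu hv
    by_cases s1 : colOf L C r s(u, v) ∈ S
    · by_cases s2 : colOf L C r' s(u, v) ∈ S
      · exact Or.inr ⟨s1, s2⟩
      · rw [← hrr _ k3 s2] at k4
        exact Or.inl (a1.uniq h.ne k1 k3 k2 k4)
    · rw [hrr _ k1 s1] at k2
      exact Or.inl (a2.uniq h.ne k1 k3 k2 k4)

lemma colOf_perms {L : Set V} (hL : ∀ u v, H.Adj u v → (u ∈ L ↔ v ∉ L))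
    (hf : PC (ed H) id C f) : ∀ e ∈ ed H, colOf L C (perms hf) e = f e := by
  intro e he
  obtain ⟨u, v, rfl, h, hu, hv⟩ := side_cases hL he
  obtain ⟨h1, h2⟩ := colOf_spec (perms_adm hf) h hu hv
  exact (perms_adm hf).uniq h.ne h1 (hf.1 _ he) h2 (mate_eq hf h)

/-- A coloring of a bipartite graph becomes a family of involutions, completed by fixed points at the
vertices missing a color. Families with the same counts are connected by `perm_chain`, and reading
the arcs from one side of the bipartition turns each of its steps into a step between colorings. -/
lemma linked_of_colorable_two (hH : H.Colorable 2) : Linked (ed H) id C := by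
  obtain ⟨col⟩ := hH
  let L : Set V := {u | col u = 0}
  have hL : ∀ u v, H.Adj u v → (u ∈ L ↔ v ∉ L) := by
    intro u v h
    have := col.valid h
    simp only [L, Set.mem_ofPred_eq]
    omega
  intro f g hf hg
  obtain ⟨q', h1, h2⟩ := perm_chain C (perms hf) (perms hg) (perms_adm hf |>.cnt_eq (perms_adm hg))
  have aq : Adm H C q' := fun u v h => by rw [← PStep.chain_cnt h1, perms_adm hf u v h]
  refine (Step.of_agree hf fun e he => (colOf_perms hL hf e he).symm).eqv.trans ?_
  refine (colOf_chain hL (perms_adm hf) h1).trans ?_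
  refine (Step.of_agree (colOf_pc hL aq) fun e he => ?_).eqv
  rw [← colOf_perms hL hg e he]
  obtain ⟨u, v, rfl, h, hu, hv⟩ := side_cases hL he
  obtain ⟨k1, k2⟩ := colOf_spec aq h hu hv
  obtain ⟨k3, k4⟩ := colOf_spec (perms_adm hg) h hu hv
  rw [h2 _ k1] at k2
  exact (perms_adm hg).uniq h.ne k1 k3 k2 k4

end BipartiteLinked

/-! ### Glueing along a vertex -/

section Glue
open Classical
variable {E X : Type*} {A A₁ A₂ : Finset E} {en : E → Sym2 X} {C : Finset ℕ} {f g h F F' : E → ℕ}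

/-- `A` splits into `A₁` and `A₂`, which share at most the vertex `x`. -/
structure Glued (A A₁ A₂ : Finset E) (en : E → Sym2 X) (x : X) : Prop where
  eq : A₁ ∪ A₂ = A
  disj : Disjoint A₁ A₂
  uniq : ∀ e₁ ∈ A₁, ∀ e₂ ∈ A₂, ∀ v, v ∈ en e₁ → v ∈ en e₂ → v = x

namespace Glued
variable {x : X} (K : Glued A A₁ A₂ en x)
include K

lemma symm : Glued A A₂ A₁ en x :=
  ⟨by rw [Finset.union_comm, K.eq], K.disj.symm, fun e₁ h₁ e₂ h₂ v hv hv' =>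
    K.uniq e₂ h₂ e₁ h₁ v hv' hv⟩

lemma sub₁ : A₁ ⊆ A := K.eq ▸ Finset.subset_union_left

lemma sub₂ : A₂ ⊆ A := K.eq ▸ Finset.subset_union_right

lemma mem {e : E} (he : e ∈ A) : e ∈ A₁ ∨ (e ∈ A₂ ∧ e ∉ A₁) := by
  rw [← K.eq, Finset.mem_union] at he
  tauto

lemma pc (h₁ : PC A₁ en C h) (h₂ : PC A₂ en C h)
    (hx : ∀ e₁ ∈ A₁, ∀ e₂ ∈ A₂, x ∈ en e₁ → x ∈ en e₂ → h e₁ ≠ h e₂) : PC A en C h := by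
  have hc : ∀ e₁ ∈ A₁, ∀ e₂ ∈ A₂, ∀ v, v ∈ en e₁ → v ∈ en e₂ → h e₁ ≠ h e₂ := by
    intro e₁ he₁ e₂ he₂ v hv hv'
    have := K.uniq e₁ he₁ e₂ he₂ v hv hv'
    subst this
    exact hx e₁ he₁ e₂ he₂ hv hv'
  constructor
  · intro e he
    rcases K.mem he with he | he
    · exact h₁.1 e he
    · exact h₂.1 e he.1
  · intro e he e' he' hne v hv hv'
    rcases K.mem he with he | he <;> rcases K.mem he' with he' | he'
    · exact h₁.2 e he e' he' hne v hv hv'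
    · exact hc e he e' he'.1 v hv hv'
    · exact (hc e' he' e he.1 v hv' hv).symm
    · exact h₂.2 e he.1 e' he'.1 hne v hv hv'

/-- A step on `A₁` extends to a step on `A` which permutes the colors of `A₂`. -/
lemma step (hs : Step A₁ en C F F') (hh : PC A en C h) (hF : ∀ e ∈ A₁, h e = F e) :
    ∃ (h' : E → ℕ) (σ : Equiv.Perm ℕ), Step A en C h h' ∧ (∀ e ∈ A₁, h' e = F' e) ∧
      (∀ e ∈ A₂, h' e = σ (h e)) ∧ ∀ c ∈ C, σ c ∈ C := by
  obtain ⟨pF, pF', S, hSC, hS4, hS⟩ := hs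
  have hS' : ∀ e ∈ A₁, F e ∈ S → F' e ∈ S := fun e he h => by
    rcases hS e he with k | k
    · rwa [← k]
    · exact k.2
  -- At `x` the step replaces the colors in `S` of edges of `A₁` injectively by colors in `S`; an
  -- extension of this replacement to a permutation of `S` is applied to the colors of `A₂`.
  let s : Set S := {c | ∃ e ∈ A₁, x ∈ en e ∧ F e = c}
  let φ : S → ℕ := fun c => if h : ∃ e ∈ A₁, x ∈ en e ∧ F e = c then F' h.choose else 0
  have hφ : ∀ c : S, ∀ e ∈ A₁, x ∈ en e → F e = c → φ c = F' e := by
    intro c e he hx hc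
    have h : ∃ e ∈ A₁, x ∈ en e ∧ F e = c := ⟨e, he, hx, hc⟩
    simp only [φ, dif_pos h]
    obtain ⟨h1, h2, h3⟩ := h.choose_spec
    by_contra hne
    refine pF.2 _ h1 e he (fun k => hne (by rw [k])) x h2 hx (h3.trans hc.symm)
  obtain ⟨τ, hτ⟩ := Set.MapsTo.exists_equiv_extend_of_card_eq (α := S) (t := S) (s := s) (f := φ)
    (by simp) (by
      rintro c ⟨e, he, hx, hc⟩
      rw [hφ c e he hx hc]
      exact hS' e he (hc ▸ c.2)) (by
      rintro c ⟨e, he, hx, hc⟩ c' ⟨e', he', hx', hc'⟩ heq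
      rw [hφ c e he hx hc, hφ c' e' he' hx' hc'] at heq
      by_cases hee : e = e'
      · subst hee; exact Subtype.ext (hc.symm.trans hc')
      · exact absurd heq (pF'.2 e he e' he' hee x hx hx'))
  let σ : Equiv.Perm ℕ := Equiv.Perm.ofSubtype (p := (· ∈ S)) τ
  have σS : ∀ c (hc : c ∈ S), σ c = τ ⟨c, hc⟩ := fun c hc =>
    Equiv.Perm.ofSubtype_apply_of_mem (p := (· ∈ S)) τ hc
  have σn : ∀ c, c ∉ S → σ c = c := fun c hc =>
    Equiv.Perm.ofSubtype_apply_of_not_mem (p := (· ∈ S)) τ hc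
  have σx : ∀ e ∈ A₁, x ∈ en e → F' e = σ (F e) := by
    intro e he hx
    by_cases hc : F e ∈ S
    · rw [σS _ hc, hτ ⟨F e, hc⟩ ⟨e, he, hx, rfl⟩, hφ _ e he hx rfl]
    · rw [σn _ hc]
      rcases hS e he with k | k
      · exact k.symm
      · exact absurd k.1 hc
  have σC : ∀ c ∈ C, σ c ∈ C := by
    intro c hc
    by_cases hs : c ∈ S
    · rw [σS c hs]; exact hSC (τ ⟨c, hs⟩).2
    · rwa [σn c hs]
  let h' : E → ℕ := fun e => if e ∈ A₁ then F' e else σ (h e)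
  have h1 : ∀ e ∈ A₁, h' e = F' e := fun e he => by simp [h', he]
  have h2 : ∀ e ∈ A₂, h' e = σ (h e) := fun e he => by
    have : e ∉ A₁ := fun k => Finset.disjoint_left.1 K.disj k he
    simp [h', this]
  refine ⟨h', σ, ?_, h1, h2, σC⟩
  have pc' : PC A en C h' := by
    refine K.pc (pF'.congr fun e he => (h1 e he).symm) ?_ ?_
    · constructor
      · intro e he; rw [h2 e he]; exact σC _ (hh.1 e (K.sub₂ he))
      · intro e he e' he' hne v hv hv' heq
        rw [h2 e he, h2 e' he'] at heq
        exact hh.2 e (K.sub₂ he) e' (K.sub₂ he') hne v hv hv' (σ.injective heq)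
    · intro e₁ he₁ e₂ he₂ hx hx' heq
      rw [h1 e₁ he₁, h2 e₂ he₂, σx e₁ he₁ hx, ← hF e₁ he₁] at heq
      refine hh.2 e₁ (K.sub₁ he₁) e₂ (K.sub₂ he₂) ?_ x hx hx' (σ.injective heq)
      rintro rfl
      exact Finset.disjoint_left.1 K.disj he₁ he₂
  refine Step.mk' hh pc' S hS4 fun e he => ?_
  rcases K.mem he with he | ⟨he, -⟩
  · rw [h1 e he, hF e he]; exact hS e he
  · rw [h2 e he]
    by_cases hs : h e ∈ S
    · right; rw [σS _ hs]; exact ⟨hs, (τ _).2⟩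
    · left; rw [σn _ hs]

/-- A chain of steps on `A₁` extends to `A`, at the cost of permuting the colors of `A₂`. -/
lemma chain (hs : Eqv A₁ en C F F') (hh : PC A en C h) (hF : ∀ e ∈ A₁, h e = F e) :
    ∃ (h' : E → ℕ) (σ : Equiv.Perm ℕ), Eqv A en C h h' ∧ (∀ e ∈ A₁, h' e = F' e) ∧
      (∀ e ∈ A₂, h' e = σ (h e)) ∧ ∀ c ∈ C, σ c ∈ C := by
  induction hs with
  | refl => exact ⟨h, 1, Relation.ReflTransGen.refl, hF, by simp, by simp⟩
  | tail _ h2 ih =>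
    obtain ⟨k, σ, k1, k2, k3, k4⟩ := ih
    obtain ⟨l, τ, l1, l2, l3, l4⟩ := K.step h2 (k1.pc hh) k2
    exact ⟨l, τ * σ, k1.tail l1, l2, fun e he => by rw [l3 e he, k3 e he]; rfl,
      fun c hc => l4 _ (k4 c hc)⟩

/-- A permutation of the colors of `A₁` can be undone. -/
lemma unperm (n : ℕ) : ∀ (h : E → ℕ) (τ : Equiv.Perm ℕ), (C.filter fun c => τ c ≠ c).card = n →
    PC A en C g → PC A en C h → (∀ e ∈ A₂, h e = g e) → (∀ e ∈ A₁, h e = τ (g e)) →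
    (∀ c ∈ C, τ c ∈ C) → Eqv A en C h g := by
  induction n using Nat.strong_induction_on with
  | _ n ih =>
  intro h τ hn hg hh h₂ h₁ hτ
  by_cases hfix : ∀ c ∈ C, τ c = c
  · refine (Step.of_agree hh fun e he => ?_).eqv
    rcases K.mem he with he' | he'
    · rw [h₁ e he', hfix _ (hg.1 e he)]
    · exact h₂ e he'.1
  -- Undo `τ` one color at a time: exchange `a` and `τ a` on `A₁`, where `a` is chosen so that no
  -- conflict arises at `x`.
  have hsw : ∃ a ∈ C, τ a ≠ a ∧ ∀ e₁ ∈ A₁, ∀ e₂ ∈ A₂, x ∈ en e₁ → x ∈ en e₂ →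
      Equiv.swap a (τ a) (h e₁) ≠ h e₂ := by
    have hne : ∀ e₁ ∈ A₁, ∀ e₂ ∈ A₂, e₁ ≠ e₂ := by
      rintro e he _ he' rfl; exact Finset.disjoint_left.1 K.disj he he'
    by_cases hD : ∃ e ∈ A₁, x ∈ en e ∧ τ (g e) ≠ g e
    · obtain ⟨e, he, hx, hτe⟩ := hD
      refine ⟨g e, hg.1 e (K.sub₁ he), hτe, fun e₁ he₁ e₂ he₂ hx₁ hx₂ => ?_⟩
      have k1 : h e₁ ≠ h e₂ := hh.2 _ (K.sub₁ he₁) _ (K.sub₂ he₂) (hne _ he₁ _ he₂) x hx₁ hx₂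
      have k2 : h e ≠ h e₂ := hh.2 _ (K.sub₁ he) _ (K.sub₂ he₂) (hne _ he _ he₂) x hx hx₂
      have k3 : g e ≠ g e₂ := hg.2 _ (K.sub₁ he) _ (K.sub₂ he₂) (hne _ he _ he₂) x hx hx₂
      rw [h₁ e he] at k2
      rw [← h₂ e₂ he₂] at k3
      rw [Equiv.swap_apply_def]
      split_ifs <;> assumption
    · push Not at hD hfix
      obtain ⟨a, ha, haτ⟩ := hfix
      refine ⟨a, ha, haτ, fun e₁ he₁ e₂ he₂ hx₁ hx₂ => ?_⟩
      have k1 : h e₁ ≠ h e₂ := hh.2 _ (K.sub₁ he₁) _ (K.sub₂ he₂) (hne _ he₁ _ he₂) x hx₁ hx₂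
      have k2 := hD e₁ he₁ hx₁
      have k3 := h₁ e₁ he₁
      rw [Equiv.swap_apply_of_ne_of_ne]
      · exact k1
      · rintro k; rw [k] at k3; exact haτ (by rw [← k2, ← k3] at k2; exact k2)
      · intro k; rw [k3] at k; have := τ.injective k; rw [this] at k2; exact haτ k2
  obtain ⟨a, ha, haτ, hx⟩ := hsw
  set sw := Equiv.swap a (τ a) with hsw
  have swC : ∀ c ∈ C, sw c ∈ C := by
    intro c hc
    rw [hsw, Equiv.swap_apply_def]
    split_ifs
    · exact hτ a ha
    · exact ha
    · exact hc
  let h' : E → ℕ := fun e => if e ∈ A₁ then sw (h e) else h e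
  have e1 : ∀ e ∈ A₁, h' e = sw (h e) := fun e he => by simp [h', he]
  have e2 : ∀ e ∈ A₂, h' e = h e := fun e he => by
    have : e ∉ A₁ := fun k => Finset.disjoint_left.1 K.disj k he
    simp [h', this]
  have pc' : PC A en C h' := by
    refine K.pc ?_ ((hh.mono K.sub₂).congr fun e he => (e2 e he).symm) ?_
    · constructor
      · intro e he; rw [e1 e he]; exact swC _ (hh.1 e (K.sub₁ he))
      · intro e he e' he' hne v hv hv' heq
        rw [e1 e he, e1 e' he'] at heq
        exact hh.2 e (K.sub₁ he) e' (K.sub₁ he') hne v hv hv' (sw.injective heq)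
    · intro e₁ he₁ e₂ he₂ hx₁ hx₂
      rw [e1 e₁ he₁, e2 e₂ he₂]
      exact hx e₁ he₁ e₂ he₂ hx₁ hx₂
  have hst : Step A en C h h' := by
    refine Step.mk' hh pc' {a, τ a} (Finset.card_le_two.trans (by norm_num)) fun e he => ?_
    by_cases hA : e ∈ A₁
    · rw [e1 e hA, hsw, Equiv.swap_apply_def]
      split_ifs with k1 k2
      · right; simp [k1]
      · right; simp [k2]
      · left; rfl
    · left; simp [h', hA]
  refine hst.eqv.trans (ih _ ?_ h' (sw * τ) rfl hg pc' (fun e he => (e2 e he).trans (h₂ e he))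
    (fun e he => by rw [e1 e he, h₁ e he]; rfl) fun c hc => swC _ (hτ c hc))
  rw [← hn]
  refine Finset.card_lt_card ⟨?_, fun hsub => ?_⟩
  · intro c hmem
    obtain ⟨hc, hne⟩ := Finset.mem_filter.1 hmem
    refine Finset.mem_filter.2 ⟨hc, fun k => hne ?_⟩
    rw [Equiv.Perm.mul_apply, k, hsw]
    refine Equiv.swap_apply_of_ne_of_ne ?_ ?_
    · rintro rfl; exact haτ k
    · intro h; rw [h] at k; rw [← h] at k; exact haτ ((τ.injective (k.trans h)).symm ▸ h.symm)
  · have := hsub (Finset.mem_filter.2 ⟨ha, haτ⟩)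
    simp [hsw] at this

/-- Linkedness of two multigraphs passes to their union along one vertex. -/
lemma linked (l₁ : Linked A₁ en C) (l₂ : Linked A₂ en C) : Linked A en C := by
  intro f g hf hg
  obtain ⟨h1, σ, a1, a2, -, -⟩ := K.chain (l₁ f g (hf.mono K.sub₁) (hg.mono K.sub₁)) hf
    fun _ _ => rfl
  have p1 := a1.pc hf
  obtain ⟨h2, τ, b1, b2, b3, b4⟩ := K.symm.chain (l₂ h1 g (p1.mono K.sub₂) (hg.mono K.sub₂)) p1
    fun _ _ => rfl
  exact a1.trans (b1.trans (K.unperm _ h2 τ rfl hg (b1.pc p1) b2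
    (fun e he => by rw [b3 e he, a2 e he]) b4))

end Glued
end Glue

/-! ### Good graphs -/

section Good
open Classical

/-- Every nonempty vertex set induces a subgraph with a vertex of degree at most two. -/
def TD (H : SimpleGraph V) : Prop :=
  ∀ W : Set V, W.Nonempty → ∃ w ∈ W, {u | u ∈ W ∧ H.Adj w u}.ncard ≤ 2

/-- Graphs all of whose subgraphs are linked: bipartite graphs, 2-degenerate graphs, and graphs
which are 2-degenerate up to one edge joining vertices of degree at most three. -/
def Good (H : SimpleGraph V) : Prop :=
  H.Colorable 2 ∨ TD H ∨ ∃ u v, (H.neighborSet u).ncard ≤ 3 ∧ (H.neighborSet v).ncard ≤ 3 ∧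
    TD (H.deleteEdges {s(u, v)})

/-- Edges of the wheel at a rim vertex. -/
lemma wheel_adj {n : ℕ} {i : ZMod n} {a : Option (ZMod n)} (h : (wheelGraph n).Adj (some i) a) :
    a = none ∨ a = some (i + 1) ∨ a = some (i - 1) := by
  simp only [wheelGraph, SimpleGraph.fromRel_adj] at h
  obtain ⟨-, (h | ⟨j, h1, h2⟩) | (h | ⟨j, h1, h2⟩)⟩ := h
  · simp at h
  · cases h1; exact Or.inr (Or.inl h2)
  · exact Or.inl h
  · simp only [Option.some.injEq] at h2
    subst h2
    exact Or.inr (Or.inr (by simpa using h1))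

/-- A rim edge joins two vertices of degree three. After its deletion the rim is a path, whose first
vertex in a given vertex set has at most two neighbours there. -/
lemma good_wheel {n : ℕ} (hn : 3 ≤ n) : Good (wheelGraph n) := by
  have : NeZero n := ⟨by omega⟩
  have : Fact (1 < n) := ⟨by omega⟩
  have hd : ∀ i : ZMod n, ((wheelGraph n).neighborSet (some i)).ncard ≤ 3 := by
    intro i
    refine (Set.ncard_le_ncard (t := ({none, some (i + 1), some (i - 1)} : Finset _)) ?_).trans ?_
    · intro a ha
      simpa using wheel_adj ha
    · rw [Set.ncard_coe_finset]; exact Finset.card_le_three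
  refine Or.inr (Or.inr ⟨some 0, some (-1), hd _, hd _, fun W hW => ?_⟩)
  by_cases hr : ∃ i : ZMod n, some i ∈ W
  · obtain ⟨i, hi, hmin⟩ := Set.exists_min_image {i : ZMod n | some i ∈ W} ZMod.val
      (Set.toFinite _) hr
    refine ⟨some i, hi, ?_⟩
    refine (Set.ncard_le_ncard (t := ({none, some (i + 1)} : Finset _)) ?_).trans ?_
    · rintro a ⟨haW, ha⟩
      rw [SimpleGraph.deleteEdges_adj] at ha
      rcases wheel_adj ha.1 with h | h | h
      · simp [h]
      · simp [h]
      · exfalso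
        subst h
        by_cases h0 : i = 0
        · subst h0; simp at ha
        · have h1 := hmin _ haW
          have h2 : 1 ≤ i.val := Nat.one_le_iff_ne_zero.2 (by simpa using h0)
          rw [ZMod.val_sub (by rw [ZMod.val_one]; exact h2), ZMod.val_one] at h1
          omega
    · rw [Set.ncard_coe_finset]; exact Finset.card_le_two
  · obtain ⟨w, hw⟩ := hW
    have hn : ∀ a ∈ W, a = none := by
      intro a ha
      rcases a with _ | i
      · rfl
      · exact absurd ⟨i, ha⟩ hr
    refine ⟨w, hw, ?_⟩
    rw [(Set.ncard_eq_zero (Set.toFinite _)).2]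
    · omega
    · ext a
      simp only [Set.mem_ofPred_eq, Set.mem_empty_iff_false, iff_false, not_and]
      intro ha hadj
      exact hadj.ne ((hn w hw).trans (hn a ha).symm)

variable {X : Type*} [Finite X]

/-- `A` is a set of edges of the image of `H` under the injection `φ`. -/
def Covers (H : SimpleGraph X) (φ : X → V) (A : Finset (Sym2 V)) : Prop :=
  ∀ e ∈ A, ∃ x y, H.Adj x y ∧ e = s(φ x, φ y)

lemma Covers.at_vertex {H : SimpleGraph X} {φ : X → V} (hφ : φ.Injective) {A : Finset (Sym2 V)}
    (h : Covers H φ A) {e : Sym2 V} (he : e ∈ A) {x : X} (hx : φ x ∈ e) :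
    ∃ y, H.Adj x y ∧ e = s(φ x, φ y) := by
  obtain ⟨a, b, hab, rfl⟩ := h e he
  rcases Sym2.mem_iff.1 hx with h | h
  · rw [hφ h]; exact ⟨b, hab, rfl⟩
  · rw [hφ h]; exact ⟨a, hab.symm, Sym2.eq_swap⟩

lemma Covers.dg_le {H : SimpleGraph X} {φ : X → V} (hφ : φ.Injective) {A : Finset (Sym2 V)}
    (h : Covers H φ A) (x : X) : dg A id (φ x) ≤ (H.neighborSet x).ncard := by
  unfold dg
  rw [← Set.ncard_coe_finset]
  refine (Set.ncard_le_ncard (t := (fun y => s(φ x, φ y)) '' H.neighborSet x) ?_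
    (Set.toFinite _)).trans (Set.ncard_image_le (Set.toFinite _))
  intro e he
  simp only [id, Finset.coe_filter, Set.mem_ofPred_eq] at he
  obtain ⟨y, hy, rfl⟩ := h.at_vertex hφ he.1 he.2
  exact ⟨y, hy, rfl⟩

lemma Covers.twoDeg {H : SimpleGraph X} {φ : X → V} (hφ : φ.Injective) {A : Finset (Sym2 V)}
    (h : Covers H φ A) (hH : TD H) : TwoDeg A id := by
  intro W hW
  by_cases hr : ∀ w ∈ W, ∃ x, φ x = w
  · obtain ⟨w, hw⟩ := hW
    obtain ⟨x, rfl⟩ := hr w hw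
    obtain ⟨x, hx, hc⟩ := hH {x | φ x ∈ W} ⟨x, hw⟩
    refine ⟨φ x, hx, ?_⟩
    rw [← Set.ncard_coe_finset]
    refine (Set.ncard_le_ncard (t := (fun y => s(φ x, φ y)) '' {y | φ y ∈ W ∧ H.Adj x y}) ?_
      (Set.toFinite _)).trans ((Set.ncard_image_le (Set.toFinite _)).trans hc)
    intro e he
    simp only [id, Finset.coe_filter, Set.mem_ofPred_eq] at he
    obtain ⟨y, hy, rfl⟩ := h.at_vertex hφ he.1 he.2.1
    exact ⟨y, ⟨he.2.2 _ (by simp), hy⟩, rfl⟩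
  · push Not at hr
    obtain ⟨w, hw, hx⟩ := hr
    refine ⟨w, hw, ?_⟩
    rw [Finset.card_eq_zero.2]
    · omega
    · ext e
      simp only [id, Finset.mem_filter, Finset.notMem_empty, iff_false, not_and]
      intro he hwe
      obtain ⟨a, b, hab, rfl⟩ := h e he
      rcases Sym2.mem_iff.1 hwe with h | h
      · exact absurd h.symm (hx _)
      · exact absurd h.symm (hx _)

/-- The image of any set of edges of a good graph is linked. -/
lemma Covers.linked [Fintype V] {H : SimpleGraph X} {φ : X → V} (hφ : φ.Injective)
    {A : Finset (Sym2 V)} (h : Covers H φ A) (hH : Good H) (C : Finset ℕ) : Linked A id C := by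
  rcases hH with ⟨⟨col⟩⟩ | hH | ⟨u, v, hu, hv, hH⟩
  · have key : A = ed (SimpleGraph.fromEdgeSet (A : Set (Sym2 V))) := by
      ext e
      rw [mem_ed, SimpleGraph.edgeSet_fromEdgeSet]
      simp only [Set.mem_sdiff, SetLike.mem_coe]
      constructor
      · intro he
        refine ⟨he, ?_⟩
        obtain ⟨x, y, hxy, rfl⟩ := h e he
        simpa using fun k => hxy.ne (hφ k)
      · exact fun h => h.1
    rw [key]
    refine linked_of_colorable_two ⟨SimpleGraph.Coloring.mk
      (fun v => if hv : ∃ x, φ x = v then col hv.choose else 0) ?_⟩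
    intro a b hab
    rw [SimpleGraph.fromEdgeSet_adj] at hab
    obtain ⟨x, y, hxy, he⟩ := h _ hab.1
    have hc : ∀ x, (if hv : ∃ x', φ x' = φ x then col hv.choose else 0) = col x := by
      intro x
      have : ∃ x', φ x' = φ x := ⟨x, rfl⟩
      rw [dif_pos this, hφ this.choose_spec]
    rcases Sym2.eq_iff.1 he with ⟨rfl, rfl⟩ | ⟨rfl, rfl⟩
    · rw [hc, hc]; exact col.valid hxy
    · rw [hc, hc]; exact (col.valid hxy).symm
  · exact (h.twoDeg hφ hH).linked
  · have hT : TwoDeg (A.erase s(φ u, φ v)) id := by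
      refine Covers.twoDeg (H := H.deleteEdges {s(u, v)}) hφ (fun e he => ?_) hH
      obtain ⟨hne, he⟩ := Finset.mem_erase.1 he
      obtain ⟨x, y, hxy, rfl⟩ := h e he
      refine ⟨x, y, ?_, rfl⟩
      rw [SimpleGraph.deleteEdges_adj]
      refine ⟨hxy, fun k => hne ?_⟩
      rcases Sym2.eq_iff.1 k with ⟨rfl, rfl⟩ | ⟨rfl, rfl⟩
      · rfl
      · exact Sym2.eq_swap
    by_cases he : s(φ u, φ v) ∈ A
    · by_cases hC : C.card ≤ 4
      · exact linked_of_card_le hC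
      refine linked_of_erase (e := s(φ u, φ v)) ?_ (by convert hT.linked)
      have hsub : conf A id s(φ u, φ v) ⊆ ((A.filter (φ u ∈ ·)).erase s(φ u, φ v)) ∪
          ((A.filter (φ v ∈ ·)).erase s(φ u, φ v)) := by
        intro e' he'
        simp only [conf, id, Finset.mem_filter] at he'
        obtain ⟨h1, h2, w, h3, h4⟩ := he'
        rcases Sym2.mem_iff.1 h3 with rfl | rfl
        · exact Finset.mem_union_left _ (Finset.mem_erase.2 ⟨h2, Finset.mem_filter.2 ⟨h1, h4⟩⟩)
        · exact Finset.mem_union_right _ (Finset.mem_erase.2 ⟨h2, Finset.mem_filter.2 ⟨h1, h4⟩⟩)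
      have h1 := Finset.card_erase_of_mem (s := A.filter (φ u ∈ ·)) (a := s(φ u, φ v))
        (Finset.mem_filter.2 ⟨he, by simp⟩)
      have h2 := Finset.card_erase_of_mem (s := A.filter (φ v ∈ ·)) (a := s(φ u, φ v))
        (Finset.mem_filter.2 ⟨he, by simp⟩)
      have h3 : (A.filter (φ u ∈ ·)).card ≤ 3 := (h.dg_le hφ u).trans hu
      have h4 : (A.filter (φ v ∈ ·)).card ≤ 3 := (h.dg_le hφ v).trans hv
      have := (Finset.card_le_card hsub).trans (Finset.card_union_le _ _)
      omega
    · exact (hT.mono fun e h => Finset.mem_erase.2 ⟨by rintro rfl; exact he h, h⟩).linked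
end Good

/-! ### Decomposition into blocks -/

section Blocks
open Classical
variable [Fintype V] (G : SimpleGraph V) (C : Finset ℕ)

/-- The edges of `G` inside `U`. -/
noncomputable def edIn (U : Set V) : Finset (Sym2 V) := (ed G).filter fun e => ∀ v ∈ e, v ∈ U

variable {G C}

lemma mem_edIn {U : Set V} {u v : V} : s(u, v) ∈ edIn G U ↔ G.Adj u v ∧ u ∈ U ∧ v ∈ U := by
  simp [edIn, mem_ed]

/-- A separation of order at most one of `G[U]`. -/
lemma linked_split {U U₁ U₂ : Set V} (x : V) (h₁ : U₁ ⊆ U) (h₂ : U₂ ⊆ U)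
    (hx : U₁ ∩ U₂ ⊆ {x}) (hU : ∀ u ∈ U, ∀ v ∈ U, G.Adj u v → (u ∈ U₁ ∧ v ∈ U₁) ∨ (u ∈ U₂ ∧ v ∈ U₂))
    (l₁ : Linked (edIn G U₁) id C) (l₂ : Linked (edIn G U₂) id C) : Linked (edIn G U) id C := by
  refine Glued.linked (A₁ := edIn G U₁) (A₂ := edIn G U₂) (x := x) ⟨?_, ?_, ?_⟩ l₁ l₂
  · ext e
    induction e using Sym2.ind with
    | _ u v =>
      simp only [Finset.mem_union, mem_edIn]
      constructor
      · rintro (⟨a, b, c⟩ | ⟨a, b, c⟩)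
        · exact ⟨a, h₁ b, h₁ c⟩
        · exact ⟨a, h₂ b, h₂ c⟩
      · rintro ⟨a, b, c⟩
        have := hU u b v c a
        tauto
  · rw [Finset.disjoint_left]
    intro e
    induction e using Sym2.ind with
    | _ u v =>
      rw [mem_edIn, mem_edIn]
      rintro ⟨a, b, c⟩ ⟨-, b', c'⟩
      have k1 : u = x := hx ⟨b, b'⟩
      have k2 : v = x := hx ⟨c, c'⟩
      exact a.ne (k1.trans k2.symm)
  · intro e₁ he₁ e₂ he₂ v hv hv'
    exact hx ⟨(Finset.mem_filter.1 he₁).2 v hv, (Finset.mem_filter.1 he₂).2 v hv'⟩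

/-- Linkedness of a graph follows from goodness of its blocks. -/
lemma linked_of_blocks (hB : ∀ B : G.Subgraph, IsBlock G B → Good B.coe) :
    ∀ (n : ℕ) (U : Set V), U.ncard = n → Linked (edIn G U) id C := by
  intro n
  induction n using Nat.strong_induction_on with
  | _ n ih =>
  intro U hn
  have hrec : ∀ U' ⊆ U, ∀ y ∈ U, y ∉ U' → Linked (edIn G U') id C := by
    intro U' hU' y hy hy'
    refine ih _ ?_ U' rfl
    rw [← hn]
    exact Set.ncard_lt_ncard ⟨hU', fun h => hy' (h hy)⟩
  rcases U.eq_empty_or_nonempty with rfl | ⟨u₀, hu₀⟩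
  · intro f g hf hg
    refine (Step.of_agree hf fun e he => ?_).eqv
    induction e using Sym2.ind with
    | _ u v => exact absurd (mem_edIn.1 he).2.1 (by simp)
  -- If `G[U]` is connected without a cutvertex, it is contained in a block; otherwise it splits.
  let K : G.Subgraph := (⊤ : G.Subgraph).induce U
  have Kadj : ∀ u v : K.verts, K.coe.Adj u v ↔ G.Adj u v := by
    rintro ⟨u, hu⟩ ⟨v, hv⟩
    have hu : u ∈ U := hu
    have hv : v ∈ U := hv
    simp [K, hu, hv]
  by_cases hc : K.coe.Connected
  swap
  · -- a component of `G[U]` and the rest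
    have : Nonempty K.verts := ⟨⟨u₀, hu₀⟩⟩
    have : ¬ K.coe.Preconnected := fun h => hc ⟨h⟩
    unfold SimpleGraph.Preconnected at this
    push Not at this
    obtain ⟨a, b, hab⟩ := this
    let R : Set V := {u | ∃ h : u ∈ U, K.coe.Reachable a ⟨u, h⟩}
    have hR : R ⊆ U := fun u hu => hu.1
    refine linked_split (U₁ := R) (U₂ := U \ R) a.1 hR Set.sdiff_subset ?_ ?_
      (hrec _ hR b.1 b.2 fun h => hab h.2)
      (hrec _ Set.sdiff_subset a.1 a.2 fun h => h.2 ⟨a.2, SimpleGraph.Reachable.refl _⟩)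
    · rintro u ⟨h1, h2⟩; exact absurd h1 h2.2
    · intro u hu v hv huv
      have key : ∀ u (hu : u ∈ U) v (hv : v ∈ U), G.Adj u v → u ∈ R → v ∈ R := by
        intro u hu v hv huv hr
        exact ⟨hv, hr.2.trans (((Kadj ⟨u, hu⟩ ⟨v, hv⟩).2 huv).reachable)⟩
      by_cases h1 : u ∈ R
      · exact Or.inl ⟨h1, key u hu v hv huv h1⟩
      · exact Or.inr ⟨⟨hu, h1⟩, hv, fun h => h1 (key v hv u hu huv.symm h)⟩
  by_cases hcut : ∃ x, IsCutVertex K.coe x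
  · obtain ⟨x, a, b, ha, hb, -, hw⟩ := hcut
    let R : Set V := {u | ∃ h : u ∈ U, ∃ p : K.coe.Walk a ⟨u, h⟩, x ∉ p.support}
    have hR : R ⊆ U := fun u hu => hu.1
    have hxR : x.1 ∉ R := fun ⟨_, p, hp⟩ => hp p.end_mem_support
    have hbR : b.1 ∉ R := fun ⟨_, p, hp⟩ => hp (hw p)
    have haR : a.1 ∈ R := ⟨a.2, SimpleGraph.Walk.nil, by simpa using ha.symm⟩
    have key : ∀ u (hu : u ∈ U) v (hv : v ∈ U), G.Adj u v → u ∈ R → v ∈ insert x.1 R := by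
      rintro u hu v hv huv ⟨_, p, hp⟩
      by_cases hvx : v = x.1
      · exact Or.inl hvx
      refine Or.inr ⟨hv, p.concat ((Kadj ⟨u, hu⟩ ⟨v, hv⟩).2 huv), ?_⟩
      rw [SimpleGraph.Walk.support_concat]
      simp only [List.mem_append, List.mem_singleton, not_or]
      exact ⟨hp, fun h => hvx (by rw [h])⟩
    refine linked_split (U₁ := insert x.1 R) (U₂ := U \ R) x.1 ?_ Set.sdiff_subset ?_ ?_
      (hrec _ ?_ b.1 b.2 ?_) (hrec _ Set.sdiff_subset a.1 a.2 fun h => h.2 haR)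
    · exact Set.insert_subset x.2 hR
    · rintro u ⟨h1 | h1, h2⟩
      · exact h1
      · exact absurd h1 h2.2
    · intro u hu v hv huv
      by_cases h1 : u ∈ R
      · exact Or.inl ⟨Or.inr h1, key u hu v hv huv h1⟩
      · by_cases h2 : v ∈ R
        · exact Or.inl ⟨key v hv u hu huv.symm h2, Or.inr h2⟩
        · exact Or.inr ⟨⟨hu, h1⟩, hv, h2⟩
    · exact Set.insert_subset x.2 hR
    · rintro (h | h)
      · exact hb (Subtype.ext h)
      · exact hbR h
  · push Not at hcut
    obtain ⟨B, hKB, hBm⟩ := Set.Finite.exists_le_maximal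
      (s := {B : G.Subgraph | B.coe.Connected ∧ ∀ x, ¬ IsCutVertex B.coe x})
      (Set.toFinite _) (a := K) ⟨hc, hcut⟩
    have hblock : IsBlock G B := by
      refine ⟨hBm.1.1, hBm.1.2, fun B' h1 h2 h3 => ?_⟩
      exact le_antisymm (hBm.2 ⟨h2, h3⟩ h1) h1
    refine Covers.linked (H := B.coe) (φ := Subtype.val) Subtype.val_injective ?_ (hB B hblock) C
    intro e he
    induction e using Sym2.ind with
    | _ u v =>
      obtain ⟨h1, h2, h3⟩ := mem_edIn.1 he
      have : K.Adj u v := by simp [K, h1, h2, h3]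
      have hBa := hKB.2 this
      exact ⟨⟨u, hBa.fst_mem⟩, ⟨v, hBa.snd_mem⟩, hBa, rfl⟩

end Blocks

/-! ### The edge chromatic transformation index -/

section Reduction
open Classical
variable [Fintype V] {G : SimpleGraph V} {t : ℕ}

lemma pc_iff {f : Sym2 V → ℕ} : IsProperEdgeColoring G t f ↔ PC (ed G) id (Finset.Icc 1 t) f := by
  unfold IsProperEdgeColoring PC
  simp only [mem_ed, id]
  refine and_congr Iff.rfl ⟨fun h e he e' he' hne v hv hv' => h e he e' he' hne ⟨v, hv, hv'⟩,
    fun h e he e' he' hne ⟨v, hv, hv'⟩ => h e he e' he' hne v hv hv'⟩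

lemma step_differ {f g : Sym2 V → ℕ} {C : Finset ℕ} (h : Step (ed G) id C f g) :
    DifferAtMost G 4 f g := by
  obtain ⟨-, -, S, -, hS, hfg⟩ := h
  unfold DifferAtMost
  refine (Set.ncard_le_ncard (t := (S : Set ℕ)) ?_).trans (by rwa [Set.ncard_coe_finset])
  intro j hj
  by_contra hjS
  refine hj ?_
  ext e
  simp only [colorClass, Set.mem_ofPred_eq, ← mem_ed]
  refine and_congr_right fun he => ?_
  rcases hfg e he with k | ⟨k, k'⟩
  · rw [k]
  · constructor
    · rintro rfl; exact absurd k hjS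
    · rintro rfl; exact absurd k' hjS

lemma nequiv_of_eqv {f g : Sym2 V → ℕ} (h : Eqv (ed G) id (Finset.Icc 1 t) f g)
    (hf : IsProperEdgeColoring G t f) : NEquiv G t 4 f g := by
  induction h with
  | refl =>
    refine ⟨1, fun _ => f, le_rfl, rfl, rfl, fun _ _ => hf, fun _ _ => ?_⟩
    simp [DifferAtMost]
  | @tail g g' _ h2 ih =>
    obtain ⟨k, F, hk, h0, hkg, hp, hd⟩ := ih
    refine ⟨k + 1, fun i => if i ≤ k then F i else g', by omega, by simpa using h0, by simp, ?_, ?_⟩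
    · intro i hi
      by_cases hik : i ≤ k
      · simpa [hik] using hp i hik
      · simpa [hik] using pc_iff.2 h2.2.1
    · intro i hi
      by_cases hik : i + 1 ≤ k
      · simpa [hik, (show i ≤ k by omega)] using hd i hik
      · obtain rfl : i = k := by omega
        simpa [hkg] using step_differ h2

/-- The conclusion of the theorem holds when every block is good. -/
lemma main_of_good (hB : ∀ B : G.Subgraph, IsBlock G B → Good B.coe) :
    transIdx G ≤ 4 ∧
    ∀ f g, IsProperEdgeColoring G (chromIdx G) f → IsProperEdgeColoring G (chromIdx G) g →
      NEquiv G (chromIdx G) 4 f g := by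
  have key : ∀ f g, IsProperEdgeColoring G (chromIdx G) f →
      IsProperEdgeColoring G (chromIdx G) g → NEquiv G (chromIdx G) 4 f g := by
    intro f g hf hg
    have hL := linked_of_blocks (C := Finset.Icc 1 (chromIdx G)) hB _ Set.univ rfl
    have : edIn G Set.univ = ed G := by simp [edIn]
    rw [this] at hL
    exact nequiv_of_eqv (hL f g (pc_iff.1 hf) (pc_iff.1 hg)) hf
  exact ⟨Nat.sInf_le ⟨by norm_num, key⟩, key⟩

end Reduction

/-! ### Paths and cycles; chordless graphs -/

section Cycles
variable {G : SimpleGraph V} {n : ℕ} {w : ℕ → V}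

/-- The first `n + 1` terms of `w` form a path. -/
structure Pth (G : SimpleGraph V) (n : ℕ) (w : ℕ → V) : Prop where
  adj : ∀ i < n, G.Adj (w i) (w (i + 1))
  inj : ∀ i ≤ n, ∀ j ≤ n, w i = w j → i = j

/-- The `n`-periodic sequence `w` runs around a cycle of length `n`. -/
structure Cyc (G : SimpleGraph V) (n : ℕ) (w : ℕ → V) : Prop where
  three : 3 ≤ n
  adj : ∀ i, G.Adj (w i) (w (i + 1))
  per : ∀ i, w (i + n) = w i
  inj : ∀ i < n, ∀ j < n, w i = w j → i = j

lemma Cyc.mod (h : Cyc G n w) (i : ℕ) : w (i % n) = w i := by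
  have : ∀ k i, w (i + n * k) = w i := by
    intro k
    induction k with
    | zero => simp
    | succ k ih => intro i; rw [Nat.mul_succ, ← Nat.add_assoc, h.per, ih]
  conv_rhs => rw [← Nat.mod_add_div i n]
  rw [this]

lemma Cyc.rot (h : Cyc G n w) (k : ℕ) : Cyc G n (fun i => w (i + k)) where
  three := h.three
  adj i := by have := h.adj (i + k); rwa [show i + k + 1 = i + 1 + k by omega] at this
  per i := by rw [show i + n + k = i + k + n by omega, h.per]
  inj i hi j hj hij := by
    have h3 := h.three
    simp only [← h.mod (i + k), ← h.mod (j + k)] at hij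
    have := h.inj _ (Nat.mod_lt _ (by omega)) _ (Nat.mod_lt _ (by omega)) hij
    have h2 : i ≡ j [MOD n] := Nat.ModEq.add_right_cancel' k this
    rwa [Nat.ModEq, Nat.mod_eq_of_lt hi, Nat.mod_eq_of_lt hj] at h2

lemma Cyc.exists_lt (h : Cyc G n w) (i : ℕ) : ∃ j < n, w j = w i :=
  ⟨i % n, Nat.mod_lt _ (by have := h.three; omega), h.mod i⟩

/-- A path whose ends are adjacent closes to a cycle. -/
lemma Pth.close (h : Pth G n w) (hn : 2 ≤ n) (hadj : G.Adj (w n) (w 0)) :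
    Cyc G (n + 1) (fun i => w (i % (n + 1))) where
  three := by omega
  adj i := by
    have hlt : i % (n + 1) < n + 1 := Nat.mod_lt _ (by omega)
    by_cases hi : i % (n + 1) = n
    · have : (i + 1) % (n + 1) = 0 := by rw [Nat.add_mod, hi]; simp
      simpa [hi, this] using hadj
    · have : (i + 1) % (n + 1) = i % (n + 1) + 1 := by
        rw [Nat.add_mod, Nat.mod_eq_of_lt (show 1 < n + 1 by omega), Nat.mod_eq_of_lt (by omega)]
      simpa [this] using h.adj (i % (n + 1)) (by omega)
  per i := by simp
  inj i hi j hj hij := by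
    simp only [Nat.mod_eq_of_lt hi, Nat.mod_eq_of_lt hj] at hij
    exact h.inj i (by omega) j (by omega) hij

lemma Pth.toWalk (h : Pth G n w) : ∀ k ≤ n, ∃ p : G.Walk (w 0) (w k), p.IsPath ∧ p.length = k ∧
    (∀ x, x ∈ p.support ↔ ∃ i ≤ k, w i = x) ∧ ∀ e, e ∈ p.edges ↔ ∃ i < k, s(w i, w (i + 1)) = e := by
  intro k
  induction k with
  | zero => exact fun _ => ⟨Walk.nil, by simp, rfl, by simp [eq_comm], by simp⟩
  | succ k ih =>
    intro hk
    obtain ⟨p, h1, h2, h3, h4⟩ := ih (by omega)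
    refine ⟨p.concat (h.adj k (by omega)), h1.concat ?_ _, by simp [h2], fun x => ?_, fun e => ?_⟩
    · rw [h3]
      rintro ⟨i, hi, hik⟩
      have := h.inj i (by omega) (k + 1) hk hik
      omega
    · rw [Walk.support_concat, List.mem_append, h3, List.mem_singleton]
      constructor
      · rintro (⟨i, hi, rfl⟩ | rfl)
        · exact ⟨i, by omega, rfl⟩
        · exact ⟨k + 1, le_rfl, rfl⟩
      · rintro ⟨i, hi, rfl⟩
        rcases Nat.lt_or_ge i (k + 1) with h | h
        · exact Or.inl ⟨i, by omega, rfl⟩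
        · right; congr 1; omega
    · rw [Walk.edges_concat, List.concat_eq_append, List.mem_append, h4, List.mem_singleton]
      constructor
      · rintro (⟨i, hi, rfl⟩ | rfl)
        · exact ⟨i, by omega, rfl⟩
        · exact ⟨k, by omega, rfl⟩
      · rintro ⟨i, hi, rfl⟩
        rcases Nat.lt_or_ge i k with h | h
        · exact Or.inl ⟨i, h, rfl⟩
        · right; rw [show i = k by omega]

/-- A cycle in the sequence encoding is a cycle in the sense of walks. -/
lemma Cyc.toWalk (h : Cyc G n w) : ∃ (x : V) (c : G.Walk x x), c.IsCycle ∧ c.length = n ∧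
    (∀ x, x ∈ c.support ↔ ∃ i < n, w i = x) ∧
    ∀ e, e ∈ c.edges ↔ ∃ i < n, s(w i, w (i + 1)) = e := by
  obtain ⟨m, rfl⟩ : ∃ m, n = m + 1 := ⟨n - 1, by have := h.three; omega⟩
  have h3 := h.three
  have hp : Pth G m w := ⟨fun i _ => h.adj i, fun i hi j hj => h.inj i (by omega) j (by omega)⟩
  obtain ⟨p, h1, h2, h4, h5⟩ := hp.toWalk m le_rfl
  have h0 : w (m + 1) = w 0 := by simpa using h.per 0
  have hadj : G.Adj (w m) (w 0) := h0 ▸ h.adj m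
  refine ⟨w m, Walk.cons hadj p, ?_, by simp [h2], fun x => ?_, fun e => ?_⟩
  · rw [Walk.cons_isCycle_iff]
    refine ⟨h1, fun hm => ?_⟩
    obtain ⟨i, hi, he⟩ := (h5 _).1 hm
    rcases Sym2.eq_iff.1 he with ⟨k1, k2⟩ | ⟨k1, k2⟩
    · have := h.inj i (by omega) m (by omega) k1; omega
    · have := h.inj i (by omega) 0 (by omega) k1
      have := h.inj (i + 1) (by omega) m (by omega) k2; omega
  · rw [Walk.support_cons, List.mem_cons, h4]
    constructor
    · rintro (rfl | ⟨i, hi, rfl⟩)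
      · exact ⟨m, by omega, rfl⟩
      · exact ⟨i, by omega, rfl⟩
    · rintro ⟨i, hi, rfl⟩
      exact Or.inr ⟨i, by omega, rfl⟩
  · rw [Walk.edges_cons, List.mem_cons, h5]
    constructor
    · rintro (rfl | ⟨i, hi, rfl⟩)
      · exact ⟨m, by omega, by rw [h0]⟩
      · exact ⟨i, by omega, rfl⟩
    · rintro ⟨i, hi, rfl⟩
      rcases Nat.lt_or_ge i m with k | k
      · exact Or.inr ⟨i, k, rfl⟩
      · left; rw [show i = m by omega, h0]

/-- Adding a vertex in front of a path. -/
lemma Pth.cons (h : Pth G n w) {u : V} (hu : G.Adj u (w 0)) (hne : ∀ i ≤ n, w i ≠ u) :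
    Pth G (n + 1) (fun i => if i = 0 then u else w (i - 1)) where
  adj i hi := by
    rcases i with _ | i
    · simpa using hu
    · simpa using h.adj i (by omega)
  inj i hi j hj hij := by
    rcases i with _ | i <;> rcases j with _ | j
    · rfl
    · simp only [if_true, Nat.succ_ne_zero, if_false, Nat.add_sub_cancel] at hij
      exact absurd hij.symm (hne j (by omega))
    · simp only [if_true, Nat.succ_ne_zero, if_false, Nat.add_sub_cancel] at hij
      exact absurd hij (hne i (by omega))
    · simp only [Nat.succ_ne_zero, if_false, Nat.add_sub_cancel] at hij
      have := h.inj i (by omega) j (by omega) hij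
      omega

lemma Pth.rev (h : Pth G n w) : Pth G n (fun i => w (n - i)) where
  adj i hi := by
    have := (h.adj (n - (i + 1)) (by omega)).symm
    rwa [show n - (i + 1) + 1 = n - i by omega] at this
  inj i hi j hj hij := by
    have := h.inj (n - i) (by omega) (n - j) (by omega) hij
    omega

lemma Pth.mono (h : Pth G n w) {m : ℕ} (hm : m ≤ n) : Pth G m w :=
  ⟨fun i hi => h.adj i (by omega), fun i hi j hj => h.inj i (by omega) j (by omega)⟩

lemma Pth.lt_card [Finite V] (h : Pth G n w) : n < Nat.card V := by
  have := Nat.card_le_card_of_injective (fun i : Fin (n + 1) => w i) fun i j hij =>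
    Fin.ext (h.inj i (by omega) j (by omega) hij)
  simpa using this

/-- A path of maximal length in a vertex set. -/
lemma exists_longest [Finite V] {S : Set V} (hS : S.Nonempty) :
    ∃ n w, Pth G n w ∧ (∀ i ≤ n, w i ∈ S) ∧
      ∀ m w', Pth G m w' → (∀ i ≤ m, w' i ∈ S) → m ≤ n := by
  classical
  let P : ℕ → Prop := fun n => ∃ w, Pth G n w ∧ ∀ i ≤ n, w i ∈ S
  obtain ⟨s, hs⟩ := hS
  have h0 : P 0 := ⟨fun _ => s, ⟨by simp, by intro i hi j hj _; omega⟩, fun _ _ => hs⟩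
  obtain ⟨w, h1, h2⟩ := Nat.findGreatest_spec (P := P) (Nat.zero_le (Nat.card V)) h0
  exact ⟨_, w, h1, h2, fun m w' hm hm' => Nat.le_findGreatest hm.lt_card.le ⟨w', hm, hm'⟩⟩

/-- The neighbours, within the given set, of the initial vertex of a longest path lie on it:
otherwise the path could be prolonged. -/
lemma Pth.nbr_mem {S : Set V} (h : Pth G n w) (hS : ∀ i ≤ n, w i ∈ S)
    (hmax : ∀ m w', Pth G m w' → (∀ i ≤ m, w' i ∈ S) → m ≤ n) {u : V} (hu : u ∈ S)
    (hadj : G.Adj (w 0) u) : ∃ i, 1 ≤ i ∧ i ≤ n ∧ w i = u := by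
  by_contra hc
  push Not at hc
  have hne : ∀ i ≤ n, w i ≠ u := by
    intro i hi
    by_cases h0 : i = 0
    · subst h0; exact hadj.ne
    · exact hc i (by omega) hi
  have := hmax _ _ (h.cons hadj.symm hne) (by
    intro i hi
    rcases i with _ | i
    · simpa using hu
    · simpa using hS i (by omega))
  omega

/-- There is a cycle in `S`. -/
def HasCyc (G : SimpleGraph V) (S : Set V) : Prop := ∃ n w, Cyc G n w ∧ ∀ i, w i ∈ S

/-- A vertex set in which all vertices but possibly one have two neighbours contains a cycle. -/
lemma hasCyc_of_dense [Finite V] {S : Set V} (r : V) (hS : ∃ s ∈ S, s ≠ r)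
    (hd : ∀ s ∈ S, s ≠ r → 2 ≤ {u | u ∈ S ∧ G.Adj s u}.ncard) : HasCyc G S := by
  obtain ⟨s, hs, hsr⟩ := hS
  obtain ⟨n, w, hw, hwS, hmax⟩ := exists_longest (G := G) ⟨s, hs⟩
  have main : ∀ w, Pth G n w → (∀ i ≤ n, w i ∈ S) → w 0 ≠ r → HasCyc G S := by
    intro w hw hwS h0
    obtain ⟨a, ha, b, hb, hab⟩ := (Set.one_lt_ncard (Set.toFinite _)).1 (hd _ (hwS 0 (by omega)) h0)
    obtain ⟨i, hi1, hi2, rfl⟩ := hw.nbr_mem hwS hmax ha.1 ha.2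
    obtain ⟨j, hj1, hj2, rfl⟩ := hw.nbr_mem hwS hmax hb.1 hb.2
    have key : ∀ k, 2 ≤ k → k ≤ n → G.Adj (w 0) (w k) → HasCyc G S := fun k h2 hk hadj =>
      ⟨_, _, (hw.mono hk).close h2 hadj.symm, fun i =>
        hwS _ ((Nat.lt_succ_iff.1 (Nat.mod_lt _ (by omega))).trans hk)⟩
    by_cases h2 : 2 ≤ i
    · exact key i h2 hi2 ha.2
    · refine key j ?_ hj2 hb.2
      by_contra h3
      exact hab (by rw [show i = 1 by omega, show j = 1 by omega])
  by_cases h0 : w 0 = r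
  · refine main _ hw.rev (fun i hi => hwS _ (by omega)) ?_
    intro h1
    simp only [Nat.sub_zero] at h1
    have hn : n = 0 := by
      have := hw.inj 0 (by omega) n le_rfl (h0.trans h1.symm)
      omega
    obtain ⟨a, ha, -⟩ := (Set.one_lt_ncard (Set.toFinite _)).1 (hd s hs hsr)
    have := hmax 1 (fun i => if i = 0 then s else a) ⟨fun i hi => by
        obtain rfl : i = 0 := by omega
        simpa using ha.2, fun i hi j hj hij => by
        interval_cases i <;> interval_cases j <;> simp_all⟩ (fun i hi => by
        split_ifs
        · exact hs
        · exact ha.1)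
    omega
  · exact main w hw hwS h0

/-- Negation of `TD`: a vertex set inducing a subgraph of minimum degree at least three. -/
def Dense (G : SimpleGraph V) (S : Set V) : Prop :=
  S.Nonempty ∧ ∀ s ∈ S, 3 ≤ {u | u ∈ S ∧ G.Adj s u}.ncard

lemma td_of_not_dense (h : ∀ S, ¬ Dense G S) : TD G := by
  intro S hS
  by_contra hc
  push Not at hc
  exact h S ⟨hS, hc⟩

/-- In a vertex set of minimum degree three, the first vertex of a longest path has three neighbours
on the path. The one farthest along the path closes a cycle, in which the edge to the middle one is
a chord. -/
lemma td_of_chordless [Finite V] (hG : Chordless G) : TD G := by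
  refine td_of_not_dense fun S ⟨hS, hd⟩ => ?_
  obtain ⟨n, w, hw, hwS, hmax⟩ := exists_longest (G := G) hS
  obtain ⟨a, b, c, ha, hb, hc, hab, hac, hbc⟩ :=
    (Set.two_lt_ncard_iff (Set.toFinite _)).1 (hd _ (hwS 0 (by omega)))
  obtain ⟨i, hi1, hi2, rfl⟩ := hw.nbr_mem hwS hmax ha.1 ha.2
  obtain ⟨j, hj1, hj2, rfl⟩ := hw.nbr_mem hwS hmax hb.1 hb.2
  obtain ⟨k, hk1, hk2, rfl⟩ := hw.nbr_mem hwS hmax hc.1 hc.2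
  have key : ∀ j k, 2 ≤ j → j < k → k ≤ n → G.Adj (w 0) (w j) → G.Adj (w 0) (w k) → False := by
    intro j k hj hjk hk h1 h2
    have hC := (hw.mono hk).close (by omega) h2.symm
    obtain ⟨x, p, hp, -, hsup, hed⟩ := hC.toWalk
    have hch := hG x p hp (w 0) ((hsup _).2 ⟨0, by omega, by simp⟩) (w j)
      ((hsup _).2 ⟨j, by omega, by rw [Nat.mod_eq_of_lt (by omega)]⟩) h1
    obtain ⟨i, hi, he⟩ := (hed _).1 hch
    rw [Nat.mod_eq_of_lt hi] at he
    have hjeq := fun l (hl : l ≤ k) => hw.inj l (by omega) j (by omega)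
    rcases Nat.lt_or_ge i k with hik | hik
    · rw [Nat.mod_eq_of_lt (by omega)] at he
      rcases Sym2.eq_iff.1 he with ⟨k1, k2⟩ | ⟨k1, k2⟩
      · have := hw.inj i (by omega) 0 (by omega) k1
        have := hw.inj (i + 1) (by omega) j (by omega) k2
        omega
      · have := hw.inj (i + 1) (by omega) 0 (by omega) k2
        omega
    · rw [show i = k by omega, Nat.mod_self] at he
      rcases Sym2.eq_iff.1 he with ⟨k1, k2⟩ | ⟨k1, k2⟩
      · have := hw.inj k (by omega) 0 (by omega) k1
        omega
      · have := hw.inj k (by omega) j (by omega) k1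
        omega
  have hij : i ≠ j := fun h => hab (by rw [h])
  have hik : i ≠ k := fun h => hac (by rw [h])
  have hjk : j ≠ k := fun h => hbc (by rw [h])
  have key' : ∀ j k, 2 ≤ j → 2 ≤ k → j ≠ k → j ≤ n → k ≤ n → G.Adj (w 0) (w j) →
      G.Adj (w 0) (w k) → False := by
    intro j k h1 h2 h3 h4 h5 h6 h7
    rcases Nat.lt_or_ge j k with h | h
    · exact key j k h1 h h5 h6 h7
    · exact key k j h2 (by omega) h4 h7 h6
  by_cases i2 : 2 ≤ i
  · by_cases j2 : 2 ≤ j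
    · exact key' i j i2 j2 hij hi2 hj2 ha.2 hb.2
    · exact key' i k i2 (by omega) hik hi2 hk2 ha.2 hc.2
  · exact key' j k (by omega) (by omega) hjk hj2 hk2 hb.2 hc.2

end Cycles

/-! ### A `K₄` minor in graphs of minimum degree three -/

section Minors
variable {G : SimpleGraph V} {n : ℕ} {w : ℕ → V}

/-- `S` induces a connected subgraph. -/
abbrev Conn (G : SimpleGraph V) (S : Set V) : Prop := (G.induce S).Connected

lemma conn_singleton (v : V) : Conn G {v} := by
  have : Subsingleton ({v} : Set V) := by simp
  have : Nonempty ({v} : Set V) := ⟨⟨v, rfl⟩⟩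
  exact ⟨SimpleGraph.Preconnected.of_subsingleton⟩

lemma Conn.union {S T : Set V} (hS : Conn G S) (hT : Conn G T) {s t : V} (hs : s ∈ S) (ht : t ∈ T)
    (h : G.Adj s t) : Conn G (S ∪ T) :=
  connected_induce_union hS.preconnected hT.preconnected hs ht h

lemma Conn.insert {S : Set V} (hS : Conn G S) {s t : V} (hs : s ∈ S) (h : G.Adj s t) :
    Conn G (insert t S) := by
  rw [← Set.union_singleton]
  exact hS.union (conn_singleton t) hs rfl h

lemma conn_interval (h : ∀ i, G.Adj (w i) (w (i + 1))) (a b : ℕ) (hab : a < b) :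
    Conn G (w '' Set.Ico a b) := by
  induction b, hab using Nat.le_induction with
  | base => rw [show Set.Ico a a.succ = {a} by ext; simp; omega, Set.image_singleton]
            exact conn_singleton _
  | succ b hb ih =>
    have : Set.Ico a (b + 1) = insert b (Set.Ico a b) := by
      ext x; simp only [Set.mem_Ico, Set.mem_insert_iff]; omega
    rw [this, Set.image_insert_eq]
    refine ih.insert (s := w (b - 1)) ⟨b - 1, ⟨by omega, by omega⟩, rfl⟩ ?_
    have := h (b - 1)
    rwa [show b - 1 + 1 = b by omega] at this

lemma Cyc.disj (h : Cyc G n w) {a b c d : ℕ} (hbc : b ≤ c) (hd : d ≤ n) :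
    Disjoint (w '' Set.Ico a b) (w '' Set.Ico c d) := by
  rw [Set.disjoint_left]
  rintro _ ⟨i, ⟨hi1, hi2⟩, rfl⟩ ⟨j, ⟨hj1, hj2⟩, hij⟩
  have := h.inj j (by omega) i (by omega) hij
  omega

/-- Two vertex sets joined by an edge. -/
def Touch (G : SimpleGraph V) (S T : Set V) : Prop := ∃ s ∈ S, ∃ t ∈ T, G.Adj s t

lemma Touch.symm {S T : Set V} (h : Touch G S T) : Touch G T S := by
  obtain ⟨s, hs, t, ht, h⟩ := h
  exact ⟨t, ht, s, hs, h.symm⟩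

/-- Branch sets of a `K_k` minor, with the conditions on pairs stated for `i < j` only. -/
lemma minor_complete {k : ℕ} (F : Fin k → Set V) (hc : ∀ i, Conn G (F i))
    (hd : ∀ i j, i < j → Disjoint (F i) (F j)) (ht : ∀ i j, i < j → Touch G (F i) (F j)) :
    HasMinor G (completeGraph (Fin k)) := by
  refine ⟨F, hc, fun i j hij => ?_, fun i j hij => ?_⟩
  · rcases lt_or_gt_of_ne hij with h | h
    · exact hd i j h
    · exact (hd j i h).symm
  · have hij : i ≠ j := hij
    rcases lt_or_gt_of_ne hij with h | h
    · exact ht i j h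
    · exact (ht j i h).symm

lemma minor_K4 {A B C D : Set V} (cA : Conn G A) (cB : Conn G B) (cC : Conn G C) (cD : Conn G D)
    (dAB : Disjoint A B) (dAC : Disjoint A C) (dAD : Disjoint A D) (dBC : Disjoint B C)
    (dBD : Disjoint B D) (dCD : Disjoint C D) (tAB : Touch G A B) (tAC : Touch G A C)
    (tAD : Touch G A D) (tBC : Touch G B C) (tBD : Touch G B D) (tCD : Touch G C D) :
    HasMinor G (completeGraph (Fin 4)) := by
  refine minor_complete ![A, B, C, D] ?_ ?_ ?_
  · intro i; fin_cases i <;> assumption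
  · intro i j; fin_cases i <;> fin_cases j <;> intro h <;> first | assumption | simp at h
  · intro i j; fin_cases i <;> fin_cases j <;> intro h <;> first | assumption | simp at h

/-- Dirac's theorem: minimum degree at least three forces a `K₄` minor. -/
lemma minor_K4_of_dense [Finite V] : ∀ (k : ℕ) (S : Set V), S.ncard = k → Dense G S →
    HasMinor G (completeGraph (Fin 4)) := by
  intro k
  induction k using Nat.strong_induction_on with
  | _ k ih =>
  intro S hk ⟨hS, hd⟩
  obtain ⟨v, hv⟩ := hS
  have h1 : HasCyc G (S \ {v}) := by
    refine hasCyc_of_dense v ?_ fun s hs hsv => ?_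
    · obtain ⟨a, ha, -⟩ := (Set.one_lt_ncard (Set.toFinite _)).1
        (lt_of_lt_of_le (by norm_num) (hd v hv))
      exact ⟨a, ⟨ha.1, ha.2.ne'⟩, ha.2.ne'⟩
    · have h2 : {u | u ∈ S ∧ G.Adj s u} ⊆ insert v {u | u ∈ S \ {v} ∧ G.Adj s u} := by
        rintro u ⟨h1, h2⟩
        by_cases h : u = v
        · exact Or.inl h
        · exact Or.inr ⟨⟨h1, h⟩, h2⟩
      have h3 := (Set.ncard_le_ncard h2 (Set.toFinite _)).trans (Set.ncard_insert_le _ _)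
      have := hd s hs.1
      omega
  -- `D` is a maximal connected set such that `S \ D` contains a cycle `w`, and `N` is the set of
  -- its neighbours in `S \ D`; by maximality no `p ∈ N` can be added to `D`
  obtain ⟨D, -, hDm⟩ := Set.Finite.exists_le_maximal
    (s := {D : Set V | D ⊆ S ∧ Conn G D ∧ HasCyc G (S \ D)}) (Set.toFinite _) (a := {v})
    ⟨by simpa using hv, conn_singleton v, h1⟩
  obtain ⟨hDS, hDc, n, w, hw, hwS⟩ := hDm.1
  obtain ⟨⟨d₀, hd₀⟩⟩ := hDc.nonempty
  let N : Set V := {p | p ∈ S \ D ∧ ∃ d ∈ D, G.Adj d p}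
  have hN : ∀ p ∈ N, ¬ HasCyc G (S \ insert p D) := by
    rintro p ⟨⟨h1, h2⟩, d, hd, hdp⟩ hc
    exact h2 (hDm.2 (y := insert p D) ⟨Set.insert_subset h1 hDS, hDc.insert hd hdp, hc⟩
      (Set.subset_insert _ _) (Set.mem_insert _ _))
  -- if `D` has no neighbours then `S \ D` is again of minimum degree three
  by_cases hN0 : N.Nonempty
  swap
  · refine ih _ ?_ (S \ D) rfl ⟨⟨w 0, hwS 0⟩, fun s hs => ?_⟩
    · rw [← hk]
      exact Set.ncard_lt_ncard ⟨Set.sdiff_subset, fun h => (h (hDS hd₀)).2 hd₀⟩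
    · refine (hd s hs.1).trans (Set.ncard_le_ncard ?_ (Set.toFinite _))
      rintro u ⟨hu1, hu2⟩
      exact ⟨⟨hu1, fun hu => hN0 ⟨s, hs, u, hu, hu2.symm⟩⟩, hu2⟩
  obtain ⟨p₁, hp₁⟩ := hN0
  -- `D` has three neighbours: with only `p₁` and `q`, all vertices but `q` of `S \ D` other than
  -- `p₁` would keep two neighbours after the removal of `p₁`, so a cycle would survive
  have hmore : ∀ q, ∃ p ∈ N, p ≠ p₁ ∧ p ≠ q := by
    intro q
    by_contra hcon
    push Not at hcon
    refine hN p₁ hp₁ (hasCyc_of_dense q ?_ fun s hs hsq => ?_)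
    · by_contra hc
      push Not at hc
      have hc' : ∀ i, w i = p₁ ∨ w i = q := by
        intro i
        by_cases h : w i = p₁
        · exact Or.inl h
        · exact Or.inr (hc _ ⟨(hwS i).1, fun k => k.elim h (hwS i).2⟩)
      have h3 := hw.three
      have n01 : w 0 ≠ w 1 := fun h => by have := hw.inj 0 (by omega) 1 (by omega) h; omega
      have n02 : w 0 ≠ w 2 := fun h => by have := hw.inj 0 (by omega) 2 (by omega) h; omega
      have n12 : w 1 ≠ w 2 := fun h => by have := hw.inj 1 (by omega) 2 (by omega) h; omega
      rcases hc' 0 with h | h <;> rcases hc' 1 with h' | h' <;> rcases hc' 2 with h'' | h'' <;>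
        simp_all
    · have hsN : s ∉ N := fun h => hsq (hcon s h fun h => hs.2 (Or.inl h))
      have h2 : {u | u ∈ S ∧ G.Adj s u} ⊆ insert p₁ {u | u ∈ S \ insert p₁ D ∧ G.Adj s u} := by
        rintro u ⟨h1, h2⟩
        by_cases h : u = p₁
        · exact Or.inl h
        · refine Or.inr ⟨⟨h1, ?_⟩, h2⟩
          rintro (k | k)
          · exact h k
          · exact hsN ⟨⟨hs.1, fun h => hs.2 (Or.inr h)⟩, u, k, h2.symm⟩
      have h3 := (Set.ncard_le_ncard h2 (Set.toFinite _)).trans (Set.ncard_insert_le _ _)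
      have := hd s hs.1
      omega
  obtain ⟨p₂, hp₂, h21, -⟩ := hmore p₁
  obtain ⟨p₃, hp₃, h31, h32⟩ := hmore p₂
  -- every neighbour of `D` lies on `w`, as `w` would survive the removal of any other vertex
  have hon : ∀ p ∈ N, ∃ i, w i = p := by
    intro p hp
    by_contra hc
    push Not at hc
    refine hN p hp ⟨n, w, hw, fun i => ⟨(hwS i).1, ?_⟩⟩
    rintro (k | k)
    · exact hc i k
    · exact (hwS i).2 k
  obtain ⟨i₁, rfl⟩ := hon p₁ hp₁
  have hw' := hw.rot i₁
  have hwS' : ∀ i, w (i + i₁) ∈ S \ D := fun i => hwS _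
  have hon' : ∀ p ∈ N, ∃ i < n, w (i + i₁) = p := by
    intro p hp
    obtain ⟨j, rfl⟩ := hon p hp
    obtain ⟨k, hk, hkj⟩ := hw'.exists_lt (j + (n - 1) * i₁)
    refine ⟨k, hk, hkj.trans ?_⟩
    have h3 := hw.three
    rw [← hw.mod, show j + (n - 1) * i₁ + i₁ = j + n * i₁ by
      obtain ⟨m, rfl⟩ : ∃ m, n = m + 1 := ⟨n - 1, by omega⟩
      simp; ring, Nat.add_mul_mod_self_left, hw.mod]
  -- the branch sets are `D` and three arcs of the cycle, each starting at a neighbour of `D`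
  have key : ∀ i j, 0 < i → i < j → j < n → w (i + i₁) ∈ N → w (j + i₁) ∈ N →
      HasMinor G (completeGraph (Fin 4)) := by
    intro i j hi hij hj hiN hjN
    have dD : ∀ a b, Disjoint D ((fun i => w (i + i₁)) '' Set.Ico a b) := by
      intro a b
      rw [Set.disjoint_left]
      rintro _ hx ⟨l, -, rfl⟩
      exact (hwS' l).2 hx
    have tD : ∀ a b c, a ≤ c → c < b → w (c + i₁) ∈ N →
        Touch G D ((fun i => w (i + i₁)) '' Set.Ico a b) := by
      rintro a b c hac hcb ⟨-, d, hd, hdc⟩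
      exact ⟨d, hd, _, ⟨c, ⟨hac, hcb⟩, rfl⟩, hdc⟩
    have tw : ∀ a b c, a < b → b < c → Touch G ((fun i => w (i + i₁)) '' Set.Ico a b)
        ((fun i => w (i + i₁)) '' Set.Ico b c) := by
      intro a b c hab hbc
      refine ⟨_, ⟨b - 1, ⟨by omega, by omega⟩, rfl⟩, _, ⟨b, ⟨le_rfl, hbc⟩, rfl⟩, ?_⟩
      have := hw'.adj (b - 1)
      rwa [show b - 1 + 1 = b by omega] at this
    refine minor_K4 hDc (conn_interval hw'.adj 0 i hi) (conn_interval hw'.adj i j hij)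
      (conn_interval hw'.adj j n hj) (dD _ _) (dD _ _) (dD _ _) (hw'.disj le_rfl (by omega))
      (hw'.disj (by omega) le_rfl) (hw'.disj le_rfl le_rfl) (tD 0 i 0 le_rfl hi (by simpa using hp₁))
      (tD i j i le_rfl hij hiN) (tD j n j le_rfl hj hjN) (tw 0 i j hi hij) ?_ (tw i j n hij hj)
    refine ⟨_, ⟨0, ⟨le_rfl, hi⟩, rfl⟩, _, ⟨n - 1, ⟨by omega, by omega⟩, rfl⟩, ?_⟩
    have := hw'.adj (n - 1)
    rw [show n - 1 + 1 = 0 + n by omega] at this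
    rw [show 0 + n + i₁ = 0 + i₁ + n by omega, hw.per] at this
    exact this.symm
  obtain ⟨i, hi, rfl⟩ := hon' p₂ hp₂
  obtain ⟨j, hj, rfl⟩ := hon' p₃ hp₃
  have hi0 : i ≠ 0 := by rintro rfl; simp at h21
  have hj0 : j ≠ 0 := by rintro rfl; simp at h31
  have hij : j ≠ i := by rintro rfl; exact h32 rfl
  rcases Nat.lt_or_ge i j with h | h
  · exact key i j (by omega) h hj hp₂ hp₃
  · exact key j i (by omega) (by omega) hi hp₃ hp₂

lemma td_of_seriesParallel [Finite V] (hG : SeriesParallel G) : TD G :=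
  td_of_not_dense fun S hS => hG (minor_K4_of_dense _ S rfl hS)

end Minors

/-! ### The cycle space over `𝔽₂` and abstract duals -/

section Chains
variable {G : SimpleGraph V}

/-- A connected set has an edge across each of its nontrivial bipartitions. -/
lemma conn_cut {S D : Set V} (hS : Conn G S) (hD : D ⊆ S) (h0 : D.Nonempty) (h1 : (S \ D).Nonempty) :
    ∃ a ∈ D, ∃ b ∈ S \ D, G.Adj a b := by
  by_contra hc
  push Not at hc
  obtain ⟨a, ha⟩ := h0
  obtain ⟨b, hb⟩ := h1
  obtain ⟨p⟩ := hS.preconnected ⟨a, hD ha⟩ ⟨b, hb.1⟩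
  have : ∀ (x y : S), (G.induce S).Walk x y → x.1 ∈ D → y.1 ∈ D := by
    intro x y q
    induction q with
    | nil => exact id
    | @cons u v w huv _ ih =>
      intro hu
      exact ih (by_contra fun hv => hc _ hu _ ⟨v.2, hv⟩ huv)
  exact hb.2 (this _ _ p ha)

/-- A set with an edge across each of its nontrivial bipartitions is connected. -/
lemma conn_of_cut {S : Set V} (h0 : S.Nonempty)
    (h : ∀ D ⊆ S, D.Nonempty → (S \ D).Nonempty → ∃ a ∈ D, ∃ b ∈ S \ D, G.Adj a b) : Conn G S := by
  obtain ⟨s, hs⟩ := h0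
  have : Nonempty S := ⟨⟨s, hs⟩⟩
  have key : ∀ t : S, (G.induce S).Reachable ⟨s, hs⟩ t := by
    by_contra hc
    push Not at hc
    obtain ⟨t, ht⟩ := hc
    obtain ⟨a, ⟨ha, ha'⟩, b, hb, hab⟩ := h {x | ∃ hx : x ∈ S, (G.induce S).Reachable ⟨s, hs⟩ ⟨x, hx⟩}
      (fun x hx => hx.1) ⟨s, hs, Reachable.refl _⟩ ⟨t.1, t.2, fun k => ht k.2⟩
    exact hb.2 ⟨hb.1, ha'.trans (Adj.reachable (by simpa using hab))⟩
  exact ⟨fun x y => (key x).symm.trans (key y)⟩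

lemma Conn.exists_adj {S : Set V} (hS : Conn G S) {a b : V} (ha : a ∈ S) (hb : b ∈ S) (hab : a ≠ b) :
    ∃ c ∈ S, c ≠ a ∧ G.Adj a c := by
  obtain ⟨x, rfl, c, hc, h⟩ := conn_cut (D := {a}) hS (by simpa using ha) ⟨a, rfl⟩ ⟨b, hb, hab.symm⟩
  exact ⟨c, hc.1, hc.2, h⟩

variable [Fintype V]

/-- The boundary of a chain of edges modulo two. -/
def bdry (p : Sym2 V → ZMod 2) (v : V) : ZMod 2 := ∑ u, p s(v, u)

/-- The elements of the cycle space of `G` over `𝔽₂`. -/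
def IsZ (G : SimpleGraph V) (p : Sym2 V → ZMod 2) : Prop :=
  (∀ e, p e ≠ 0 → e ∈ G.edgeSet) ∧ ∀ v, bdry p v = 0

open Classical in
/-- The indicator of a single edge. -/
noncomputable def sg (a b : V) : Sym2 V → ZMod 2 := fun e => if e = s(a, b) then 1 else 0

open Classical in
/-- The indicator of a vertex. -/
noncomputable def dl (a : V) : V → ZMod 2 := fun v => if v = a then 1 else 0

lemma z2 (x : ZMod 2) : x = 0 ∨ x = 1 := by revert x; decide

lemma z2_add (x : ZMod 2) : x + x = 0 := by revert x; decide

lemma bdry_add (p q : Sym2 V → ZMod 2) (v : V) : bdry (p + q) v = bdry p v + bdry q v := by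
  simp [bdry, Finset.sum_add_distrib]

lemma bdry_sg {a b : V} (hab : a ≠ b) (v : V) : bdry (sg a b) v = dl a v + dl b v := by
  classical
  simp only [bdry, sg, dl]
  by_cases ha : v = a
  · subst ha
    rw [Finset.sum_eq_single b]
    · simp [hab]
    · intro u _ hu
      rw [if_neg]
      rw [Sym2.eq_iff]
      rintro (⟨-, h⟩ | ⟨h, -⟩)
      · exact hu h
      · exact hab h
    · simp
  · by_cases hb : v = b
    · subst hb
      rw [Finset.sum_eq_single a]
      · simp [hab.symm, Sym2.eq_swap]
      · intro u _ hu
        rw [if_neg]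
        rw [Sym2.eq_iff]
        rintro (⟨h, -⟩ | ⟨-, h⟩)
        · exact ha h
        · exact hu h
      · simp
    · rw [Finset.sum_eq_zero]
      · simp [ha, hb]
      · intro u _
        rw [if_neg]
        rw [Sym2.eq_iff]
        rintro (⟨h, -⟩ | ⟨h, -⟩)
        · exact ha h
        · exact hb h

lemma IsZ.add {p q : Sym2 V → ZMod 2} (hp : IsZ G p) (hq : IsZ G q) : IsZ G (p + q) := by
  refine ⟨fun e he => ?_, fun v => by rw [bdry_add, hp.2, hq.2, add_zero]⟩
  by_contra hc
  have h1 : p e = 0 := by_contra fun h => hc (hp.1 e h)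
  have h2 : q e = 0 := by_contra fun h => hc (hq.1 e h)
  exact he (by simp [h1, h2])

lemma IsZ.mono {H : SimpleGraph V} {p : Sym2 V → ZMod 2} (hp : IsZ G p)
    (h : ∀ e, p e ≠ 0 → e ∈ H.edgeSet) : IsZ H p := ⟨h, hp.2⟩

lemma add_ne_zero_or {p q : Sym2 V → ZMod 2} {e : Sym2 V} (h : (p + q) e ≠ 0) : p e ≠ 0 ∨ q e ≠ 0 := by
  by_contra hc
  push Not at hc
  exact h (by simp [hc.1, hc.2])

lemma sg_ne {a b : V} {e : Sym2 V} (h : sg a b e ≠ 0) : e = s(a, b) := by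
  by_contra hc
  exact h (by simp [sg, hc])

@[simp] lemma sg_self (a b : V) : sg a b s(a, b) = 1 := by simp [sg]

@[simp] lemma dl_self (a : V) : dl a a = 1 := by simp [dl]

lemma dl_ne {a v : V} (h : v ≠ a) : dl a v = 0 := by simp [dl, h]

lemma sg_of_ne {a b : V} {e : Sym2 V} (h : e ≠ s(a, b)) : sg a b e = 0 := by simp [sg, h]

/-- In a connected vertex set any two vertices bound a chain. -/
lemma exists_chain {S : Set V} (hS : Conn G S) {a b : V} (ha : a ∈ S) (hb : b ∈ S) :
    ∃ p : Sym2 V → ZMod 2, (∀ e, p e ≠ 0 → e ∈ G.edgeSet ∧ ∀ v ∈ e, v ∈ S) ∧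
      ∀ v, bdry p v = dl a v + dl b v := by
  by_contra hc
  obtain ⟨c, ⟨hcS, p, hp1, hp2⟩, d, hd, hcd⟩ := conn_cut (D := {b | b ∈ S ∧ ∃ p : Sym2 V → ZMod 2,
    (∀ e, p e ≠ 0 → e ∈ G.edgeSet ∧ ∀ v ∈ e, v ∈ S) ∧ ∀ v, bdry p v = dl a v + dl b v}) hS
    (fun x hx => hx.1) ⟨a, ha, 0, by simp, fun v => by simp [bdry, z2_add]⟩ ⟨b, hb, fun h => hc h.2⟩
  refine hd.2 ⟨hd.1, p + sg c d, fun e he => ?_, fun v => ?_⟩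
  · rcases add_ne_zero_or he with h | h
    · exact hp1 e h
    · rw [sg_ne h]
      refine ⟨hcd, fun v hv => ?_⟩
      rcases Sym2.mem_iff.1 hv with rfl | rfl
      · exact hcS
      · exact hd.1
  · rw [bdry_add, hp2, bdry_sg hcd.ne]
    linear_combination z2_add (dl c v)

/-- If exactly one edge at `v` is in the chain, then `v` is in its boundary. -/
lemma bdry_one {p : Sym2 V → ZMod 2} {v a : V} (h1 : p s(v, a) = 1) (h2 : ∀ b, b ≠ a → p s(v, b) = 0) :
    bdry p v = 1 := by
  rw [bdry, Finset.sum_eq_single a (fun b _ hb => h2 b hb) (by simp), h1]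

/-- Every nonzero element of the cycle space contains a cycle. -/
lemma IsZ.exists_cyc {p : Sym2 V → ZMod 2} (hp : IsZ G p) (h0 : p ≠ 0) :
    ∃ n w, Cyc G n w ∧ ∀ i, p s(w i, w (i + 1)) ≠ 0 := by
  classical
  let K : SimpleGraph V :=
    { Adj := fun a b => p s(a, b) ≠ 0
      symm := ⟨fun a b h => by rwa [Sym2.eq_swap]⟩
      loopless := ⟨fun a h => by simpa using hp.1 _ h⟩ }
  obtain ⟨e, he⟩ := Function.ne_iff.1 h0
  induction e using Sym2.ind with
  | _ a b =>
  have hK : HasCyc K {x | ∃ y, K.Adj x y} := by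
    refine hasCyc_of_dense b ⟨a, ⟨b, he⟩, fun h => ?_⟩ fun s ⟨t, hst⟩ _ => ?_
    · subst h; simpa using hp.1 _ he
    · by_contra hc
      have hsub : ∀ u, u ≠ t → p s(s, u) = 0 := by
        intro u hu
        by_contra h
        refine hc ((Set.one_lt_ncard (Set.toFinite _)).2 ⟨u, ⟨⟨s, SimpleGraph.Adj.symm (G := K) h⟩, h⟩, t, ⟨⟨s, hst.symm⟩, hst⟩, hu⟩)
      have := bdry_one ((z2 _).resolve_left hst) hsub
      rw [hp.2] at this
      exact zero_ne_one this
  obtain ⟨n, w, hw, -⟩ := hK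
  exact ⟨n, w, ⟨hw.three, fun i => hp.1 _ (hw.adj i), hw.per, hw.inj⟩, hw.adj⟩

/-- The chain of the walk `w a, w (a + 1), …, w b`. -/
noncomputable def vec (w : ℕ → V) (a b : ℕ) : Sym2 V → ZMod 2 :=
  ∑ i ∈ Finset.Ico a b, sg (w i) (w (i + 1))

lemma bdry_zero (v : V) : bdry (0 : Sym2 V → ZMod 2) v = 0 := by simp [bdry]

lemma vec_succ (w : ℕ → V) {a b : ℕ} (h : a ≤ b) : vec w a (b + 1) = vec w a b + sg (w b) (w (b + 1)) := by
  rw [vec, Finset.sum_Ico_succ_top h]; rfl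

lemma vec_add (w : ℕ → V) {a b c : ℕ} (h : a ≤ b) (h' : b ≤ c) : vec w a c = vec w a b + vec w b c :=
  (Finset.sum_Ico_consecutive _ h h').symm

lemma bdry_vec {w : ℕ → V} (hw : ∀ i, w i ≠ w (i + 1)) {a b : ℕ} (h : a ≤ b) (v : V) :
    bdry (vec w a b) v = dl (w a) v + dl (w b) v := by
  induction b, h using Nat.le_induction with
  | base => simp [vec, bdry_zero, z2_add]
  | succ b hb ih =>
    rw [vec_succ w hb, bdry_add, ih, bdry_sg (hw b)]
    linear_combination z2_add (dl (w b) v)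

lemma vec_ne {w : ℕ → V} {a b : ℕ} {e : Sym2 V} (h : vec w a b e ≠ 0) :
    ∃ i, a ≤ i ∧ i < b ∧ e = s(w i, w (i + 1)) := by
  rw [vec, Finset.sum_apply] at h
  obtain ⟨i, hi, h⟩ := Finset.exists_ne_zero_of_sum_ne_zero h
  rw [Finset.mem_Ico] at hi
  exact ⟨i, hi.1, hi.2, sg_ne h⟩

lemma Cyc.edge_inj {n : ℕ} {w : ℕ → V} (h : Cyc G n w) {i j : ℕ} (hi : i < n) (hj : j < n)
    (he : s(w i, w (i + 1)) = s(w j, w (j + 1))) : i = j := by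
  have h3 := h.three
  rcases Sym2.eq_iff.1 he with ⟨k, -⟩ | ⟨k1, k2⟩
  · exact h.inj i hi j hj k
  · have key : ∀ i < n, ∀ j < n, w (i + 1) = w j → i + 1 = j ∨ (j = 0 ∧ i + 1 = n) := by
      intro i hi j hj hij
      rcases Nat.lt_or_ge (i + 1) n with h' | h'
      · exact Or.inl (h.inj _ h' _ hj hij)
      · right
        have : i + 1 = 0 + n := by omega
        rw [this, h.per] at hij
        exact ⟨(h.inj 0 (by omega) j hj hij).symm, by omega⟩
    have h1 := key i hi j hj k2
    have h2 := key j hj i hi k1.symm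
    omega

lemma Cyc.vec_edge {n : ℕ} {w : ℕ → V} (h : Cyc G n w) {a b i : ℕ} (ha : a ≤ i) (hb : i < b) (hn : b ≤ n) :
    vec w a b s(w i, w (i + 1)) = 1 := by
  rw [vec, Finset.sum_apply, Finset.sum_eq_single i]
  · simp
  · intro j hj hji
    rw [Finset.mem_Ico] at hj
    exact sg_of_ne fun he => hji (h.edge_inj (by omega) (by omega) he).symm
  · intro hc
    exact absurd (Finset.mem_Ico.2 ⟨ha, hb⟩) hc

/-- The edges of a cycle form an element of the cycle space. -/
lemma Cyc.isZ {n : ℕ} {w : ℕ → V} (h : Cyc G n w) : IsZ G (vec w 0 n) := by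
  refine ⟨fun e he => ?_, fun v => ?_⟩
  · obtain ⟨i, -, -, rfl⟩ := vec_ne he
    exact h.adj i
  · rw [bdry_vec (fun i => (h.adj i).ne) (Nat.zero_le _)]
    have := h.per 0
    rw [Nat.zero_add] at this
    rw [this, z2_add]

open Classical in
/-- The chain of those edges whose two sides `l e`, `r e` are distinguished by `h`. For
`h = Pi.single c 1` it is the boundary of the face `c`. -/
noncomputable def bd (G : SimpleGraph V) (l r : Sym2 V → ℕ) (h : ℕ → ZMod 2) : Sym2 V → ZMod 2 :=
  fun e => if e ∈ G.edgeSet then h (l e) + h (r e) else 0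

/-- An abstract dual of `G`: each edge `e` has two sides `l e` and `r e` (its ends in the dual
multigraph, whose vertices are labelled by natural numbers), and the cycle space of `G` is the
cut space of the dual. -/
def Dual (G : SimpleGraph V) (l r : Sym2 V → ℕ) : Prop :=
  ∀ p, IsZ G p ↔ ∃ h, p = bd G l r h

lemma bd_mem {l r : Sym2 V → ℕ} {h : ℕ → ZMod 2} {e : Sym2 V} (he : e ∈ G.edgeSet) :
    bd G l r h e = h (l e) + h (r e) := by simp [bd, he]

lemma bd_add {l r : Sym2 V → ℕ} (h g : ℕ → ZMod 2) :
    bd G l r (h + g) = bd G l r h + bd G l r g := by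
  funext e
  by_cases he : e ∈ G.edgeSet
  · simp only [bd, he, if_true, Pi.add_apply]; ring
  · simp [bd, he]

lemma Dual.isZ {l r : Sym2 V → ℕ} (hD : Dual G l r) (h : ℕ → ZMod 2) : IsZ G (bd G l r h) :=
  (hD _).2 ⟨h, rfl⟩

lemma bd_one {l r : Sym2 V → ℕ} : bd G l r (fun _ => 1) = 0 := by
  funext e
  simp [bd, z2_add]

/-- The potential of a cycle space element can be chosen to vanish on a given face. -/
lemma Dual.exists_zero {l r : Sym2 V → ℕ} (hD : Dual G l r) {p : Sym2 V → ZMod 2} (hp : IsZ G p)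
    (c : ℕ) : ∃ h, h c = 0 ∧ p = bd G l r h := by
  obtain ⟨h, rfl⟩ := (hD p).1 hp
  rcases z2 (h c) with h0 | h0
  · exact ⟨h, h0, rfl⟩
  · refine ⟨h + fun _ => 1, ?_, by rw [bd_add, bd_one, add_zero]⟩
    simp [h0, z2_add]

end Chains

/-! ### Inserting edges and stars into a face -/

section Split
variable [Fintype V] {G : SimpleGraph V} {l r : Sym2 V → ℕ}

/-- A graph with trivial cycle space has a one-vertex dual. -/
lemma dual_of_acyclic (h : ∀ p, IsZ G p → p = 0) : Dual G (fun _ => 0) (fun _ => 0) := by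
  intro p
  have hb : ∀ h, bd G (fun _ => 0) (fun _ => 0) h = 0 := fun h => by
    funext e; simp [bd, z2_add]
  constructor
  · intro hp
    exact ⟨0, by rw [hb, h p hp]⟩
  · rintro ⟨g, rfl⟩
    rw [hb]
    exact ⟨by simp, bdry_zero⟩

/-- Adding a pendant edge `x a`: its two sides are the same face `c`. -/
lemma Dual.pendant (hD : Dual G l r) {G' : SimpleGraph V} {x a : V}
    (hx : ∀ u, ¬ G.Adj x u) (hG' : ∀ u v, G'.Adj u v ↔ G.Adj u v ∨ s(u, v) = s(x, a)) (c : ℕ) :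
    ∃ l' r', Dual G' l' r' ∧ l' s(x, a) = c ∧ r' s(x, a) = c ∧
      (∀ e, e ≠ s(x, a) → l' e = l e ∧ r' e = r e) ∧ ∀ h, bd G' l' r' h = bd G l r h := by
  classical
  have hE : ∀ e, e ∈ G'.edgeSet ↔ e ∈ G.edgeSet ∨ e = s(x, a) := by
    intro e; induction e using Sym2.ind with | _ u v => exact hG' u v
  have hne : s(x, a) ∉ G.edgeSet := hx a
  let l' : Sym2 V → ℕ := fun e => if e = s(x, a) then c else l e
  let r' : Sym2 V → ℕ := fun e => if e = s(x, a) then c else r e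
  have hb : ∀ h, bd G' l' r' h = bd G l r h := by
    intro h
    funext e
    by_cases he : e = s(x, a)
    · subst he
      simp [bd, l', r', hx a, z2_add]
    · simp [bd, l', r', he, hE]
  refine ⟨l', r', ?_, by simp [l'], by simp [r'], fun e he => by simp [l', r', he], hb⟩
  intro p
  simp only [hb]
  rw [← hD p]
  refine ⟨fun hp => hp.mono fun e he => ?_, fun hp => hp.mono fun e he => (hE e).2 (Or.inl (hp.1 e he))⟩
  rcases (hE e).1 (hp.1 e he) with h | rfl
  · exact h
  · exfalso
    have := bdry_one ((z2 _).resolve_left he) fun b hb => by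
      by_contra h
      rcases (hG' _ _).1 (hp.1 _ h) with k | k
      · exact hx _ k
      · rw [Sym2.congr_right] at k
        exact hb k
    rw [hp.2] at this
    exact zero_ne_one this

/-- Adding an edge `x a` that splits the face `c`: the part `P` of the boundary of `c` closes up
with the new edge to a cycle, which bounds a new face. -/
lemma Dual.split (hD : Dual G l r) {G' : SimpleGraph V} {x a : V} (hne : ¬ G.Adj x a)
    (hG' : ∀ u v, G'.Adj u v ↔ G.Adj u v ∨ s(u, v) = s(x, a)) (c : ℕ)
    {P : Sym2 V → ZMod 2} (hP : IsZ G' (P + sg x a)) (hPe : ∀ e, P e ≠ 0 → e ∈ G.edgeSet)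
    (hPc : ∀ e, P e ≠ 0 → l e = c ∨ r e = c) :
    ∃ l' r', Dual G' l' r' ∧ bd G' l' r' (Pi.single c 1) = bd G l r (Pi.single c 1) + (P + sg x a) := by
  classical
  have hE : ∀ e, e ∈ G'.edgeSet ↔ e ∈ G.edgeSet ∨ e = s(x, a) := by
    intro e; induction e using Sym2.ind with | _ u v => exact hG' u v
  have hne : s(x, a) ∉ G.edgeSet := hne
  -- The part `P` of the boundary of `c` and the edge `x a` bound the new face `N`; the label `c` is
  -- kept for the other part.
  -- `N` is a face label that is not in use.
  obtain ⟨N, hN⟩ : ∃ N, ∀ m ∈ insert c (Set.range l ∪ Set.range r), m < N := by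
    obtain ⟨N, hN⟩ := (Set.toFinite (insert c (Set.range l ∪ Set.range r))).bddAbove
    exact ⟨N + 1, fun m hm => Nat.lt_succ_of_le (hN hm)⟩
  have hc : c ≠ N := (hN c (Or.inl rfl)).ne
  have hl : ∀ e, l e ≠ N := fun e => (hN _ (Or.inr (Or.inl ⟨e, rfl⟩))).ne
  have hr : ∀ e, r e ≠ N := fun e => (hN _ (Or.inr (Or.inr ⟨e, rfl⟩))).ne
  let l' : Sym2 V → ℕ := fun e => if e = s(x, a) then N else if P e ≠ 0 ∧ l e = c then N else l e
  let r' : Sym2 V → ℕ := fun e => if e = s(x, a) then c else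
    if P e ≠ 0 ∧ l e ≠ c ∧ r e = c then N else r e
  have hPx : P s(x, a) = 0 := by_contra fun h => hne (hPe _ h)
  have hb : ∀ h : ℕ → ZMod 2, bd G' l' r' h = bd G l r h + (h N + h c) • (P + sg x a) := by
    intro h
    funext e
    by_cases he : e = s(x, a)
    · subst he
      have h1 : bd G l r h s(x, a) = 0 := by rw [bd, if_neg hne]
      rw [Pi.add_apply, h1, bd_mem ((hE _).2 (Or.inr rfl))]
      simp [l', r', hPx]
    · rw [Pi.add_apply, Pi.smul_apply, Pi.add_apply, sg_of_ne he]
      by_cases hg : e ∈ G.edgeSet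
      · rw [bd_mem hg, bd_mem ((hE _).2 (Or.inl hg))]
        rcases z2 (P e) with h0 | h0
        · simp [l', r', he, h0]
        · by_cases hlc : l e = c
          · simp only [l', r', he, h0, hlc]
            simp
            linear_combination -z2_add (h c)
          · have hrc := (hPc e (by rw [h0]; exact one_ne_zero)).resolve_left hlc
            simp only [l', r', he, h0, hlc, hrc]
            simp [hlc]
            linear_combination -z2_add (h c)
      · have h1 : P e = 0 := by_contra fun k => hg (hPe e k)
        have h2 : e ∉ G'.edgeSet := fun k => ((hE e).1 k).elim hg he
        simp [bd, hg, h2, h1]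
  refine ⟨l', r', fun p => ⟨fun hp => ?_, ?_⟩, ?_⟩
  · have hq : IsZ G (p + p s(x, a) • (P + sg x a)) := by
      have h1 : IsZ G' (p + p s(x, a) • (P + sg x a)) := by
        rcases z2 (p s(x, a)) with h | h
        · rw [h, zero_smul, add_zero]; exact hp
        · rw [h, one_smul]; exact hp.add hP
      refine h1.mono fun e he => ?_
      rcases (hE e).1 (h1.1 e he) with k | rfl
      · exact k
      · exfalso
        apply he
        simp [hPx, z2_add]
    obtain ⟨h, hh⟩ := (hD _).1 hq
    refine ⟨fun i => if i = N then h c + p s(x, a) else h i, ?_⟩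
    rw [hb]
    have h1 : bd G l r (fun i => if i = N then h c + p s(x, a) else h i) = bd G l r h := by
      funext e
      simp [bd, hl, hr]
    rw [h1, ← hh]
    have h2 : h c + p s(x, a) + h c = p s(x, a) := by linear_combination z2_add (h c)
    simp only [if_true, hc, if_false, h2]
    rw [add_assoc, ← add_smul, z2_add, zero_smul, add_zero]
  · rintro ⟨h, rfl⟩
    rw [hb]
    have h1 : IsZ G' (bd G l r h) := (hD.isZ h).mono fun e he =>
      (hE e).2 (Or.inl ((hD.isZ h).1 e he))
    rcases z2 (h N + h c) with k | k
    · rw [k, zero_smul, add_zero]; exact h1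
    · rw [k, one_smul]; exact h1.add hP
  · rw [hb]
    simp [hc.symm]

/-- The chain of a sector: `x`, then along `w` from `a` to `n`, then back to `x`. -/
noncomputable def fan (x : V) (w : ℕ → V) (a n : ℕ) : Sym2 V → ZMod 2 :=
  sg x (w a) + vec w a n + sg x (w n)

lemma sg_comm (a b : V) : (sg a b : Sym2 V → ZMod 2) = sg b a := by
  have h : s(a, b) = s(b, a) := Sym2.eq_swap
  unfold sg
  rw [h]

lemma chain_add (p : Sym2 V → ZMod 2) : p + p = 0 := by
  funext e; exact z2_add _

/-- Star insertion: a new vertex `x` inside a face bounded by the cycle `w` is joined to `w 0`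
and to some further vertices `w j`, `j ∈ J`. The last sector is a face of the new graph. -/
lemma Dual.star (hD : Dual G l r) {c n : ℕ} {w : ℕ → V} (hw : Cyc G n w)
    (hc : bd G l r (Pi.single c 1) = vec w 0 n) {x : V} (hx : ∀ u, ¬ G.Adj x u) (J : Set ℕ) :
    ∀ m < n, ∀ G' : SimpleGraph V, (∀ u v, G'.Adj u v ↔ G.Adj u v ∨
        ∃ j ≤ m, (j = 0 ∨ j ∈ J) ∧ s(u, v) = s(x, w j)) →
      ∃ l' r' j, Dual G' l' r' ∧ j ≤ m ∧ (j = 0 ∨ j ∈ J) ∧ (∀ i ∈ J, i ≤ m → i ≤ j) ∧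
        bd G' l' r' (Pi.single c 1) = fan x w j n ∧
        ∀ e, e ∈ G'.edgeSet → (vec w j n e ≠ 0 ∨ e = s(x, w j)) → l' e = c ∨ r' e = c := by
  classical
  have hxw : ∀ i, x ≠ w i := fun i h => hx _ (h ▸ hw.adj i)
  have hwn : w n = w 0 := by simpa using hw.per 0
  have hloop : ∀ {G : SimpleGraph V} {l r : Sym2 V → ℕ} {e : Sym2 V},
      bd G l r (Pi.single c 1) e ≠ 0 → l e = c ∨ r e = c := by
    intro G l r e he
    by_contra hh
    push Not at hh
    apply he
    simp [bd, hh.1, hh.2]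
  intro m
  induction m with
  | zero =>
    intro _ G' hG'
    obtain ⟨l', r', h1, h2, h3, h4, h5⟩ := hD.pendant (G' := G') (a := w 0) hx (fun u v => by
      rw [hG']; simp) c
    refine ⟨l', r', 0, h1, le_rfl, Or.inl rfl, fun i _ hi => hi, ?_, ?_⟩
    · rw [h5, hc, fan, hwn]
      rw [add_right_comm, chain_add, zero_add]
    · intro e _ he'
      rcases he' with he' | rfl
      · apply hloop (G := G') 
        rw [h5, hc]; exact he'
      · exact Or.inl h2
  | succ m ih =>
    intro hm G' hG'
    let G1 : SimpleGraph V := SimpleGraph.fromRel fun u v => G.Adj u v ∨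
        ∃ j ≤ m, (j = 0 ∨ j ∈ J) ∧ s(u, v) = s(x, w j)
    have hG1 : ∀ u v, G1.Adj u v ↔ G.Adj u v ∨ ∃ j ≤ m, (j = 0 ∨ j ∈ J) ∧ s(u, v) = s(x, w j) := by
      intro u v
      simp only [G1, SimpleGraph.fromRel_adj]
      constructor
      · rintro ⟨-, (h | h) | h⟩
        · exact Or.inl h
        · exact Or.inr h
        · rw [G.adj_comm, Sym2.eq_swap] at h; exact h
      · intro h
        refine ⟨?_, Or.inl h⟩
        rcases h with h | ⟨j, -, -, h⟩
        · exact h.ne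
        · rintro rfl
          have := hxw j
          rw [Sym2.eq_iff] at h
          grind
    obtain ⟨l1, r1, j, h1, h2, h3, h4, h5, h6⟩ := ih (by omega) G1 hG1
    -- If `m + 1 ∈ J`, the new spoke splits the current last sector, cut off by the spoke to `w j`,
    -- along the path from `x` through `w j` to `w (m + 1)`.
    by_cases hJ : m + 1 ∈ J
    swap
    · have : G' = G1 := by
        ext u v
        rw [hG', hG1]
        refine or_congr_right ⟨?_, ?_⟩
        · rintro ⟨j, k1, k2, k3⟩
          refine ⟨j, ?_, k2, k3⟩
          by_contra hh
          obtain rfl : j = m + 1 := by omega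
          exact k2.elim (by omega) hJ
        · rintro ⟨j, k1, k2, k3⟩
          exact ⟨j, by omega, k2, k3⟩
      subst this
      exact ⟨l1, r1, j, h1, by omega, h3, fun i hi hi' => h4 i hi (by
        by_contra hh
        obtain rfl : i = m + 1 := by omega
        exact hJ hi), h5, h6⟩
    have hadj : ¬ G1.Adj x (w (m + 1)) := by
      rw [hG1]
      rintro (h | ⟨i, hi, -, h⟩)
      · exact hx _ h
      · rw [Sym2.congr_right] at h
        have := hw.inj _ hm _ (by omega) h
        omega
    have hG'1 : ∀ u v, G'.Adj u v ↔ G1.Adj u v ∨ s(u, v) = s(x, w (m + 1)) := by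
      intro u v
      rw [hG', hG1, or_assoc]
      refine or_congr_right ⟨?_, ?_⟩
      · rintro ⟨i, k1, k2, k3⟩
        rcases Nat.lt_or_ge m i with h | h
        · obtain rfl : i = m + 1 := by omega
          exact Or.inr k3
        · exact Or.inl ⟨i, h, k2, k3⟩
      · rintro (⟨i, k1, k2, k3⟩ | k3)
        · exact ⟨i, by omega, k2, k3⟩
        · exact ⟨m + 1, le_rfl, Or.inr hJ, k3⟩
    have hxj : G1.Adj x (w j) := (hG1 _ _).2 (Or.inr ⟨j, h2, h3, rfl⟩)
    have hww : ∀ i, w i ≠ w (i + 1) := fun i => (hw.adj i).ne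
    have hPe : ∀ e, (sg x (w j) + vec w j (m + 1)) e ≠ 0 → e ∈ G1.edgeSet := by
      intro e he
      rcases add_ne_zero_or he with h | h
      · rw [sg_ne h]; exact hxj
      · obtain ⟨i, -, -, rfl⟩ := vec_ne h
        exact (hG1 _ _).2 (Or.inl (hw.adj i))
    obtain ⟨l', r', k1, k2⟩ := h1.split hadj hG'1 c (P := sg x (w j) + vec w j (m + 1)) (by
      refine ⟨fun e he => ?_, fun v => ?_⟩
      · rcases add_ne_zero_or he with h | h
        · have := hPe e h
          induction e using Sym2.ind with | _ u v => exact (hG'1 _ _).2 (Or.inl this)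
        · rw [sg_ne h]; exact (hG'1 _ _).2 (Or.inr rfl)
      · rw [bdry_add, bdry_add, bdry_sg (hxw _), bdry_sg (hxw _), bdry_vec hww (by omega)]
        linear_combination z2_add (dl x v) + z2_add (dl (w j) v) + z2_add (dl (w (m + 1)) v)) hPe (by
      intro e he
      refine h6 e (hPe e he) ?_
      rcases add_ne_zero_or he with h | h
      · exact Or.inr (sg_ne h)
      · obtain ⟨i, hi1, hi2, rfl⟩ := vec_ne h
        left
        rw [hw.vec_edge hi1 (by omega) le_rfl]
        exact one_ne_zero)
    have hfan : bd G' l' r' (Pi.single c 1) = fan x w (m + 1) n := by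
      rw [k2, h5, fan, fan, vec_add w (show j ≤ m + 1 by omega) (show m + 1 ≤ n by omega)]
      linear_combination chain_add (sg x (w j)) + chain_add (vec w j (m + 1))
    refine ⟨l', r', m + 1, k1, le_rfl, Or.inr hJ, fun i _ hi => hi, hfan, ?_⟩
    intro e _ he'
    apply hloop (G := G')
    rw [hfan, fan]
    have hvx : ∀ i, vec w (m + 1) n s(x, w i) = 0 := by
      intro i
      by_contra h
      obtain ⟨k, -, -, hk⟩ := vec_ne h
      rw [Sym2.eq_iff] at hk
      rcases hk with ⟨h, -⟩ | ⟨h, -⟩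
      · exact hxw _ h
      · exact hxw _ h
    rcases he' with he' | rfl
    · obtain ⟨i, hi1, hi2, rfl⟩ := vec_ne he'
      have hs : ∀ k, sg x (w k) s(w i, w (i + 1)) = 0 := fun k => sg_of_ne fun h => by
        rw [Sym2.eq_iff] at h
        rcases h with ⟨h, -⟩ | ⟨-, h⟩
        · exact hxw _ h.symm
        · exact hxw _ h.symm
      simpa [hs] using he'
    · rw [Pi.add_apply, Pi.add_apply, hvx, sg_self, sg_of_ne]
      · simp
      · rw [Sym2.congr_right.ne, hwn]
        intro h
        have := hw.inj _ hm 0 (by omega) h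
        omega

end Split

/-! ### `3`-connected graphs and the contraction of edges -/

section ThreeConnected
variable {G K : SimpleGraph V} {U : Set V}

/-- `G` lives on the vertex set `U`, on which it is `3`-connected. -/
structure Tri (G : SimpleGraph V) (U : Set V) : Prop where
  adj : ∀ a b, G.Adj a b → a ∈ U
  card : 4 ≤ U.ncard
  conn : ∀ P : Set V, P.ncard ≤ 2 → Conn G (U \ P)

lemma ncard_pair_le' (p q : V) : ({p, q} : Set V).ncard ≤ 2 :=
  (Set.ncard_insert_le _ _).trans (by simp)

variable [Fintype V]

/-- A set with at least `k + 2` elements is not covered by `k` elements and one more. -/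
lemma exists_other {S : Set V} {k : ℕ} (hk : k + 2 ≤ S.ncard) (x : V) {P : Set V} (hP : P.ncard ≤ k) :
    ∃ b ∈ S \ P, b ≠ x := by
  by_contra hc
  push Not at hc
  have h1 : S ⊆ insert x P := by
    intro b hb
    by_cases h : b ∈ P
    · exact Or.inr h
    · exact Or.inl (hc b ⟨hb, h⟩)
  have := (Set.ncard_le_ncard h1 (Set.toFinite _)).trans (Set.ncard_insert_le _ _)
  omega

lemma Tri.nbr (h : Tri G U) {x : V} (hx : x ∈ U) (p q : V) : ∃ c, G.Adj x c ∧ c ≠ p ∧ c ≠ q := by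
  have hP : ({p, q} \ {x} : Set V).ncard ≤ 2 :=
    (Set.ncard_le_ncard Set.sdiff_subset (Set.toFinite _)).trans (ncard_pair_le' p q)
  obtain ⟨b, hb, hbx⟩ := exists_other (k := 2) h.card x hP
  obtain ⟨c, hc, hcx, hadj⟩ := (h.conn _ hP).exists_adj (a := x) ⟨hx, fun k => k.2 rfl⟩ hb hbx.symm
  refine ⟨c, hadj, ?_, ?_⟩
  · rintro rfl; exact hc.2 ⟨Or.inl rfl, hcx⟩
  · rintro rfl; exact hc.2 ⟨Or.inr rfl, hcx⟩

/-- Thomassen's contraction lemma: in a `3`-connected graph on at least five vertices some edge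
can be contracted without destroying `3`-connectedness. -/
lemma Tri.exists_edge (h : Tri G U) (h5 : 5 ≤ U.ncard) :
    ∃ x y, G.Adj x y ∧ ∀ v, Conn G (U \ {x, y, v}) := by
  by_contra hc
  push Not at hc
  -- a separation by an edge `x y` and a vertex `v` with one side `D`
  let Bad : Set V → Prop := fun D => ∃ x y v, G.Adj x y ∧ D ⊆ U \ {x, y, v} ∧ D.Nonempty ∧
    ((U \ {x, y, v}) \ D).Nonempty ∧ ∀ a ∈ D, ∀ b, G.Adj a b → b ∈ D ∨ b = x ∨ b = y ∨ b = v
  have hU : ∀ {a b}, G.Adj a b → b ∈ U := fun hab => h.adj _ _ hab.symm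
  have hbad : ∀ x y, G.Adj x y → ∃ v D, D ⊆ U \ {x, y, v} ∧ D.Nonempty ∧
      ((U \ {x, y, v}) \ D).Nonempty ∧ ∀ a ∈ D, ∀ b, G.Adj a b → b ∈ D ∨ b = x ∨ b = y ∨ b = v := by
    intro x y hxy
    obtain ⟨v, hv⟩ := hc x y hxy
    have hne : (U \ {x, y, v}).Nonempty := by
      obtain ⟨b, hb, -⟩ := exists_other (k := 3) (by omega) x
        (P := {x, y, v}) ((Set.ncard_insert_le _ _).trans (by have := ncard_pair_le' y v; omega))
      exact ⟨b, hb⟩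
    by_contra hcon
    refine hv (conn_of_cut hne fun D hD h0 h1 => ?_)
    by_contra hcut
    push Not at hcut
    refine hcon ⟨v, D, hD, h0, h1, fun a ha b hab => ?_⟩
    by_contra hb
    push Not at hb
    exact hcut a ha b ⟨⟨hU hab, by simp [hb.2.1, hb.2.2.1, hb.2.2.2]⟩, hb.1⟩ hab
  have hex : ∃ D, Bad D := by
    obtain ⟨x, hx⟩ : U.Nonempty := Set.nonempty_of_ncard_ne_zero (by omega)
    obtain ⟨y, hxy, -⟩ := h.nbr hx x x
    obtain ⟨v, D, hD⟩ := hbad x y hxy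
    exact ⟨D, x, y, v, hxy, hD⟩
  -- such a side `D` with the fewest vertices
  obtain ⟨D, ⟨x, y, v, hxy, hDU, ⟨d₀, hd₀⟩, ⟨b₀, hb₀⟩, hN⟩, hmin⟩ :=
    (measure fun A : Set V => A.ncard).wf.has_min {D | Bad D} hex
  have hmin : ∀ D', Bad D' → D'.ncard < D.ncard → False := fun D' h1 h2 => hmin D' h1 h2
  -- otherwise `{x, y}` would separate `D` from the rest
  obtain ⟨d, hd, hdv⟩ : ∃ d ∈ D, G.Adj d v := by
    by_contra hcon
    push Not at hcon
    obtain ⟨a, ha, b, hb, hab⟩ := conn_cut (D := D) (h.conn {x, y} (ncard_pair_le' _ _))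
      (fun a ha => ⟨(hDU ha).1, fun k => (hDU ha).2 (by rcases k with k | k <;> simp_all)⟩)
      ⟨d₀, hd₀⟩ ⟨b₀, ⟨hb₀.1.1, fun k => hb₀.1.2 (by rcases k with k | k <;> simp_all)⟩, hb₀.2⟩
    rcases hN a ha b hab with k | rfl | rfl | rfl
    · exact hb.2 k
    · exact hb.1.2 (by simp)
    · exact hb.1.2 (by simp)
    · exact hcon a ha hab
  obtain ⟨w, E, hE⟩ := hbad v d hdv.symm
  -- one of the two sides of the second separation avoids both `x` and `y`
  obtain ⟨E, hEU, hE0, hE1, hEN, hEx, hEy⟩ : ∃ E, E ⊆ U \ {v, d, w} ∧ E.Nonempty ∧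
      ((U \ {v, d, w}) \ E).Nonempty ∧
      (∀ a ∈ E, ∀ b, G.Adj a b → b ∈ E ∨ b = v ∨ b = d ∨ b = w) ∧ x ∉ E ∧ y ∉ E := by
    obtain ⟨k1, k2, k3, k4⟩ := hE
    by_cases hxE : x ∈ E ∨ y ∈ E
    · refine ⟨(U \ {v, d, w}) \ E, Set.sdiff_subset, k3, ?_, ?_, ?_, ?_⟩
      · obtain ⟨e, he⟩ := k2
        exact ⟨e, k1 he, fun k => k.2 he⟩
      · intro a ha b hab
        by_contra hb
        push Not at hb
        have hbE : b ∈ E := by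
          by_contra hbE
          exact hb.1 ⟨⟨hU hab, by simp [hb.2.1, hb.2.2.1, hb.2.2.2]⟩, hbE⟩
        rcases k4 b hbE a hab.symm with k | k | k | k
        · exact ha.2 k
        all_goals exact ha.1.2 (by simp [k])
      all_goals
        intro hcon
        rcases hxE with hxE | hxE
        · first
          | exact hcon.2 hxE
          | rcases k4 _ hxE _ hxy with k | k | k | k
            · exact hcon.2 k
            all_goals exact hcon.1.2 (by simp [k])
        · first
          | exact hcon.2 hxE
          | rcases k4 _ hxE _ hxy.symm with k | k | k | k
            · exact hcon.2 k
            all_goals exact hcon.1.2 (by simp [k])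
    · push Not at hxE
      exact ⟨E, k1, k2, k3, k4, hxE.1, hxE.2⟩
  -- `d` has a neighbour in `E`, since `{v, w}` does not separate; this puts `E ∩ D` into the role of
  -- `D`, and it is smaller because it misses `d`
  obtain ⟨e, heE, hed⟩ : ∃ e ∈ E, G.Adj e d := by
    by_contra hcon
    push Not at hcon
    obtain ⟨b, hb⟩ := hE1
    obtain ⟨a, ha, b, hb, hab⟩ := conn_cut (D := E) (h.conn {v, w} (ncard_pair_le' _ _))
      (fun a ha => ⟨(hEU ha).1, fun k => (hEU ha).2 (by rcases k with k | k <;> simp_all)⟩)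
      hE0 ⟨b, ⟨hb.1.1, fun k => hb.1.2 (by rcases k with k | k <;> simp_all)⟩, hb.2⟩
    rcases hEN a ha b hab with k | rfl | rfl | rfl
    · exact hb.2 k
    · exact hb.1.2 (by simp)
    · exact hcon a ha hab
    · exact hb.1.2 (by simp)
  have heD : e ∈ D := by
    rcases hN d hd e hed.symm with k | rfl | rfl | rfl
    · exact k
    · exact absurd heE hEx
    · exact absurd heE hEy
    · exact absurd (hEU heE).2 (by simp)
  refine hmin (E ∩ D) ⟨v, d, w, hdv.symm, fun a ha => hEU ha.1, ⟨e, heE, heD⟩, ?_, ?_⟩ ?_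
  · obtain ⟨b, hb⟩ := hE1
    exact ⟨b, hb.1, fun k => hb.2 k.1⟩
  · rintro a ⟨haE, haD⟩ b hab
    rcases hEN a haE b hab with k | k
    · left
      refine ⟨k, ?_⟩
      rcases hN a haD b hab with k' | rfl | rfl | rfl
      · exact k'
      · exact absurd k hEx
      · exact absurd k hEy
      · exact absurd (hEU k).2 (by simp)
    · exact Or.inr k
  · exact Set.ncard_lt_ncard ⟨Set.inter_subset_right, fun k => (hEU (k hd).1).2 (by simp)⟩

/-- Contraction of the edge `x y` to the vertex `x`. -/
def con (G : SimpleGraph V) (x y : V) : SimpleGraph V where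
  Adj a b := a ≠ b ∧ a ≠ y ∧ b ≠ y ∧ (G.Adj a b ∨ (a = x ∧ G.Adj y b) ∨ (b = x ∧ G.Adj y a))
  symm := ⟨fun a b h => ⟨h.1.symm, h.2.2.1, h.2.1, by
    rcases h.2.2.2 with k | k | k
    · exact Or.inl k.symm
    · exact Or.inr (Or.inr k)
    · exact Or.inr (Or.inl k)⟩⟩
  loopless := ⟨fun a h => h.1 rfl⟩

/-- Contracting an edge with an end in a connected set leaves the set connected. -/
lemma Conn.con {S : Set V} (hS : Conn G S) {x y : V} (hxy : x ≠ y) (hx : x ∈ S) :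
    Conn (con G x y) (S \ {y}) := by
  classical
  refine conn_of_cut ⟨x, hx, hxy⟩ fun D hD h0 h1 => ?_
  obtain ⟨d, hd⟩ := h0
  obtain ⟨b, hb⟩ := h1
  let f : V → V := fun a => if a = y then x else a
  have hf : ∀ a ∈ S, f a ∈ S \ {y} := by
    intro a ha
    by_cases h : a = y
    · simp [f, h, hx, hxy]
    · simp [f, h, ha]
  have hfid : ∀ a ∈ S \ {y}, f a = a := fun a ha => if_neg ha.2
  obtain ⟨a, ha, b, hb, hab⟩ := conn_cut (D := {a | a ∈ S ∧ f a ∈ D}) hS (fun a ha => ha.1)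
    ⟨d, (hD hd).1, by rw [hfid d (hD hd)]; exact hd⟩
    ⟨b, hb.1.1, fun k => hb.2 (by have := k.2; rwa [hfid b hb.1] at this)⟩
  have hfb : f b ∉ D := fun k => hb.2 ⟨hb.1, k⟩
  refine ⟨f a, ha.2, f b, ⟨hf b hb.1, hfb⟩, fun k => hfb (k ▸ ha.2), (hf a ha.1).2, (hf b hb.1).2, ?_⟩
  by_cases h1 : a = y
  · have h2 : b ≠ y := fun k => hab.ne (h1.trans k.symm)
    subst h1
    right; left
    simp [f, h2, hab]
  · by_cases h2 : b = y
    · subst h2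
      right; right
      simp [f, h1, hab.symm]
    · left
      simpa [f, h1, h2] using hab

lemma Conn.mono_graph {S : Set V} (hS : Conn G S) (h : ∀ a ∈ S, ∀ b ∈ S, G.Adj a b → K.Adj a b) :
    Conn K S := by
  refine conn_of_cut ?_ fun D hD h0 h1 => ?_
  · obtain ⟨⟨s, hs⟩⟩ := hS.nonempty
    exact ⟨s, hs⟩
  · obtain ⟨a, ha, b, hb, hab⟩ := conn_cut hS hD h0 h1
    exact ⟨a, ha, b, hb, h a (hD ha) b hb.1 hab⟩

/-- Contracting an edge as in `Tri.exists_edge` preserves `3`-connectedness. -/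
lemma Tri.con (h : Tri G U) (h5 : 5 ≤ U.ncard) {x y : V} (hxy : G.Adj x y)
    (hgood : ∀ v, Conn G (U \ {x, y, v})) : Tri (con G x y) (U \ {y}) where
  adj a b hab := by
    refine ⟨?_, hab.2.1⟩
    rcases hab.2.2.2 with k | k | k
    · exact h.adj _ _ k
    · rw [k.1]; exact h.adj _ _ hxy
    · exact h.adj _ _ k.2.symm
  card := by
    rw [Set.ncard_sdiff_singleton_of_mem (h.adj _ _ hxy.symm)]; omega
  conn P hP := by
    by_cases hx : x ∈ P
    · have h1 : (P \ {x}).ncard ≤ 1 := by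
        rw [Set.ncard_sdiff_singleton_of_mem hx]; omega
      obtain ⟨v, hv⟩ : ∃ v, (U \ {y}) \ P = U \ {x, y, v} := by
        rcases Set.eq_empty_or_nonempty (P \ {x}) with h0 | ⟨v, hv⟩
        · refine ⟨x, ?_⟩
          have : P = {x} := Set.Subset.antisymm (Set.sdiff_eq_empty.1 h0) (by simpa using hx)
          rw [this]; ext a; simp; tauto
        · refine ⟨v, ?_⟩
          have h2 : P \ {x} = {v} := by
            refine Set.Subset.antisymm (fun t ht => ?_) (by simpa using hv)
            exact (Set.ncard_le_one_iff (Set.toFinite _)).1 h1 ht hv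
          have : P = {x, v} := by
            rw [← Set.insert_eq_of_mem hx, ← Set.insert_sdiff_singleton, h2]
          rw [this]; ext a; simp; tauto
      rw [hv]
      refine (hgood v).mono_graph fun a ha b hb hab => ⟨hab.ne, ?_, ?_, Or.inl hab⟩
      · rintro rfl; exact ha.2 (by simp)
      · rintro rfl; exact hb.2 (by simp)
    · have h1 : (P \ {y}).ncard ≤ 2 := (Set.ncard_le_ncard Set.sdiff_subset (Set.toFinite _)).trans hP
      have := (h.conn _ h1).con (x := x) (y := y) hxy.ne ⟨h.adj _ _ hxy, fun k => hx k.1⟩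
      have heq : (U \ {y}) \ P = (U \ (P \ {y})) \ {y} := by ext a; simp; tauto
      rwa [heq]

/-- A minor all of whose branch sets lie in `U`. -/
def MinorIn (G : SimpleGraph V) (U : Set V) (H : SimpleGraph W) : Prop :=
  ∃ F : W → Set V, (∀ w, F w ⊆ U) ∧ (∀ w, Conn G (F w)) ∧
    (∀ w₁ w₂, w₁ ≠ w₂ → Disjoint (F w₁) (F w₂)) ∧ ∀ w₁ w₂, H.Adj w₁ w₂ → Touch G (F w₁) (F w₂)

/-- A connected set of `K`, each vertex of which is replaced by a connected set of `G` and each edge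
by an edge between these, gives a connected set of `G`. -/
lemma Conn.biUnion {S : Set V} (hS : Conn K S) {φ : V → Set V} (hc : ∀ a ∈ S, Conn G (φ a))
    (ht : ∀ a ∈ S, ∀ b ∈ S, K.Adj a b → Touch G (φ a) (φ b)) : Conn G (⋃ a ∈ S, φ a) := by
  refine conn_of_cut ?_ fun D hD h0 h1 => ?_
  · obtain ⟨⟨s, hs⟩⟩ := hS.nonempty
    obtain ⟨⟨t, ht⟩⟩ := (hc s hs).nonempty
    exact ⟨t, Set.mem_biUnion hs ht⟩
  · by_contra hcon
    push Not at hcon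
    have hall : ∀ a ∈ S, ∀ t ∈ φ a, t ∈ D → φ a ⊆ D := by
      intro a ha t hta htD
      by_contra hn
      obtain ⟨s, hs, hsD⟩ := Set.not_subset.1 hn
      obtain ⟨p, hp, q, hq, hpq⟩ := conn_cut (D := φ a ∩ D) (hc a ha) Set.inter_subset_left
        ⟨t, hta, htD⟩ ⟨s, hs, fun k => hsD k.2⟩
      exact hcon p hp.2 q ⟨Set.mem_biUnion ha hq.1, fun k => hq.2 ⟨hq.1, k⟩⟩ hpq
    obtain ⟨d, hd⟩ := h0
    obtain ⟨b, hb, hbD⟩ := h1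
    obtain ⟨a, ha, hda⟩ := Set.mem_iUnion₂.1 (hD hd)
    obtain ⟨b', hb', hbb⟩ := Set.mem_iUnion₂.1 hb
    obtain ⟨p, hp, q, hq, hpq⟩ := conn_cut (D := {a | a ∈ S ∧ φ a ⊆ D}) hS (fun a ha => ha.1)
      ⟨a, ha, hall a ha d hda hd⟩ ⟨b', hb', fun k => hbD (k.2 hbb)⟩
    obtain ⟨s, hs, t, htq, hst⟩ := ht p hp.1 q hq.1 hpq
    exact hcon s (hp.2 hs) t ⟨Set.mem_biUnion hq.1 htq, fun k => hq.2 ⟨hq.1, hall q hq.1 t htq k⟩⟩ hst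

/-- Minors of minors are minors. -/
lemma MinorIn.lift {H : SimpleGraph W} (hM : MinorIn K U H) {φ : V → Set V} {T : Set V}
    (hT : ∀ a ∈ U, φ a ⊆ T)
    (hc : ∀ a ∈ U, Conn G (φ a)) (hd : ∀ a ∈ U, ∀ b ∈ U, a ≠ b → Disjoint (φ a) (φ b))
    (ht : ∀ a ∈ U, ∀ b ∈ U, K.Adj a b → Touch G (φ a) (φ b)) : MinorIn G T H := by
  obtain ⟨F, h1, h2, h3, h4⟩ := hM
  refine ⟨fun w => ⋃ a ∈ F w, φ a, fun w => ?_, fun w => ?_, fun w₁ w₂ hw => ?_, fun w₁ w₂ hw => ?_⟩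
  · exact Set.iUnion₂_subset fun a ha => hT a (h1 w ha)
  · exact (h2 w).biUnion (fun a ha => hc a (h1 w ha)) fun a ha b hb => ht a (h1 w ha) b (h1 w hb)
  · simp only [Set.disjoint_iUnion_left, Set.disjoint_iUnion_right]
    intro a ha b hb
    exact hd b (h1 _ hb) a (h1 _ ha) fun k => Set.disjoint_left.1 (h3 _ _ hw) (k ▸ hb) ha
  · obtain ⟨s, hs, t, htt, hst⟩ := h4 _ _ hw
    obtain ⟨p, hp, q, hq, hpq⟩ := ht s (h1 _ hs) t (h1 _ htt) hst
    exact ⟨p, Set.mem_biUnion hs hp, q, Set.mem_biUnion htt hq, hpq⟩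

/-- A minor of a contraction is a minor. -/
lemma MinorIn.of_con {H : SimpleGraph W} {x y : V} (hxy : G.Adj x y) (hx : x ∈ U) (hy : y ∈ U)
    (hM : MinorIn (con G x y) (U \ {y}) H) : MinorIn G U H := by
  classical
  refine hM.lift (φ := fun a => if a = x then {x, y} else {a}) ?_ ?_ ?_ ?_
  · intro a ha
    split_ifs
    · rintro t (rfl | rfl) <;> assumption
    · simpa using ha.1
  · intro a _
    split_ifs
    · rw [Set.pair_comm]
      exact (conn_singleton x).insert rfl hxy
    · exact conn_singleton a
  · intro a ha b hb hab
    have ha2 : a ≠ y := ha.2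
    have hb2 : b ≠ y := hb.2
    by_cases h1 : a = x <;> by_cases h2 : b = x <;>
      simp only [h1, h2, if_true, if_false, Set.disjoint_singleton_right, Set.disjoint_singleton_left,
        Set.mem_insert_iff, Set.mem_singleton_iff] <;> grind
  · rintro a - b - ⟨h1, h2, h3, h4⟩
    by_cases ha : a = x <;> by_cases hb : b = x
    · exact absurd (ha.trans hb.symm) h1
    · subst ha
      simp only [if_true, hb, if_false]
      rcases h4 with k | k | k
      · exact ⟨_, Or.inl rfl, b, rfl, k⟩
      · exact ⟨_, Or.inr rfl, b, rfl, k.2⟩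
      · exact absurd k.1 hb
    · subst hb
      simp only [if_true, ha, if_false]
      rcases h4 with k | k | k
      · exact ⟨a, rfl, _, Or.inl rfl, k⟩
      · exact absurd k.1 ha
      · exact ⟨a, rfl, _, Or.inr rfl, k.2.symm⟩
    · simp only [ha, hb, if_false]
      rcases h4 with k | k | k
      · exact ⟨a, rfl, b, rfl, k⟩
      · exact absurd k.1 ha
      · exact absurd k.1 hb

end ThreeConnected

/-! ### The face arising from the deletion of a vertex -/

section DeleteVertex
variable [Fintype V] {K : SimpleGraph V} {U : Set V} {l r : Sym2 V → ℕ}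

/-- Deletion of the edges at `z`. -/
def rem (K : SimpleGraph V) (z : V) : SimpleGraph V where
  Adj a b := K.Adj a b ∧ a ≠ z ∧ b ≠ z
  symm := ⟨fun _ _ h => ⟨h.1.symm, h.2.2, h.2.1⟩⟩
  loopless := ⟨fun _ h => h.1.ne rfl⟩

/-- For a set `P` of at most two vertices, one of them `v`, and two neighbours `a`, `b` of `v`
outside `P`, some element of the cycle space uses exactly the edges `v a` and `v b` at `v`, and no
edge at the other vertex of `P`. -/
lemma Tri.exists_two (h : Tri K U) {v a b : V} {P : Set V} (hv : v ∈ P) (hP : P.ncard ≤ 2)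
    (ha : K.Adj v a) (hb : K.Adj v b) (haP : a ∉ P) (hbP : b ∉ P) :
    ∃ p, IsZ K p ∧ (∀ u, p s(v, u) = dl a u + dl b u) ∧ ∀ e, p e ≠ 0 → ∀ t ∈ e, t ∈ P → t = v := by
  obtain ⟨p, hp1, hp2⟩ := exists_chain (h.conn P hP) (a := a) (b := b)
    ⟨h.adj _ _ ha.symm, haP⟩ ⟨h.adj _ _ hb.symm, hbP⟩
  have hsv : ∀ {c}, K.Adj v c → ∀ u, sg v c s(v, u) = dl c u := by
    intro c hc u
    by_cases hu : u = c
    · subst hu; rw [sg_self, dl_self]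
    · rw [dl_ne hu, sg_of_ne]
      rwa [Ne, Sym2.congr_right]
  refine ⟨p + sg v a + sg v b, ⟨fun e he => ?_, fun t => ?_⟩, fun u => ?_, fun e he t hte htP => ?_⟩
  · rcases add_ne_zero_or he with he | he
    · rcases add_ne_zero_or he with he | he
      · exact (hp1 e he).1
      · rw [sg_ne he]; exact ha
    · rw [sg_ne he]; exact hb
  · rw [bdry_add, bdry_add, bdry_sg ha.ne, bdry_sg hb.ne, hp2]
    linear_combination z2_add (dl a t) + z2_add (dl b t) + z2_add (dl v t)
  · have h0 : p s(v, u) = 0 := by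
      by_contra hc
      exact ((hp1 _ hc).2 v (by simp)).2 hv
    rw [Pi.add_apply, Pi.add_apply, h0, hsv ha, hsv hb, zero_add]
  · rcases add_ne_zero_or he with he | he
    · rcases add_ne_zero_or he with he | he
      · exact absurd htP ((hp1 e he).2 t hte).2
      · rw [sg_ne he] at hte
        rcases Sym2.mem_iff.1 hte with rfl | rfl
        · rfl
        · exact absurd htP haP
    · rw [sg_ne he] at hte
      rcases Sym2.mem_iff.1 hte with rfl | rfl
      · rfl
      · exact absurd htP hbP

/-- The local form of duality. Let `g` be the potential of an element of the cycle space whose edges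
at `v` are exactly `v a` and `v b`: the faces with `g ≠ 0` lead around `v` from the one edge to the
other. If a function `h` of faces takes the value `χ u` on those sides of each edge `v u` at which
`g ≠ 0`, then `χ a = χ b`. The reason is that `g * h` is also the potential of an element of the
cycle space, which has zero boundary at `v`. -/
lemma Dual.around (hD : Dual K l r) {v a b : V} {g h : ℕ → ZMod 2} {χ : V → ZMod 2}
    (hp : ∀ u, bd K l r g s(v, u) = dl a u + dl b u)
    (hχ : ∀ u, K.Adj v u → (g (l s(v, u)) = 0 ∨ h (l s(v, u)) = χ u) ∧
      (g (r s(v, u)) = 0 ∨ h (r s(v, u)) = χ u)) : χ a = χ b := by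
  have h1 := (hD.isZ (g * h)).2 v
  have h2 : ∀ u, bd K l r (g * h) s(v, u) = χ u * (dl a u + dl b u) := by
    intro u
    rw [← hp u]
    by_cases hu : K.Adj v u
    · rw [bd_mem (by exact hu), bd_mem (by exact hu), Pi.mul_apply, Pi.mul_apply]
      obtain ⟨k1 | k1, k2 | k2⟩ := hχ u hu <;> rw [k1, k2] <;> ring
    · have : s(v, u) ∉ K.edgeSet := hu
      simp [bd, this]
  have h3 : χ a + χ b = 0 := by
    rw [← h1, bdry]
    have h4 : ∀ a, ∑ u, χ u * dl a u = χ a := fun a => by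
      rw [Finset.sum_eq_single a (fun u _ hu => by rw [dl_ne hu, mul_zero]) (by simp), dl_self, mul_one]
    simp only [h2, mul_add, Finset.sum_add_distrib, h4]
  have := z2_add (χ b)
  linear_combination h3 - this

/-- Deleting a vertex `z` of a `3`-connected graph merges the faces around `z` into a face
bounded by a cycle through all neighbours of `z`. -/
lemma Dual.rem (hD : Dual K l r) (hK : Tri K U) {z : V} (hz : z ∈ U) :
    ∃ l' r' c n w, Dual (rem K z) l' r' ∧ Cyc (rem K z) n w ∧
      bd (rem K z) l' r' (Pi.single c 1) = vec w 0 n ∧ ∀ a, K.Adj z a → ∃ i, w i = a := by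
  classical
  set H := EdgeTrans.rem K z with hH
  have hHK : ∀ a b, H.Adj a b ↔ K.Adj a b ∧ a ≠ z ∧ b ≠ z := fun a b => Iff.rfl
  have hHe : ∀ e, e ∈ H.edgeSet ↔ e ∈ K.edgeSet ∧ z ∉ e := by
    intro e
    induction e using Sym2.ind with | _ a b =>
    rw [SimpleGraph.mem_edgeSet, SimpleGraph.mem_edgeSet, hHK, Sym2.mem_iff]
    grind
  let I : Set ℕ := {i | ∃ a, K.Adj z a ∧ (i = l s(z, a) ∨ i = r s(z, a))}
  have hIl : ∀ {a}, K.Adj z a → l s(z, a) ∈ I := fun h => ⟨_, h, Or.inl rfl⟩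
  have hIr : ∀ {a}, K.Adj z a → r s(z, a) ∈ I := fun h => ⟨_, h, Or.inr rfl⟩
  obtain ⟨a₀, ha₀, -⟩ := hK.nbr hz z z
  let c := l s(z, a₀)
  have hcI : c ∈ I := hIl ha₀
  have hz1 : ({z} : Set V).ncard ≤ 2 := by simp
  -- `I` is the set of faces around `z`; they are merged into the one face `c`, with boundary `C`.
  -- potentials of chains avoiding `z` are constant on the faces around `z`
  have hconst : ∀ h : ℕ → ZMod 2, (∀ a, K.Adj z a → bd K l r h s(z, a) = 0) → ∀ i ∈ I, h i = h c := by
    intro h hh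
    have hlr : ∀ a, K.Adj z a → h (r s(z, a)) = h (l s(z, a)) := by
      intro a ha
      have := hh a ha
      rw [bd_mem (by exact ha)] at this
      linear_combination this - z2_add (h (l s(z, a)))
    have key : ∀ a, K.Adj z a → h (l s(z, a)) = h c := by
      intro a ha
      obtain ⟨p, hp, hp2, -⟩ := hK.exists_two (v := z) (P := {z}) rfl hz1 ha ha₀ ha.ne' ha₀.ne'
      obtain ⟨g, rfl⟩ := (hD p).1 hp
      exact hD.around (h := h) (χ := fun u => h (l s(z, u))) hp2 fun u hu =>
        ⟨Or.inr rfl, Or.inr (hlr u hu)⟩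
    rintro i ⟨a, ha, rfl | rfl⟩
    · exact key a ha
    · rw [hlr a ha]; exact key a ha
  have hconst0 : ∀ h : ℕ → ZMod 2, h c = 0 → IsZ H (bd K l r h) → ∀ i ∈ I, h i = 0 := by
    intro h h0 hh i hi
    rw [hconst h (fun a ha => ?_) i hi, h0]
    by_contra hne
    exact ((hHe _).1 (hh.1 _ hne)).2 (by simp)
  let σ : ℕ → ℕ := fun i => if i ∈ I then c else i
  have hσ : ∀ h : ℕ → ZMod 2, (∀ i ∈ I, h i = 0) → h c = 0 → ∀ i, h (σ i) = h i := by
    intro h h1 h2 i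
    by_cases hi : i ∈ I
    · simp [σ, hi, h1 i hi, h2]
    · simp [σ, hi]
  have hbd : ∀ h : ℕ → ZMod 2, bd H (σ ∘ l) (σ ∘ r) h = bd K l r (h ∘ σ) := by
    intro h
    funext e
    by_cases he : e ∈ H.edgeSet
    · rw [bd_mem he, bd_mem ((hHe e).1 he).1]; rfl
    · by_cases heK : e ∈ K.edgeSet
      · have hze : z ∈ e := by
          by_contra hc
          exact he ((hHe e).2 ⟨heK, hc⟩)
        obtain ⟨a, rfl⟩ := hze
        rw [bd_mem heK]
        simp only [bd, he, if_false, Function.comp]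
        have h1 : σ (l s(z, a)) = c := if_pos (hIl heK)
        have h2 : σ (r s(z, a)) = c := if_pos (hIr heK)
        rw [h1, h2, z2_add]
      · simp [bd, he, heK]
  have hsub : ∀ p, IsZ H p → IsZ K p := fun p hp => ⟨fun e he => ((hHe e).1 (hp.1 e he)).1, hp.2⟩
  have hDH : Dual H (σ ∘ l) (σ ∘ r) := by
    intro p
    constructor
    · intro hp
      obtain ⟨h, h0, rfl⟩ := hD.exists_zero (hsub p hp) c
      refine ⟨h, ?_⟩
      rw [hbd]
      congr 1
      funext i
      exact (hσ h (hconst0 h h0 hp) h0 i).symm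
    · rintro ⟨h, rfl⟩
      refine ⟨fun e he => ?_, fun v => ?_⟩
      · by_contra hc
        simp [bd, hc] at he
      · rw [hbd]; exact (hD.isZ _).2 v
  set C := bd H (σ ∘ l) (σ ∘ r) (Pi.single c 1) with hC
  let ι : ℕ → ZMod 2 := fun i => if i ∈ I then 1 else 0
  have hι : (Pi.single c 1 : ℕ → ZMod 2) ∘ σ = ι := by
    funext i
    by_cases hi : i ∈ I
    · simp [σ, ι, hi]
    · have : i ≠ c := fun k => hi (k ▸ hcI)
      simp [σ, ι, hi, this]
  have hCι : C = bd K l r ι := by rw [hC, hbd, hι]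
  have hCZ : IsZ H C := hDH.isZ _
  -- no edge has the merged face on both of its sides
  have hnb : ∀ v a, H.Adj v a → l s(v, a) ∈ I → r s(v, a) ∈ I → False := by
    intro v a hva h1 h2
    obtain ⟨b, hb, hbz, hba⟩ := hK.nbr (hK.adj _ _ hva.1) z a
    obtain ⟨p, hp, hp2, hp3⟩ := hK.exists_two (v := v) (P := {v, z}) (by simp) (ncard_pair_le' _ _)
      hva.1 hb (by simp [hva.1.ne', hva.2.2]) (by simp [hb.ne', hbz])
    obtain ⟨g, h0, rfl⟩ := hD.exists_zero hp c
    have hpH : IsZ H (bd K l r g) := ⟨fun e he => (hHe e).2 ⟨hp.1 e he, fun hze =>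
      hva.2.1 (hp3 e he z hze (by simp)).symm⟩, hp.2⟩
    have h3 := hconst0 g h0 hpH
    have h4 := hp2 a
    rw [bd_mem (by exact hva.1), h3 _ h1, h3 _ h2, dl_self, dl_ne hba.symm] at h4
    simp at h4
  -- every neighbour of `z` is on the boundary of the merged face
  have hnbr : ∀ a, K.Adj z a → ∃ b, C s(a, b) ≠ 0 := by
    intro a ha
    by_contra hcon
    push Not at hcon
    have hout : ∀ u, H.Adj a u → l s(a, u) ∉ I ∧ r s(a, u) ∉ I := by
      intro u hu
      have h1 := hcon u
      rw [hCι, bd_mem (by exact hu.1)] at h1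
      have h2 := hnb a u hu
      by_cases k1 : l s(a, u) ∈ I <;> by_cases k2 : r s(a, u) ∈ I <;> simp_all [ι]
    obtain ⟨b, hb, hbz, -⟩ := hK.nbr (hK.adj _ _ ha.symm) z z
    obtain ⟨p, hp, hp2, -⟩ := hK.exists_two (v := a) (P := {a}) rfl (by simp) ha.symm hb ha.ne hb.ne'
    obtain ⟨g, rfl⟩ := (hD p).1 hp
    have := hD.around (h := ι) (χ := fun u => if u = z then 1 else 0) hp2 (fun u hu => by
      by_cases huz : u = z
      · subst huz
        rw [Sym2.eq_swap]
        exact ⟨Or.inr (by simp [ι, hIl ha]), Or.inr (by simp [ι, hIr ha])⟩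
      · obtain ⟨k1, k2⟩ := hout u ⟨hu, ha.ne', huz⟩
        exact ⟨Or.inr (by simp [ι, k1, huz]), Or.inr (by simp [ι, k2, huz])⟩)
    simp [hbz] at this
  have hC0 : C ≠ 0 := by
    obtain ⟨b, hb⟩ := hnbr a₀ ha₀
    intro hc
    exact hb (by rw [hc]; rfl)
  -- The boundary `C` contains a cycle `w`. To see that it is no more than this cycle, take the
  -- potential `h` of `w` vanishing outside; every edge turns out to have a side inside.
  obtain ⟨n, w, hw, hwC⟩ := hCZ.exists_cyc hC0
  have hwZ := hw.isZ
  obtain ⟨h, h0, hh⟩ := hD.exists_zero (hsub _ hwZ) c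
  have hI0 := hconst0 h h0 (hh ▸ hwZ)
  have hvC : ∀ e, vec w 0 n e ≠ 0 → C e ≠ 0 := by
    intro e he
    obtain ⟨i, -, -, rfl⟩ := vec_ne he
    exact hwC i
  -- `φ e = 1` when one of the sides of `e` lies inside the cycle `w`; going around a vertex without
  -- crossing the merged face, `φ` does not change, so it is constant by connectedness
  let φ : Sym2 V → ZMod 2 := fun e => h (l e) + h (r e) + h (l e) * h (r e)
  have hφ : ∀ v a b, H.Adj v a → H.Adj v b → φ s(v, a) = φ s(v, b) := by
    intro v a b hva hvb
    obtain ⟨p, hp, hp2, hp3⟩ := hK.exists_two (v := v) (P := {v, z}) (by simp) (ncard_pair_le' _ _)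
      hva.1 hvb.1 (by simp [hva.1.ne', hva.2.2]) (by simp [hvb.1.ne', hvb.2.2])
    obtain ⟨g, g0, rfl⟩ := hD.exists_zero hp c
    have hpH : IsZ H (bd K l r g) := ⟨fun e he => (hHe e).2 ⟨hp.1 e he, fun hze =>
      hva.2.1 (hp3 e he z hze (by simp)).symm⟩, hp.2⟩
    have g1 := hconst0 g g0 hpH
    refine hD.around (h := h) (χ := fun u => φ s(v, u)) hp2 fun u hu => ?_
    by_cases k1 : l s(v, u) ∈ I <;> by_cases k2 : r s(v, u) ∈ I
    · exact ⟨Or.inl (g1 _ k1), Or.inl (g1 _ k2)⟩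
    · refine ⟨Or.inl (g1 _ k1), Or.inr ?_⟩
      simp [φ, hI0 _ k1]
    · refine ⟨Or.inr ?_, Or.inl (g1 _ k2)⟩
      simp [φ, hI0 _ k2]
    · have h1 : vec w 0 n s(v, u) = 0 := by
        by_contra hc
        apply hvC _ hc
        rw [hCι, bd_mem (by exact hu)]
        simp [ι, k1, k2]
      rw [hh, bd_mem (by exact hu)] at h1
      have h2 : h (l s(v, u)) = h (r s(v, u)) := by linear_combination h1 - z2_add (h (r s(v, u)))
      have h3 : ∀ x : ZMod 2, x = x + x + x * x := by decide
      constructor <;> right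
      · simp only [φ]; rw [← h2]; exact h3 _
      · simp only [φ]; rw [h2]; exact h3 _
  have hwe : φ s(w 0, w 1) = 1 := by
    have h1 : vec w 0 n s(w 0, w (0 + 1)) = 1 := hw.vec_edge le_rfl (by have := hw.three; omega) le_rfl
    rw [hh, bd_mem (by exact (hw.adj 0).1)] at h1
    have h2 : ∀ x y : ZMod 2, x + y = 1 → x + y + x * y = 1 := by decide
    exact h2 _ _ h1
  have hall : ∀ v ∈ U \ {z}, ∀ u, H.Adj v u → φ s(v, u) = 1 := by
    by_contra hcon
    push Not at hcon
    obtain ⟨v, hv, u, hu, hne⟩ := hcon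
    obtain ⟨a, ha, b, hb, hab⟩ := conn_cut (D := {v | v ∈ U \ {z} ∧ ∀ u, H.Adj v u → φ s(v, u) = 1})
      (hK.conn {z} hz1) (fun a ha => ha.1)
      ⟨w 0, ⟨hK.adj _ _ (hw.adj 0).1, (hw.adj 0).2.1⟩, fun u hu => by
        rw [hφ _ _ _ hu (hw.adj 0)]; exact hwe⟩
      ⟨v, hv, fun k => hne (k.2 u hu)⟩
    have hab' : H.Adj a b := ⟨hab, ha.1.2, hb.1.2⟩
    refine hb.2 ⟨hb.1, fun u hu => ?_⟩
    rw [hφ _ _ _ hu hab'.symm, Sym2.eq_swap]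
    exact ha.2 b hab'
  have hCw : C = vec w 0 n := by
    funext e
    by_cases hv : vec w 0 n e = 0
    · rw [hv]
      by_contra hCe
      have heH := hCZ.1 e hCe
      induction e using Sym2.ind with | _ a b =>
      have hab : H.Adj a b := heH
      have h1 := hall a ⟨hK.adj _ _ hab.1, hab.2.1⟩ b hab
      rw [hh, bd_mem (by exact hab.1)] at hv
      rw [hCι, bd_mem (by exact hab.1)] at hCe
      have h2 : h (l s(a, b)) * h (r s(a, b)) = 0 := by
        by_cases k1 : l s(a, b) ∈ I
        · rw [hI0 _ k1, zero_mul]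
        · by_cases k2 : r s(a, b) ∈ I
          · rw [hI0 _ k2, mul_zero]
          · simp [ι, k1, k2] at hCe
      simp only [φ, hv, h2] at h1
      simp at h1
    · rcases z2 (vec w 0 n e) with k | k
      · exact absurd k hv
      · rcases z2 (C e) with k' | k'
        · exact absurd k' (hvC e hv)
        · rw [k, k']
  refine ⟨σ ∘ l, σ ∘ r, c, n, w, hDH, hw, hCw, fun a ha => ?_⟩
  obtain ⟨b, hb⟩ := hnbr a ha
  rw [hCw] at hb
  obtain ⟨i, -, -, hi⟩ := vec_ne hb
  rcases Sym2.eq_iff.1 hi with ⟨k, -⟩ | ⟨k, -⟩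
  · exact ⟨i, k.symm⟩
  · exact ⟨i + 1, k.symm⟩

end DeleteVertex

/-! ### Crossing neighbourhoods on a cycle -/

section Crossing
variable {G : SimpleGraph V} {U : Set V} {n : ℕ} {w : ℕ → V} {x y : V}

/-- Branch sets of a `K₅` minor, with the conditions on pairs stated for `i < j` only. -/
lemma minorIn_K5 {A : Fin 5 → Set V} (hU : ∀ i, A i ⊆ U) (hc : ∀ i, Conn G (A i))
    (hd : ∀ i j, i < j → Disjoint (A i) (A j)) (ht : ∀ i j, i < j → Touch G (A i) (A j)) :
    MinorIn G U (completeGraph (Fin 5)) := by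
  refine ⟨A, hU, hc, fun i j hij => ?_, fun i j hij => ?_⟩
  · rcases lt_or_gt_of_ne hij with h | h
    · exact hd i j h
    · exact (hd j i h).symm
  · have hij : i ≠ j := hij
    rcases lt_or_gt_of_ne hij with h | h
    · exact ht i j h
    · exact (ht j i h).symm

/-- Branch sets `A`, `B` of a `K₃,₃` minor. -/
lemma minorIn_K33 {A B : Fin 3 → Set V} (hA : ∀ i, A i ⊆ U) (hB : ∀ i, B i ⊆ U)
    (cA : ∀ i, Conn G (A i)) (cB : ∀ i, Conn G (B i))
    (dA : ∀ i j, i < j → Disjoint (A i) (A j)) (dB : ∀ i j, i < j → Disjoint (B i) (B j))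
    (dAB : ∀ i j, Disjoint (A i) (B j)) (ht : ∀ i j, Touch G (A i) (B j)) :
    MinorIn G U (completeBipartiteGraph (Fin 3) (Fin 3)) := by
  refine ⟨Sum.elim A B, ?_, ?_, ?_, ?_⟩
  · rintro (i | i)
    · exact hA i
    · exact hB i
  · rintro (i | i)
    · exact cA i
    · exact cB i
  · rintro (i | i) (j | j) hij
    · rcases lt_or_gt_of_ne (fun k => hij (congrArg Sum.inl k) : i ≠ j) with h | h
      · exact dA i j h
      · exact (dA j i h).symm
    · exact dAB i j
    · exact (dAB j i).symm
    · rcases lt_or_gt_of_ne (fun k => hij (congrArg Sum.inr k) : i ≠ j) with h | h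
      · exact dB i j h
      · exact (dB j i h).symm
  · rintro (i | i) (j | j) hij
    · simp at hij
    · exact ht i j
    · exact (ht j i).symm
    · simp at hij

/-- Two adjacent vertices `x`, `y` off the cycle `w`, all of whose other neighbours (at least two
for each of them) are on `w`. -/
structure Hub (G : SimpleGraph V) (U : Set V) (n : ℕ) (w : ℕ → V) (x y : V) : Prop where
  cyc : Cyc G n w
  mem : ∀ i, w i ∈ U
  memx : x ∈ U
  memy : y ∈ U
  adj : G.Adj x y
  nex : ∀ i, w i ≠ x
  ney : ∀ i, w i ≠ y
  nbx : ∀ u, G.Adj x u → u ≠ y → ∃ i, w i = u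
  nby : ∀ u, G.Adj y u → u ≠ x → ∃ i, w i = u
  twox : ∀ p, ∃ u, G.Adj x u ∧ u ≠ y ∧ u ≠ p
  twoy : ∀ p, ∃ u, G.Adj y u ∧ u ≠ x ∧ u ≠ p

lemma Hub.swap (h : Hub G U n w x y) : Hub G U n w y x :=
  ⟨h.cyc, h.mem, h.memy, h.memx, h.adj.symm, h.ney, h.nex, h.nby, h.nbx, h.twoy, h.twox⟩

lemma Cyc.exists_add (h : Cyc G n w) (i k : ℕ) : ∃ j, w (j + k) = w i := by
  refine ⟨i + k * n - k, ?_⟩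
  have h3 := h.three
  have : k ≤ i + k * n := by nlinarith
  rw [Nat.sub_add_cancel this, ← h.mod (i + k * n), Nat.add_mul_mod_self_right, h.mod]

lemma Hub.rot (h : Hub G U n w x y) (k : ℕ) : Hub G U n (fun i => w (i + k)) x y where
  cyc := h.cyc.rot k
  mem i := h.mem _
  memx := h.memx
  memy := h.memy
  adj := h.adj
  nex i := h.nex _
  ney i := h.ney _
  nbx u hu huy := by
    obtain ⟨i, rfl⟩ := h.nbx u hu huy
    exact h.cyc.exists_add i k
  nby u hu hux := by
    obtain ⟨i, rfl⟩ := h.nby u hu hux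
    exact h.cyc.exists_add i k
  twox := h.twox
  twoy := h.twoy

lemma Hub.posx (h : Hub G U n w x y) {u : V} (hu : G.Adj x u) (huy : u ≠ y) : ∃ i < n, w i = u := by
  obtain ⟨i, rfl⟩ := h.nbx u hu huy
  exact h.cyc.exists_lt i

/-- After rotating `w` by `k`, the neighbours of `x` lie in the arc from `0` to `i`, both ends of
which are neighbours of `x`, and the neighbours of `y` lie in the complementary closed arc. -/
def Sep (G : SimpleGraph V) (n : ℕ) (w : ℕ → V) (x y : V) : Prop :=
  ∃ k i, 0 < i ∧ i < n ∧ G.Adj x (w k) ∧ G.Adj x (w (i + k)) ∧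
    (∀ u, G.Adj x u → u ≠ y → ∃ j ≤ i, w (j + k) = u) ∧
    ∀ u, G.Adj y u → u ≠ x → ∃ j, i ≤ j ∧ j ≤ n ∧ w (j + k) = u

lemma Sep.rot {k : ℕ} (h : Sep G n (fun i => w (i + k)) x y) : Sep G n w x y := by
  obtain ⟨k', i, h1, h2, h3, h4, h5, h6⟩ := h
  refine ⟨k' + k, i, h1, h2, h3, by rwa [← Nat.add_assoc], fun u hu hy => ?_, fun u hu hx => ?_⟩
  · obtain ⟨j, k1, k2⟩ := h5 u hu hy
    exact ⟨j, k1, by rwa [← Nat.add_assoc]⟩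
  · obtain ⟨j, k1, k2, k3⟩ := h6 u hu hx
    exact ⟨j, k1, k2, by rwa [← Nat.add_assoc]⟩

lemma exists_greatest {P : ℕ → Prop} {n : ℕ} (h : ∃ i < n, P i) :
    ∃ b < n, P b ∧ ∀ j < n, P j → j ≤ b := by
  classical
  obtain ⟨i, hi, hPi⟩ := h
  refine ⟨Nat.findGreatest P (n - 1), ?_, Nat.findGreatest_spec (P := P) (m := i) (by omega) hPi,
    fun j hj hPj => Nat.le_findGreatest (by omega) hPj⟩
  have := Nat.findGreatest_le (P := P) (n - 1)
  omega

lemma Cyc.arc_touch (h : Cyc G n w) {a b c : ℕ} (h1 : a < b) (h2 : b < c) :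
    Touch G (w '' Set.Ico a b) (w '' Set.Ico b c) := by
  refine ⟨w (b - 1), ⟨b - 1, ⟨by omega, by omega⟩, rfl⟩, w b, ⟨b, ⟨by omega, by omega⟩, rfl⟩, ?_⟩
  have := h.adj (b - 1)
  rwa [show b - 1 + 1 = b by omega] at this

lemma Cyc.arc_touch_end (h : Cyc G n w) {a b : ℕ} (h1 : 0 < a) (h2 : b < n) :
    Touch G (w '' Set.Ico 0 a) (w '' Set.Ico b n) := by
  refine ⟨w 0, ⟨0, ⟨le_rfl, h1⟩, rfl⟩, w (n - 1), ⟨n - 1, ⟨by omega, by omega⟩, rfl⟩, ?_⟩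
  have := h.adj (n - 1)
  rw [show n - 1 + 1 = 0 + n by omega, h.per] at this
  exact this.symm

lemma disj_arc {x : V} (h : ∀ i, w i ≠ x) (s : Set ℕ) : Disjoint {x} (w '' s) := by
  rw [Set.disjoint_singleton_left]
  rintro ⟨i, -, hi⟩
  exact h i hi

lemma touch_arc {x : V} {a b j : ℕ} (h : G.Adj x (w j)) (h1 : a ≤ j) (h2 : j < b) :
    Touch G {x} (w '' Set.Ico a b) := ⟨x, rfl, w j, ⟨j, ⟨h1, h2⟩, rfl⟩, h⟩

/-- Suppose that `w 0` is a neighbour of `y` but not of `x`. Let `a` and `b` be the first and the last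
position of a neighbour of `x` on `w`. A neighbour `w j` of `y` with `a < j < b` gives a `K₃,₃` minor
with sides `x`, `w [0, a)`, `w [j, b)` and `y`, `w [a, j)`, `w [b, n)`. -/
lemma Hub.sep_of_private (h : Hub G U n w x y) (h0 : G.Adj y (w 0)) (h0' : ¬ G.Adj x (w 0))
    (h33 : ¬ MinorIn G U (completeBipartiteGraph (Fin 3) (Fin 3))) : Sep G n w x y := by
  classical
  have hcyc := h.cyc
  obtain ⟨u₁, hu₁, hu₁y, -⟩ := h.twox x
  obtain ⟨i₁, hi₁, rfl⟩ := h.posx hu₁ hu₁y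
  have hex : ∃ i, i < n ∧ G.Adj x (w i) := ⟨i₁, hi₁, hu₁⟩
  obtain ⟨a, ⟨han, hax⟩, hamin⟩ : ∃ a, (a < n ∧ G.Adj x (w a)) ∧ ∀ j < n, G.Adj x (w j) → a ≤ j :=
    ⟨Nat.find hex, Nat.find_spec hex, fun j hj hxj => Nat.find_min' hex ⟨hj, hxj⟩⟩
  obtain ⟨b, hbn, hbx, hbmax⟩ := exists_greatest (P := fun i => G.Adj x (w i)) (n := n) hex
  have ha0 : 0 < a := by
    rcases Nat.eq_zero_or_pos a with rfl | hp
    · exact absurd hax h0'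
    · exact hp
  have hab : a < b := by
    obtain ⟨u₂, hu₂, hu₂y, hne⟩ := h.twox (w a)
    obtain ⟨i₂, hi₂, rfl⟩ := h.posx hu₂ hu₂y
    have h1 := hamin i₂ hi₂ hu₂
    have h2 := hbmax i₂ hi₂ hu₂
    have h3 : i₂ ≠ a := by rintro rfl; exact hne rfl
    omega
  have hY : ∀ j, a < j → j < b → ¬ G.Adj y (w j) := by
    intro j haj hjb hyj
    apply h33
    have hU : ∀ s, w '' s ⊆ U := by
      rintro s _ ⟨i, -, rfl⟩
      exact h.mem i
    refine minorIn_K33 (A := ![{x}, w '' Set.Ico 0 a, w '' Set.Ico j b])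
      (B := ![{y}, w '' Set.Ico a j, w '' Set.Ico b n]) ?_ ?_ ?_ ?_ ?_ ?_ ?_ ?_
    · intro i; fin_cases i
      · simpa using h.memx
      · exact hU _
      · exact hU _
    · intro i; fin_cases i
      · simpa using h.memy
      · exact hU _
      · exact hU _
    · intro i; fin_cases i
      · exact conn_singleton x
      · exact conn_interval hcyc.adj _ _ ha0
      · exact conn_interval hcyc.adj _ _ hjb
    · intro i; fin_cases i
      · exact conn_singleton y
      · exact conn_interval hcyc.adj _ _ haj
      · exact conn_interval hcyc.adj _ _ hbn
    · intro i k; fin_cases i <;> fin_cases k <;> intro hik <;> first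
        | exact absurd hik (by decide)
        | exact disj_arc h.nex _
        | exact hcyc.disj (by omega) (by omega)
    · intro i k; fin_cases i <;> fin_cases k <;> intro hik <;> first
        | exact absurd hik (by decide)
        | exact disj_arc h.ney _
        | exact hcyc.disj (by omega) (by omega)
    · intro i k; fin_cases i <;> fin_cases k
      · simpa using h.adj.ne
      · exact disj_arc h.nex _
      · exact disj_arc h.nex _
      · exact (disj_arc h.ney _).symm
      · exact hcyc.disj (by omega) (by omega)
      · exact hcyc.disj (by omega) (by omega)
      · exact (disj_arc h.ney _).symm
      · exact (hcyc.disj (by omega) (by omega)).symm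
      · exact hcyc.disj (by omega) (by omega)
    · intro i k; fin_cases i <;> fin_cases k
      · exact ⟨x, rfl, y, rfl, h.adj⟩
      · exact touch_arc hax le_rfl haj
      · exact touch_arc hbx le_rfl hbn
      · exact (touch_arc h0 le_rfl ha0).symm
      · exact hcyc.arc_touch ha0 haj
      · exact hcyc.arc_touch_end ha0 hbn
      · exact (touch_arc hyj le_rfl hjb).symm
      · exact (hcyc.arc_touch haj hjb).symm
      · exact hcyc.arc_touch hjb hbn
  refine ⟨a, b - a, by omega, by omega, hax, by rwa [Nat.sub_add_cancel hab.le], ?_, ?_⟩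
  · intro u hu huy
    obtain ⟨i, hi, rfl⟩ := h.posx hu huy
    have h1 := hamin i hi hu
    have h2 := hbmax i hi hu
    exact ⟨i - a, by omega, by rw [Nat.sub_add_cancel h1]⟩
  · intro u hu hux
    obtain ⟨i, hi, rfl⟩ := h.swap.posx hu hux
    by_cases hia : i ≤ a
    · refine ⟨i + n - a, by omega, by omega, ?_⟩
      rw [Nat.sub_add_cancel (by omega), hcyc.per]
    · have hib : b ≤ i := by
        by_contra hc
        exact hY i (by omega) (by omega) hu
      exact ⟨i - a, by omega, by omega, by rw [Nat.sub_add_cancel (by omega)]⟩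

/-- Without a `K₅` or `K₃,₃` minor, the neighbours of `x` and of `y` do not cross on `w`. -/
lemma Hub.sep (h : Hub G U n w x y) (h5 : ¬ MinorIn G U (completeGraph (Fin 5)))
    (h33 : ¬ MinorIn G U (completeBipartiteGraph (Fin 3) (Fin 3))) : Sep G n w x y ∨ Sep G n w y x := by
  by_cases h1 : ∃ u, G.Adj y u ∧ u ≠ x ∧ ¬ G.Adj x u
  · obtain ⟨u, hu, hux, hxu⟩ := h1
    obtain ⟨k, rfl⟩ := h.nby u hu hux
    exact Or.inl ((h.rot k).sep_of_private (by simpa using hu) (by simpa using hxu) h33).rot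
  by_cases h2 : ∃ u, G.Adj x u ∧ u ≠ y ∧ ¬ G.Adj y u
  · obtain ⟨u, hu, hux, hxu⟩ := h2
    obtain ⟨k, rfl⟩ := h.nbx u hu hux
    exact Or.inr ((h.rot k).swap.sep_of_private (by simpa using hu) (by simpa using hxu) h33).rot
  push Not at h1 h2
  -- now `x` and `y` have the same neighbours on `w`
  left
  obtain ⟨u, hu, huy, -⟩ := h.twox x
  obtain ⟨k, rfl⟩ := h.nbx u hu huy
  refine Sep.rot (k := k) ?_
  replace h := h.rot k
  replace hu : G.Adj x ((fun i => w (i + k)) 0) := by simpa using hu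
  generalize (fun i => w (i + k)) = w at h hu
  clear huy
  have hcyc := h.cyc
  have hX : ∀ {i}, G.Adj y (w i) ↔ G.Adj x (w i) := fun {i} =>
    ⟨fun k => h1 _ k (h.nex i), fun k => h2 _ k (h.ney i)⟩
  obtain ⟨u', hu', huy', hne⟩ := h.twox (w 0)
  obtain ⟨i, hi, rfl⟩ := h.posx hu' huy'
  have hi0 : 0 < i := by
    rcases Nat.eq_zero_or_pos i with rfl | hp
    · exact absurd rfl hne
    · exact hp
  -- three common neighbours on `w` give a `K₅` minor, whose branch sets are `x`, `y` and the three
  -- arcs between the common neighbours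
  have h3 : ∀ p q, 0 < p → p < q → q < n → G.Adj x (w p) → G.Adj x (w q) → False := by
    intro p q hp hpq hq hxp hxq
    apply h5
    have hU : ∀ s, w '' s ⊆ U := by
      rintro s _ ⟨i, -, rfl⟩
      exact h.mem i
    refine minorIn_K5 (A := ![{x}, {y}, w '' Set.Ico 0 p, w '' Set.Ico p q, w '' Set.Ico q n]) ?_ ?_ ?_ ?_
    · intro i; fin_cases i
      · simpa using h.memx
      · simpa using h.memy
      all_goals exact hU _
    · intro i; fin_cases i
      · exact conn_singleton x
      · exact conn_singleton y
      · exact conn_interval hcyc.adj _ _ hp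
      · exact conn_interval hcyc.adj _ _ hpq
      · exact conn_interval hcyc.adj _ _ hq
    · intro i j; fin_cases i <;> fin_cases j <;> intro hij <;> first
        | exact absurd hij (by decide)
        | exact disj_arc h.nex _
        | exact disj_arc h.ney _
        | exact hcyc.disj (by omega) (by omega)
        | simpa using h.adj.ne
    · intro i j; fin_cases i <;> fin_cases j <;> intro hij <;> first
        | exact absurd hij (by decide)
        | exact ⟨x, rfl, y, rfl, h.adj⟩
        | exact touch_arc hu le_rfl hp
        | exact touch_arc hxp le_rfl hpq
        | exact touch_arc hxq le_rfl hq
        | exact touch_arc (hX.2 hu) le_rfl hp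
        | exact touch_arc (hX.2 hxp) le_rfl hpq
        | exact touch_arc (hX.2 hxq) le_rfl hq
        | exact hcyc.arc_touch hp hpq
        | exact hcyc.arc_touch hpq hq
        | exact hcyc.arc_touch_end hp hq
  have honly : ∀ j < n, G.Adj x (w j) → j = 0 ∨ j = i := by
    intro j hj hxj
    by_contra hc
    push Not at hc
    rcases lt_or_gt_of_ne hc.2 with k | k
    · exact h3 j i (by omega) k hi hxj hu'
    · exact h3 i j hi0 k hj hu' hxj
  refine ⟨0, i, hi0, hi, hu, hu', fun v hv hvy => ?_, fun v hv hvx => ?_⟩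
  · obtain ⟨j, hj, rfl⟩ := h.posx hv hvy
    rcases honly j hj hv with rfl | rfl
    · exact ⟨0, by omega, rfl⟩
    · exact ⟨j, le_rfl, rfl⟩
  · obtain ⟨j, hj, rfl⟩ := h.swap.posx hv hvx
    rcases honly j hj (hX.1 hv) with rfl | rfl
    · exact ⟨n, hi.le, le_rfl, by simpa using hcyc.per 0⟩
    · exact ⟨j, le_rfl, hi.le, rfl⟩

end Crossing

/-! ### Abstract duals of `3`-connected graphs without `K₅` and `K₃,₃` minor -/

section Duality
variable [Fintype V] {G : SimpleGraph V} {U : Set V} {n : ℕ} {w : ℕ → V} {x y : V}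

lemma Cyc.vec_rot (h : Cyc G n w) (k : ℕ) : vec (fun i => w (i + k)) 0 n = vec w 0 n := by
  induction k with
  | zero => rfl
  | succ k ih =>
    rw [← ih]
    have h3 := h.three
    have h1 : vec (fun i => w (i + k)) 0 (n + 1) = vec (fun i => w (i + k)) 0 n + sg (w k) (w (k + 1)) := by
      rw [vec_succ _ (Nat.zero_le n)]
      congr 2
      · rw [Nat.add_comm n k, h.per]
      · rw [show n + 1 + k = k + 1 + n by omega, h.per]
    have h2 : vec (fun i => w (i + k)) 0 (n + 1) = sg (w k) (w (k + 1)) + vec (fun i => w (i + (k + 1))) 0 n := by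
      rw [vec, ← Finset.range_eq_Ico, Finset.sum_range_succ', add_comm]
      congr 1
      · simp [Nat.add_comm]
      · rw [vec, ← Finset.range_eq_Ico]
        refine Finset.sum_congr rfl fun i _ => ?_
        rw [show i + 1 + k = i + (k + 1) by omega, show i + 1 + 1 + k = i + 1 + (k + 1) by omega]
    have h4 := h1.symm.trans h2
    rw [add_comm] at h4
    exact (add_left_cancel h4).symm

/-- Reinsertion of two adjacent vertices `x`, `y` into the face bounded by `w`, possible when `w`
splits into two arcs, one containing the neighbours of `x` and the other those of `y`. -/
lemma Hub.dual_of_sep (h : Hub G U n w x y) {H : SimpleGraph V} {l r : Sym2 V → ℕ} {c : ℕ}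
    (hH : ∀ a b, H.Adj a b ↔ G.Adj a b ∧ a ≠ x ∧ a ≠ y ∧ b ≠ x ∧ b ≠ y) (hD : Dual H l r)
    (hc : bd H l r (Pi.single c 1) = vec w 0 n) (hS : Sep G n w x y) : ∃ l r, Dual G l r := by
  obtain ⟨k, i, hi0, hin, h0, h1, hX, hY⟩ := hS
  have hcyc0 : Cyc H n w := ⟨h.cyc.three, fun i => (hH _ _).2 ⟨h.cyc.adj i, h.nex _, h.ney _, h.nex _, h.ney _⟩,
    h.cyc.per, h.cyc.inj⟩
  rw [← hcyc0.vec_rot k] at hc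
  replace h := h.rot k
  have hcyc := hcyc0.rot k
  have h0 : G.Adj x ((fun i => w (i + k)) 0) := by simpa using h0
  have h1 : G.Adj x ((fun i => w (i + k)) i) := h1
  have hX : ∀ u, G.Adj x u → u ≠ y → ∃ j ≤ i, (fun i => w (i + k)) j = u := hX
  have hY : ∀ u, G.Adj y u → u ≠ x → ∃ j, i ≤ j ∧ j ≤ n ∧ (fun i => w (i + k)) j = u := hY
  clear hcyc0
  generalize (fun i => w (i + k)) = w at *
  have h3 := hcyc.three
  -- First `x` is inserted by a star. Its last sector then contains all neighbours of `y`, so `y` can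
  -- be inserted into that sector by a second star.
  set G1 := rem G y with hG1
  have hG1' : ∀ a b, G1.Adj a b ↔ G.Adj a b ∧ a ≠ y ∧ b ≠ y := fun _ _ => Iff.rfl
  obtain ⟨l1, r1, j, hD1, hj, hjJ, hjmax, hb1, -⟩ := hD.star hcyc hc (x := x)
    (fun u hu => ((hH _ _).1 hu).2.1 rfl) {i | G.Adj x (w i)} (n - 1) (by omega) G1 (fun u v => by
    rw [hG1', hH]
    constructor
    · rintro ⟨huv, hu, hv⟩
      by_cases hux : u = x
      · subst hux
        obtain ⟨j, hj, rfl⟩ := hX v huv hv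
        exact Or.inr ⟨j, by omega, Or.inr huv, rfl⟩
      · by_cases hvx : v = x
        · subst hvx
          obtain ⟨j, hj, rfl⟩ := hX u huv.symm hu
          exact Or.inr ⟨j, by omega, Or.inr huv.symm, Sym2.eq_swap⟩
        · exact Or.inl ⟨huv, hux, hu, hvx, hv⟩
    · rintro (⟨k1, k2, k3, k4, k5⟩ | ⟨j, hj, hj', he⟩)
      · exact ⟨k1, k3, k5⟩
      · have hxj : G.Adj x (w j) := by
          rcases hj' with rfl | hj'
          · exact h0
          · exact hj'
        rcases Sym2.eq_iff.1 he with ⟨rfl, rfl⟩ | ⟨rfl, rfl⟩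
        · exact ⟨hxj, h.adj.ne, h.ney _⟩
        · exact ⟨hxj.symm, h.ney _, h.adj.ne⟩)
  obtain rfl : j = i := by
    have k1 := hjmax i h1 (by omega)
    have k2 : G.Adj x (w j) := by
      rcases hjJ with rfl | hj'
      · exact h0
      · exact hj'
    obtain ⟨j', hj', he⟩ := hX _ k2 (h.ney _)
    have := hcyc.inj j' (by omega) j (by omega) he
    omega
  -- the last face around `x` is bounded by the cycle `x, w j, …, w n`
  have hwn : w n = w 0 := by simpa using hcyc.per 0
  have hP : Pth G1 (n - j) (fun t => w (t + j)) := by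
    refine ⟨fun t ht => ?_, fun s hs t ht hst => ?_⟩
    · have := h.cyc.adj (t + j)
      rw [show t + j + 1 = t + 1 + j by omega] at this
      exact ⟨this, h.ney _, h.ney _⟩
    · have key : ∀ s ≤ n - j, ∃ s' < n, w s' = w (s + j) ∧ (s + j = n ∧ s' = 0 ∨ s + j < n ∧ s' = s + j) := by
        intro s hs
        rcases Nat.lt_or_ge (s + j) n with k | k
        · exact ⟨s + j, k, rfl, Or.inr ⟨k, rfl⟩⟩
        · have : s + j = n := by omega
          exact ⟨0, by omega, by rw [this, hwn], Or.inl ⟨this, rfl⟩⟩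
      obtain ⟨s', hs1, hs2, hs3⟩ := key s hs
      obtain ⟨t', ht1, ht2, ht3⟩ := key t ht
      have := hcyc.inj s' hs1 t' ht1 (by rw [hs2, ht2]; exact hst)
      omega
  have hP2 := hP.cons (u := x) ⟨by simpa using h1, h.adj.ne, h.ney _⟩ (fun i _ => h.nex _)
  have hC2 := hP2.close (by omega) (by
    have : n - j + 1 - 1 + j = n := by omega
    rw [if_neg (by omega), if_pos rfl, this, hwn]
    exact ⟨h0.symm, h.ney _, h.adj.ne⟩)
  set N := n - j + 1 + 1 with hN
  set w2 : ℕ → V := fun i => if i % N = 0 then x else w (i % N - 1 + j) with hw2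
  have hC2 : Cyc G1 N w2 := hC2
  have e0 : w2 0 = x := by simp [w2]
  have eN : w2 N = x := by simp [w2]
  have et : ∀ t, t < n - j + 1 → w2 (t + 1) = w (t + j) := by
    intro t ht
    simp only [w2]
    rw [Nat.mod_eq_of_lt (by omega), if_neg (by omega)]
    rfl
  have hmid : ∀ m, m ≤ n - j → vec w2 1 (m + 1) = vec w j (m + j) := by
    intro m
    induction m with
    | zero => intro _; simp [vec]
    | succ m ih =>
      intro hm
      rw [vec_succ _ (by omega), ih (by omega), show m + 1 + j = m + j + 1 by omega, vec_succ _ (by omega),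
        et m (by omega), et (m + 1) (by omega), show m + 1 + j = m + j + 1 by omega]
  have hvec : bd G1 l1 r1 (Pi.single c 1) = vec w2 0 N := by
    rw [hb1, fan, hN, vec_succ _ (by omega), vec_add w2 (show 0 ≤ 1 by omega) (show 1 ≤ n - j + 1 by omega),
      hmid _ le_rfl, ← hN, eN, et (n - j) (by omega), show n - j + j = n by omega]
    have : vec w2 0 1 = sg x (w j) := by
      rw [vec_succ _ (by omega), e0, et 0 (by omega)]
      simp [vec]
    rw [this, sg_comm (w n) x]
  obtain ⟨l2, r2, -, hD2, -⟩ := hD1.star hC2 hvec (x := y) (fun u hu => hu.2.1 rfl)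
    {t | G.Adj y (w2 t)} (N - 1) (by omega) G (fun u v => by
    rw [hG1']
    have hyn : ∀ v, G.Adj y v → ∃ t ≤ N - 1, w2 t = v := by
      intro v hv
      by_cases hvx : v = x
      · exact ⟨0, by omega, by rw [e0, hvx]⟩
      · obtain ⟨t, k1, k2, rfl⟩ := hY v hv hvx
        exact ⟨t - j + 1, by omega, by rw [et _ (by omega), Nat.sub_add_cancel k1]⟩
    constructor
    · intro huv
      by_cases hu : u = y
      · subst hu
        obtain ⟨t, ht, rfl⟩ := hyn v huv
        exact Or.inr ⟨t, ht, Or.inr huv, rfl⟩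
      · by_cases hv : v = y
        · subst hv
          obtain ⟨t, ht, rfl⟩ := hyn u huv.symm
          exact Or.inr ⟨t, ht, Or.inr huv.symm, Sym2.eq_swap⟩
        · exact Or.inl ⟨huv, hu, hv⟩
    · rintro (⟨k, -⟩ | ⟨t, ht, ht', he⟩)
      · exact k
      · have hyt : G.Adj y (w2 t) := by
          rcases ht' with rfl | ht'
          · rw [e0]; exact h.adj.symm
          · exact ht'
        rcases Sym2.eq_iff.1 he with ⟨rfl, rfl⟩ | ⟨rfl, rfl⟩
        · exact hyt
        · exact hyt.symm)
  exact ⟨l2, r2, hD2⟩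

/-- A complete graph on four vertices has a dual. -/
lemma dual_K4 (h : Tri G U) (h4 : U.ncard = 4) : ∃ l r, Dual G l r := by
  obtain ⟨x, hx⟩ : U.Nonempty := Set.nonempty_of_ncard_ne_zero (by omega)
  obtain ⟨p, q, s, hpq, hps, hqs, hU⟩ := Set.ncard_eq_three.1
    (show (U \ {x}).ncard = 3 by rw [Set.ncard_sdiff_singleton_of_mem hx]; omega)
  have hmem : ∀ {a}, a ∈ U ↔ a = x ∨ a = p ∨ a = q ∨ a = s := by
    intro a
    have h1 : a ∈ U \ {x} ↔ a ∈ ({p, q, s} : Set V) := by rw [hU]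
    simp only [Set.mem_sdiff, Set.mem_singleton_iff, Set.mem_insert_iff] at h1
    by_cases hax : a = x
    · subst hax; simp [hx]
    · simpa [hax] using h1
  have hxp : p ≠ x := fun k => by have : p ∈ U \ {x} := by rw [hU]; simp
                                  exact this.2 k
  have hxq : q ≠ x := fun k => by have : q ∈ U \ {x} := by rw [hU]; simp
                                  exact this.2 k
  have hxs : s ≠ x := fun k => by have : s ∈ U \ {x} := by rw [hU]; simp
                                  exact this.2 k
  have hfour : ∀ a b c d, a ∈ U → (∀ t ∈ U, t = a ∨ t = b ∨ t = c ∨ t = d) → G.Adj a b := by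
    intro a b c d ha hall
    obtain ⟨t, ht, h1, h2⟩ := h.nbr ha c d
    rcases hall t (h.adj _ _ ht.symm) with rfl | rfl | rfl | rfl
    · exact absurd rfl ht.ne
    · exact ht
    · exact absurd rfl h1
    · exact absurd rfl h2
  have axp : G.Adj x p := hfour x p q s hx fun t ht => by have := hmem.1 ht; tauto
  have axq : G.Adj x q := hfour x q p s hx fun t ht => by have := hmem.1 ht; tauto
  have axs : G.Adj x s := hfour x s p q hx fun t ht => by have := hmem.1 ht; tauto
  have apq : G.Adj p q := hfour p q x s (hmem.2 (by simp)) fun t ht => by have := hmem.1 ht; tauto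
  have aps : G.Adj p s := hfour p s x q (hmem.2 (by simp)) fun t ht => by have := hmem.1 ht; tauto
  have aqs : G.Adj q s := hfour q s x p (hmem.2 (by simp)) fun t ht => by have := hmem.1 ht; tauto
  -- The triangle on `p`, `q`, `s` arises from the empty graph by two pendant edges and one split of
  -- the outer face; then `x` is inserted by a star.
  let G1 : SimpleGraph V := fromEdgeSet {s(p, q)}
  let G2 : SimpleGraph V := fromEdgeSet {s(p, q), s(s, q)}
  let G3 : SimpleGraph V := fromEdgeSet {s(p, q), s(s, q), s(p, s)}
  have hD0 : Dual (⊥ : SimpleGraph V) (fun _ => 0) (fun _ => 0) := dual_of_acyclic fun t ht => by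
    funext e
    by_contra hne
    have := ht.1 e hne
    simp at this
  obtain ⟨l1, r1, hD1, hl1, hr1, -, hb1⟩ := hD0.pendant (G' := G1) (x := p) (a := q) (fun _ h => h)
    (fun u v => by
      simp only [G1, fromEdgeSet_adj, Set.mem_singleton_iff, bot_adj, false_or, and_iff_left_iff_imp]
      intro h; rcases Sym2.eq_iff.1 h with ⟨rfl, rfl⟩ | ⟨rfl, rfl⟩
      exacts [hpq, hpq.symm]) 0
  obtain ⟨l2, r2, hD2, hl2, hr2, he2, hb2⟩ := hD1.pendant (G' := G2) (x := s) (a := q)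
    (fun u hu => by
      have := hu.1
      rcases Sym2.eq_iff.1 this with ⟨k, -⟩ | ⟨k, -⟩
      exacts [hps k.symm, hqs k.symm])
    (fun u v => by
      simp only [G1, G2, fromEdgeSet_adj, Set.mem_singleton_iff, Set.mem_insert_iff]
      constructor
      · tauto
      · rintro (k | k)
        · exact ⟨Or.inl k.1, k.2⟩
        · refine ⟨Or.inr k, ?_⟩
          rcases Sym2.eq_iff.1 k with ⟨rfl, rfl⟩ | ⟨rfl, rfl⟩
          exacts [hqs.symm, hqs]) 0
  have hne : s(p, q) ≠ s(s, q) := by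
    intro k
    rw [Sym2.eq_iff] at k
    grind
  have hP : ∀ e, (sg p q + sg s q) e ≠ 0 → e = s(p, q) ∨ e = s(s, q) := by
    intro e he
    rcases add_ne_zero_or he with k | k
    · exact Or.inl (sg_ne k)
    · exact Or.inr (sg_ne k)
  have hG3 : ∀ e, e ∈ G3.edgeSet ↔ e = s(p, q) ∨ e = s(s, q) ∨ e = s(p, s) := by
    intro e
    simp only [G3, edgeSet_fromEdgeSet, Set.mem_sdiff, Set.mem_insert_iff, Set.mem_singleton_iff]
    refine ⟨fun k => k.1, fun k => ⟨k, ?_⟩⟩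
    rcases k with rfl | rfl | rfl <;> simp [hpq, hqs.symm, hps]
  obtain ⟨l3, r3, hD3, hb3⟩ := hD2.split (G' := G3) (x := p) (a := s) (P := sg p q + sg s q) (c := 0)
    (fun hu => by
      rcases hu.1 with k | k
      · rcases Sym2.eq_iff.1 k with ⟨-, k⟩ | ⟨k, -⟩
        exacts [hqs k.symm, hpq k]
      · rcases Sym2.eq_iff.1 (Set.mem_singleton_iff.1 k) with ⟨k, -⟩ | ⟨k, -⟩
        exacts [hps k, hpq k])
    (fun u v => by
      rw [← mem_edgeSet, hG3]
      simp only [G2, fromEdgeSet_adj, Set.mem_singleton_iff, Set.mem_insert_iff]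
      rw [← or_assoc]
      refine or_congr_left ⟨fun k => ⟨k, ?_⟩, fun k => k.1⟩
      rcases k with k | k <;> rcases Sym2.eq_iff.1 k with ⟨rfl, rfl⟩ | ⟨rfl, rfl⟩
      exacts [hpq, hpq.symm, hqs.symm, hqs])
    (by
      refine ⟨fun e he => ?_, fun v => ?_⟩
      · rw [hG3]
        rcases add_ne_zero_or he with k | k
        · have := hP e k; tauto
        · have := sg_ne k; tauto
      · rw [bdry_add, bdry_add, bdry_sg hpq, bdry_sg hqs.symm, bdry_sg hps]
        linear_combination z2_add (dl p v) + z2_add (dl q v) + z2_add (dl s v))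
    (fun e he => by
      simp only [G2, edgeSet_fromEdgeSet, Set.mem_sdiff, Set.mem_insert_iff, Set.mem_singleton_iff]
      rcases hP e he with rfl | rfl <;> simp [hpq, hqs.symm])
    (fun e he => by
      left
      rcases hP e he with rfl | rfl
      · rw [(he2 _ hne).1, hl1]
      · exact hl2)
  have hb0 : bd (⊥ : SimpleGraph V) (fun _ => 0) (fun _ => 0) (Pi.single 0 1) = 0 := by
    funext e; simp [bd]
  rw [hb2, hb1, hb0, zero_add] at hb3
  let w : ℕ → V := fun i => if i % 3 = 0 then p else if i % 3 = 1 then q else s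
  have hw : Cyc G3 3 w := by
    refine ⟨le_rfl, fun i => ?_, fun i => by simp [w], fun i hi j hj hij => ?_⟩
    · rw [← mem_edgeSet, hG3]
      have h3 : i % 3 = 0 ∨ i % 3 = 1 ∨ i % 3 = 2 := by omega
      rcases h3 with k | k | k
      · have : (i + 1) % 3 = 1 := by omega
        simp [w, k, this]
      · have : (i + 1) % 3 = 2 := by omega
        simp only [w, k, this]; simp [Sym2.eq_swap]
      · have : (i + 1) % 3 = 0 := by omega
        simp only [w, k, this]; simp [Sym2.eq_swap]
    · interval_cases i <;> interval_cases j <;> simp_all [w]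
  obtain ⟨l, r, -, hD, -⟩ := hD3.star hw (hb3.trans (by
      simp only [vec, Finset.sum_Ico_succ_top, Nat.zero_le, Finset.Ico_self, Finset.sum_empty, w]
      simp [sg_comm s q, sg_comm s p])) (x := x) (fun u hu => by
      have := (hG3 s(x, u)).1 hu
      rcases this with k | k | k <;> rcases Sym2.eq_iff.1 k with ⟨k, -⟩ | ⟨k, -⟩
      exacts [hxp k.symm, hxq k.symm, hxs k.symm, hxq k.symm, hxp k.symm, hxs k.symm])
    Set.univ 2 (by omega) G (fun u v => by
      have hwx : (∃ j ≤ 2, (j = 0 ∨ j ∈ (Set.univ : Set ℕ)) ∧ s(u, v) = s(x, w j)) ↔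
          s(u, v) = s(x, p) ∨ s(u, v) = s(x, q) ∨ s(u, v) = s(x, s) := by
        constructor
        · rintro ⟨j, hj, -, he⟩
          interval_cases j
          · exact Or.inl he
          · exact Or.inr (Or.inl he)
          · exact Or.inr (Or.inr he)
        · rintro (he | he | he)
          · exact ⟨0, by omega, Or.inl rfl, he⟩
          · exact ⟨1, by omega, Or.inr trivial, he⟩
          · exact ⟨2, by omega, Or.inr trivial, he⟩
      rw [hwx, ← mem_edgeSet (G := G3), hG3]
      constructor
      · intro huv
        have h1 := hmem.1 (h.adj _ _ huv)
        have h2 := hmem.1 (h.adj _ _ huv.symm)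
        have h3 := huv.ne
        rcases h1 with rfl | rfl | rfl | rfl <;> rcases h2 with rfl | rfl | rfl | rfl <;>
          first | exact absurd rfl h3 | simp
      · have hes : ∀ a b, G.Adj a b → s(u, v) = s(a, b) → G.Adj u v := by
          intro a b hab he
          rw [← mem_edgeSet, he]; exact hab
        rintro ((k | k | k) | k | k | k)
        exacts [hes _ _ apq k, hes _ _ aqs.symm k, hes _ _ aps k, hes _ _ axp k, hes _ _ axq k,
          hes _ _ axs k])
  exact ⟨l, r, hD⟩

/-- A `3`-connected graph without `K₅` and `K₃,₃` minor has an abstract dual: by induction, a graph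
obtained by contracting a suitable edge `x y` has one, and the contraction can be undone. -/
lemma exists_dual : ∀ (k : ℕ) (U : Set V) (G : SimpleGraph V), U.ncard = k → Tri G U →
    ¬ MinorIn G U (completeGraph (Fin 5)) → ¬ MinorIn G U (completeBipartiteGraph (Fin 3) (Fin 3)) →
    ∃ l r, Dual G l r := by
  intro k
  induction k with
  | zero => intro U G hk h; have := h.card; omega
  | succ k ih =>
    intro U G hk h m5 m33
    have h4 := h.card
    rcases Nat.lt_or_ge 4 U.ncard with h5 | h5
    swap
    · exact dual_K4 h (by omega)
    obtain ⟨x, y, hxy, hgood⟩ := h.exists_edge h5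
    have hx := h.adj _ _ hxy
    have hy := h.adj _ _ hxy.symm
    have hK := h.con h5 hxy hgood
    obtain ⟨l, r, hD⟩ := ih (U \ {y}) (con G x y) (by rw [Set.ncard_sdiff_singleton_of_mem hy]; omega) hK
      (fun m => m5 (m.of_con hxy hx hy)) (fun m => m33 (m.of_con hxy hx hy))
    -- deleting the contracted vertex leaves a face bounded by a cycle `w` through all neighbours of
    -- `x` and `y`; their positions on `w` allow both vertices to be put back into this face
    obtain ⟨l', r', c, n, w, hD', hw, hc, hnb⟩ := hD.rem hK (z := x) ⟨hx, hxy.ne⟩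
    have hH : ∀ a b, (rem (con G x y) x).Adj a b ↔ G.Adj a b ∧ a ≠ x ∧ a ≠ y ∧ b ≠ x ∧ b ≠ y := by
      intro a b
      constructor
      · rintro ⟨⟨k1, k2, k3, k4⟩, k5, k6⟩
        rcases k4 with k | k | k
        · exact ⟨k, k5, k2, k6, k3⟩
        · exact absurd k.1 k5
        · exact absurd k.1 k6
      · rintro ⟨k1, k2, k3, k4, k5⟩
        exact ⟨⟨k1.ne, k3, k5, Or.inl k1⟩, k2, k4⟩
    have hub : Hub G U n w x y :=
      { cyc := ⟨hw.three, fun i => ((hH _ _).1 (hw.adj i)).1, hw.per, hw.inj⟩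
        mem := fun i => h.adj _ _ ((hH _ _).1 (hw.adj i)).1
        memx := hx
        memy := hy
        adj := hxy
        nex := fun i => ((hH _ _).1 (hw.adj i)).2.1
        ney := fun i => ((hH _ _).1 (hw.adj i)).2.2.1
        nbx := fun u hu huy => hnb u ⟨hu.ne, hxy.ne, huy, Or.inl hu⟩
        nby := fun u hu hux => hnb u ⟨hux.symm, hxy.ne, hu.ne', Or.inr (Or.inl ⟨rfl, hu⟩)⟩
        twox := fun p => h.nbr hx y p
        twoy := fun p => h.nbr hy x p }
    rcases hub.sep m5 m33 with hs | hs
    · exact hub.dual_of_sep hH hD' hc hs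
    · refine hub.swap.dual_of_sep (fun a b => ?_) hD' hc hs
      rw [hH]; tauto

end Duality

/-! ### Counting edges and faces -/

section Count
variable [Fintype V] {K : SimpleGraph V} {U : Set V} {l r : Sym2 V → ℕ}

/-- The boundary of a chain has sum zero, as every edge is counted at both of its ends. -/
lemma sum_bdry {p : Sym2 V → ZMod 2} (hp : ∀ e, p e ≠ 0 → e ∈ K.edgeSet) : ∑ v, bdry p v = 0 := by
  classical
  simp only [bdry]
  rw [← Finset.sum_product']
  refine Finset.sum_involution (fun x _ => (x.2, x.1)) ?_ ?_ ?_ ?_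
  · intro x _
    simp only [Sym2.eq_swap (a := x.2)]
    exact z2_add _
  · intro x _ hx hc
    have h1 : x.2 = x.1 := congrArg Prod.fst hc
    have := hp _ hx
    rw [h1] at this
    exact K.loopless.irrefl _ this
  · simp
  · simp

/-- The boundary as a linear map, recorded at the vertices of `S`, together with the values on `F`. -/
noncomputable def probe (F : Set (Sym2 V)) (S : Set V) :
    (Sym2 V → ZMod 2) →ₗ[ZMod 2] ((F → ZMod 2) × (S → ZMod 2)) where
  toFun p := (fun e => p e, fun v => bdry p v)
  map_add' p q := by
    refine Prod.ext rfl (funext fun v => ?_)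
    exact bdry_add _ _ _
  map_smul' c p := by
    refine Prod.ext rfl (funext fun v => ?_)
    simp [bdry, Finset.mul_sum]

/-- Rank-nullity: each vertex of `S` lowers the dimension of the space of chains vanishing on `F` by
at most one. -/
lemma finrank_ker_probe (F : Set (Sym2 V)) (S : Set V) :
    Fᶜ.ncard ≤ Module.finrank (ZMod 2) (LinearMap.ker (probe F S)) + S.ncard := by
  classical
  have h1 := LinearMap.finrank_range_add_finrank_ker (probe F S)
  have h2 := Submodule.finrank_le (LinearMap.range (probe F S))
  rw [Module.finrank_prod, Module.finrank_fintype_fun_eq_card, Module.finrank_fintype_fun_eq_card,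
    ← Nat.card_eq_fintype_card, ← Nat.card_eq_fintype_card, Nat.card_coe_set_eq, Nat.card_coe_set_eq] at h2
  rw [Module.finrank_fintype_fun_eq_card, ← Nat.card_eq_fintype_card] at h1
  have h3 := Set.ncard_add_ncard_compl F
  omega

lemma Tri.three_le (hK : Tri K U) {x : V} (hx : x ∈ U) : 3 ≤ (K.neighborSet x).ncard := by
  obtain ⟨a, ha, -⟩ := hK.nbr hx x x
  obtain ⟨b, hb, hba, -⟩ := hK.nbr hx a a
  obtain ⟨c, hc, hca, hcb⟩ := hK.nbr hx a b
  have : ({a, b, c} : Set V) ⊆ K.neighborSet x := by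
    rintro y (rfl | rfl | rfl) <;> assumption
  rw [← Set.ncard_eq_three.2 ⟨a, b, c, hba.symm, hca.symm, hcb.symm, rfl⟩]
  exact Set.ncard_le_ncard this (Set.toFinite _)

lemma Tri.three_mul_le (hK : Tri K U) : 3 * U.ncard ≤ 2 * K.edgeSet.ncard := by
  classical
  have h1 := K.sum_degrees_eq_twice_card_edges
  rw [← SimpleGraph.coe_edgeFinset, Set.ncard_coe_finset, ← h1, Set.ncard_eq_toFinset_card', mul_comm,
    ← smul_eq_mul, ← Finset.sum_const]
  refine (Finset.sum_le_sum fun x hx => ?_).trans (Finset.sum_le_sum_of_subset (Finset.subset_univ _))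
  rw [← card_neighborSet_eq_degree, ← Nat.card_eq_fintype_card, Nat.card_coe_set_eq]
  exact hK.three_le (by simpa using hx)

/-- The boundary of a single face. -/
noncomputable def face (K : SimpleGraph V) (l r : Sym2 V → ℕ) (i : ℕ) : Sym2 V → ZMod 2 :=
  bd K l r (Pi.single i 1)

lemma face_mem {e : Sym2 V} (he : e ∈ K.edgeSet) (i : ℕ) :
    face K l r i e = (if l e = i then 1 else 0) + (if r e = i then 1 else 0) := by
  rw [face, bd_mem he]
  simp [Pi.single_apply]

lemma face_not_mem {e : Sym2 V} (he : e ∉ K.edgeSet) {h : ℕ → ZMod 2} :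
    bd K l r h e = 0 := by
  simp [bd, he]

/-- The boundary of a face not incident with `e₀` contains a cycle, so it has at least seven edges
if all cycles avoiding `e₀` have length at least seven. -/
lemma seven_le_face (hD : Dual K l r) {e₀ : Sym2 V}
    (hc : ∀ n w, Cyc K n w → (∀ i, s(w i, w (i + 1)) ≠ e₀) → 7 ≤ n) {i : ℕ}
    (h0 : face K l r i ≠ 0) (h1 : face K l r i e₀ = 0) :
    7 ≤ {e | e ∈ K.edgeSet \ {e₀} ∧ face K l r i e ≠ 0}.ncard := by
  classical
  obtain ⟨n, w, hw, hne⟩ := (hD.isZ (Pi.single i 1)).exists_cyc h0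
  have h7 := hc n w hw fun i hi => hne i (hi ▸ h1)
  have h2 : ((fun j => s(w j, w (j + 1))) '' (Set.Iio n)).ncard = n := by
    have hinj : Set.InjOn (fun j => s(w j, w (j + 1))) (Set.Iio n) := fun a ha b hb => hw.edge_inj ha hb
    rw [hinj.ncard_image, Set.ncard_Iio_nat]
  rw [← h2] at h7
  refine h7.trans (Set.ncard_le_ncard ?_ (Set.toFinite _))
  rintro _ ⟨j, -, rfl⟩
  refine ⟨⟨hw.adj j, fun hj => hne j ?_⟩, hne j⟩
  have hj' : s(w j, w (j + 1)) = e₀ := hj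
  rw [hj']
  exact h1

/-- Euler's formula: a `3`-connected planar graph cannot have all its cycles off a given edge of
length at least seven. -/
lemma no_dual_of_long (hK : Tri K U) (hD : Dual K l r) {u v : V} (huv : K.Adj u v)
    (hc : ∀ n w, Cyc K n w → (∀ i, s(w i, w (i + 1)) ≠ s(u, v)) → 7 ≤ n) : False := by
  classical
  set e₀ : Sym2 V := s(u, v) with he₀
  have he : e₀ ∈ K.edgeSet := huv
  let E' : Finset (Sym2 V) := K.edgeFinset.erase e₀
  let Fs : Finset ℕ := (K.edgeFinset.image l ∪ K.edgeFinset.image r).filter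
    fun i => (i ≠ l e₀ ∧ i ≠ r e₀) ∧ face K l r i ≠ 0
  have hE' : E'.card + 1 = K.edgeSet.ncard := by
    rw [← SimpleGraph.coe_edgeFinset, Set.ncard_coe_finset]
    exact Finset.card_erase_add_one (by simpa using he)
  -- every edge lies on at most two faces, and every face counted has at least seven edges
  have hcount : Fs.card * 7 ≤ E'.card * 2 := by
    refine Finset.card_mul_le_card_mul (fun i e => face K l r i e ≠ 0) (fun i hi => ?_) fun e he' => ?_
    · simp only [Fs, Finset.mem_filter] at hi
      have := seven_le_face hD hc hi.2.2 (by
        rw [face_mem he, if_neg hi.2.1.1.symm, if_neg hi.2.1.2.symm, add_zero])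
      rw [← Set.ncard_coe_finset]
      refine this.trans (Set.ncard_le_ncard ?_ (Set.toFinite _))
      rintro e ⟨⟨h1, h2⟩, h3⟩
      have h2' : e ≠ e₀ := h2
      simp [Finset.bipartiteAbove, E', h1, h2', h3]
    · have he1 : e ∈ K.edgeSet := by simpa using Finset.mem_of_mem_erase he'
      refine (Finset.card_le_card (t := {l e, r e}) fun i hi => ?_).trans Finset.card_le_two
      simp only [Finset.bipartiteBelow, Finset.mem_filter] at hi
      rw [face_mem he1] at hi
      by_contra hcon
      simp only [Finset.mem_insert, Finset.mem_singleton, not_or] at hcon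
      exact hi.2 (by rw [if_neg (Ne.symm hcon.1), if_neg (Ne.symm hcon.2), add_zero])
  -- the cycle space of `K - u v` is spanned by these faces
  obtain ⟨x₀, hx₀⟩ : U.Nonempty := ⟨u, hK.adj _ _ huv⟩
  have hker : LinearMap.ker (probe ((E' : Set (Sym2 V))ᶜ) (U \ {x₀})) ≤
      Submodule.span (ZMod 2) ((Fs.image (face K l r) : Finset (Sym2 V → ZMod 2)) : Set (Sym2 V → ZMod 2)) := by
    intro p hp
    rw [LinearMap.mem_ker] at hp
    have hp1 : ∀ e, e ∉ E' → p e = 0 := fun e h =>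
      congrFun (congrArg Prod.fst hp) ⟨e, by simpa using h⟩
    have hp2 : ∀ v, v ∈ U → v ≠ x₀ → bdry p v = 0 := fun v h h' =>
      congrFun (congrArg Prod.snd hp) ⟨v, h, h'⟩
    have hpe : ∀ e, p e ≠ 0 → e ∈ K.edgeSet := fun e h => by
      have : e ∈ E' := by_contra fun h' => h (hp1 e h')
      simpa using Finset.mem_of_mem_erase this
    have hp3 : ∀ v, v ≠ x₀ → bdry p v = 0 := by
      intro v h
      by_cases hv : v ∈ U
      · exact hp2 v hv h
      · exact Finset.sum_eq_zero fun u _ => by_contra fun h' => hv (hK.adj _ _ (hpe _ h'))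
    have hZ : IsZ K p := by
      refine ⟨hpe, fun v => ?_⟩
      by_cases hv : v = x₀
      · subst hv
        rw [← sum_bdry hpe, Finset.sum_eq_single v (fun b _ hb => hp3 b hb) (by simp)]
      · exact hp3 v hv
    obtain ⟨h, h0, rfl⟩ := hD.exists_zero hZ (l e₀)
    have h0' : h (r e₀) = 0 := by
      have := hp1 e₀ (by simp [E'])
      rwa [bd_mem he, h0, zero_add] at this
    have hsum : bd K l r h = ∑ i ∈ K.edgeFinset.image l ∪ K.edgeFinset.image r, h i • face K l r i := by
      funext e
      rw [Finset.sum_apply]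
      by_cases hee : e ∈ K.edgeSet
      · simp only [Pi.smul_apply, face_mem hee, smul_eq_mul, mul_add, mul_ite, mul_one, mul_zero,
          Finset.sum_add_distrib, Finset.sum_ite_eq]
        rw [bd_mem hee, if_pos, if_pos]
        · exact Finset.mem_union_right _ (Finset.mem_image_of_mem _ (by simpa using hee))
        · exact Finset.mem_union_left _ (Finset.mem_image_of_mem _ (by simpa using hee))
      · rw [face_not_mem hee]
        refine (Finset.sum_eq_zero fun i _ => ?_).symm
        rw [Pi.smul_apply, face, face_not_mem hee, smul_zero]
    rw [hsum]
    refine Submodule.sum_mem _ fun i hi => ?_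
    by_cases h1 : i = l e₀
    · rw [h1, h0, zero_smul]; exact Submodule.zero_mem _
    by_cases h2 : i = r e₀
    · rw [h2, h0', zero_smul]; exact Submodule.zero_mem _
    by_cases h3 : face K l r i = 0
    · rw [h3, smul_zero]; exact Submodule.zero_mem _
    refine Submodule.smul_mem _ _ (Submodule.subset_span ?_)
    exact Finset.mem_coe.2 (Finset.mem_image_of_mem _ (Finset.mem_filter.2 ⟨hi, ⟨h1, h2⟩, h3⟩))
  -- With `n` vertices, `m` edges and `f` counted faces, `m - 1 ≤ f + (n - 1)`, while `7 f ≤ 2 (m - 1)`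
  -- and `3 n ≤ 2 m`. Multiplying out gives `m ≤ -6`.
  have h1 := finrank_ker_probe ((E' : Set (Sym2 V))ᶜ) (U \ {x₀})
  have h2 := Submodule.finrank_mono hker
  have h3 := finrank_span_finset_le_card (R := ZMod 2) (Fs.image (face K l r))
  have h4 : (Fs.image (face K l r)).card ≤ Fs.card := Finset.card_image_le
  rw [compl_compl, Set.ncard_coe_finset, Set.ncard_sdiff_singleton_of_mem hx₀] at h1
  have h5 := hK.three_mul_le
  have h6 := hK.card
  have h7 : Set.finrank (ZMod 2) ((Fs.image (face K l r) : Finset (Sym2 V → ZMod 2)) : Set (Sym2 V → ZMod 2)) =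
    Module.finrank (ZMod 2) (Submodule.span (ZMod 2)
      ((Fs.image (face K l r) : Finset (Sym2 V → ZMod 2)) : Set (Sym2 V → ZMod 2))) := rfl
  rw [h7] at h3
  omega

end Count

/-! ### From minimum degree three to a `3`-connected torso; planar graphs of girth at least seven -/

section Reduction
variable {Γ : SimpleGraph V} {S A : Set V} {u v : V}

/-- `u` and `v` lie in a connected set of vertices avoiding `A`. -/
def Link (Γ : SimpleGraph V) (A : Set V) (u v : V) : Prop :=
  ∃ L, Conn Γ L ∧ u ∈ L ∧ v ∈ L ∧ Disjoint L A

/-- A nonempty piece `A` of `Γ` attached to the rest only at the two linked vertices `u` and `v`. -/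
structure Piece (Γ : SimpleGraph V) (S A : Set V) (u v : V) : Prop where
  nonempty : A.Nonempty
  sub : A ⊆ S
  hu : u ∉ A
  hv : v ∉ A
  huv : u ≠ v
  bdy : ∀ a ∈ A, ∀ b, Γ.Adj a b → b ∈ A ∨ b = u ∨ b = v
  link : Link Γ A u v

lemma conn_pair {a b : V} (h : Γ.Adj a b) : Conn Γ {a, b} := by
  rw [Set.pair_comm]
  exact (conn_singleton a).insert rfl h

lemma Link.symm (h : Link Γ A u v) : Link Γ A v u := by
  obtain ⟨L, h1, h2, h3, h4⟩ := h
  exact ⟨L, h1, h3, h2, h4⟩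

/-- Linkage is transitive, since the union of two overlapping connected sets is connected. -/
lemma Link.trans {x : V} (h : Link Γ A u v) (h' : Link Γ A v x) : Link Γ A u x := by
  obtain ⟨L, h1, h2, h3, h4⟩ := h
  obtain ⟨M, k1, k2, k3, k4⟩ := h'
  by_cases hx : x ∈ L
  · exact ⟨L, h1, h2, hx, h4⟩
  by_cases hu : u ∈ M
  · exact ⟨M, k1, hu, k3, k4⟩
  -- a connected set containing `v` together with an overlapping one is connected
  refine ⟨L ∪ M, conn_of_cut ⟨u, Or.inl h2⟩ fun D hD ⟨d, hd⟩ ⟨e, he⟩ => ?_, Or.inl h2, Or.inr k3, ?_⟩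
  · have key : ∀ N, N ⊆ L ∪ M → Conn Γ N → (N ∩ D).Nonempty → (N \ D).Nonempty →
        ∃ a ∈ D, ∃ b ∈ (L ∪ M) \ D, Γ.Adj a b := by
      rintro N hN hc h5 ⟨y, hy⟩
      obtain ⟨a, ha, b, hb, hab⟩ := conn_cut hc Set.inter_subset_left h5 ⟨y, hy.1, fun h => hy.2 h.2⟩
      exact ⟨a, ha.2, b, ⟨hN hb.1, fun h => hb.2 ⟨hb.1, h⟩⟩, hab⟩
    by_cases hv : v ∈ D
    · rcases he.1 with h | h
      · exact key L Set.subset_union_left h1 ⟨v, h3, hv⟩ ⟨e, h, he.2⟩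
      · exact key M Set.subset_union_right k1 ⟨v, k2, hv⟩ ⟨e, h, he.2⟩
    · rcases hD hd with h | h
      · exact key L Set.subset_union_left h1 ⟨d, h, hd⟩ ⟨v, h3, hv⟩
      · exact key M Set.subset_union_right k1 ⟨d, h, hd⟩ ⟨v, k2, hv⟩
  · exact Set.disjoint_union_left.2 ⟨h4, k4⟩

lemma exists_nbr_ne [Finite V] {a : V} (h : 3 ≤ (Γ.neighborSet a).ncard) (p q : V) :
    ∃ c, Γ.Adj a c ∧ c ≠ p ∧ c ≠ q := by
  by_contra hc
  push Not at hc
  have : Γ.neighborSet a ⊆ {p, q} := by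
    intro c h
    by_cases hp : c = p
    · exact Or.inl hp
    · exact Or.inr (hc c h hp)
  have := (Set.ncard_le_ncard this (Set.toFinite _)).trans (ncard_pair_le' p q)
  omega

section Minimal
variable [Fintype V] (hdeg : ∀ s ∈ S, 3 ≤ (Γ.neighborSet s).ncard) (hA : Piece Γ S A u v)
  (hmin : ∀ A' u' v', Piece Γ S A' u' v' → A.ncard ≤ A'.ncard)
include hdeg hA hmin

/-- A smallest piece contains no set attached at a single vertex. -/
lemma Piece.no_pendant {B : Set V} (hB : B ⊆ A) (hne : B.Nonempty) {q : V}
    (hq : ∀ b ∈ B, ∀ c, Γ.Adj b c → c ∈ B ∨ c = q) : False := by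
  obtain ⟨b, hb, c, hbc, hall⟩ : ∃ b ∈ B, ∃ c, Γ.Adj b c ∧ ∀ x ∈ B, ∀ y, Γ.Adj x y → y ∈ B ∨ y = c := by
    by_cases h : ∃ b ∈ B, Γ.Adj b q
    · obtain ⟨b, hb, h⟩ := h
      exact ⟨b, hb, q, h, hq⟩
    · push Not at h
      obtain ⟨b, hb⟩ := hne
      obtain ⟨c, hc, -⟩ := exists_nbr_ne (hdeg b (hA.sub (hB hb))) b b
      refine ⟨b, hb, c, hc, fun x hx y hxy => Or.inl ?_⟩
      rcases hq x hx y hxy with h' | rfl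
      · exact h'
      · exact absurd hxy (h x hx)
  have hP : Piece Γ S (B \ {b, c}) b c := by
    refine ⟨?_, fun x hx => hA.sub (hB hx.1), fun h => h.2 (Or.inl rfl), fun h => h.2 (Or.inr rfl), hbc.ne, ?_,
      {b, c}, conn_pair hbc, Or.inl rfl, Or.inr rfl, Set.disjoint_sdiff_right⟩
    · obtain ⟨d, hd, hdb, hdc⟩ := exists_nbr_ne (hdeg b (hA.sub (hB hb))) b c
      rcases hall b hb d hd with h | h
      · exact ⟨d, h, by rintro (h | h); exacts [hdb h, hdc h]⟩
      · exact absurd h hdc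
    · intro x hx y hxy
      by_cases h1 : y = b
      · exact Or.inr (Or.inl h1)
      by_cases h2 : y = c
      · exact Or.inr (Or.inr h2)
      rcases hall x hx.1 y hxy with h | h
      · exact Or.inl ⟨h, by rintro (h | h); exacts [h1 h, h2 h]⟩
      · exact absurd h h2
  have h1 := hmin _ _ _ hP
  have h2 : (B \ {b, c}).ncard < B.ncard :=
    Set.ncard_lt_ncard ⟨Set.sdiff_subset, fun h => (h hb).2 (Or.inl rfl)⟩ (Set.toFinite _)
  have h3 := Set.ncard_le_ncard hB (Set.toFinite _)
  omega

/-- If a part `X` of a smallest piece is attached only at `p` and `q`, then `p` is linked to `u` off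
`X`. Otherwise the vertices linked to `p` off `X` would, together with `X`, form a part of `A` attached
only at `q`. -/
lemma Piece.no_unlinked {X : Set V} (hX : X ⊆ A) {p q : V} (hpX : p ∉ X)
    (hpU : p ∈ A ∨ p = u ∨ p = v) (hN : ∀ x ∈ X, ∀ c, Γ.Adj x c → c ∈ X ∨ c = p ∨ c = q) : Link Γ X p u := by
  by_contra hc
  have huv : Link Γ X u v := by
    obtain ⟨L, h1, h2, h3, h4⟩ := hA.link
    exact ⟨L, h1, h2, h3, h4.mono_right hX⟩
  have hcv : ¬ Link Γ X p v := fun h => hc (h.trans huv.symm)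
  have hp : Link Γ X p p := ⟨{p}, conn_singleton p, rfl, rfl, Set.disjoint_singleton_left.2 hpX⟩
  have hpA : p ∈ A := by
    rcases hpU with h | rfl | rfl
    · exact h
    · exact absurd hp hc
    · exact absurd hp hcv
  have hR : ∀ t, Link Γ X p t → t ∈ A := by
    rintro t ⟨M, h1, h2, h3, h4⟩
    by_contra ht
    obtain ⟨a, ha, b, hb, hab⟩ := conn_cut h1 (D := M ∩ A) Set.inter_subset_left ⟨p, h2, hpA⟩ ⟨t, h3, fun h => ht h.2⟩
    rcases hA.bdy a ha.2 b hab with h | rfl | rfl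
    · exact hb.2 ⟨hb.1, h⟩
    · exact hc ⟨M, h1, h2, hb.1, h4⟩
    · exact hcv ⟨M, h1, h2, hb.1, h4⟩
  refine hA.no_pendant hdeg hmin (B := {t | Link Γ X p t} ∪ X) (q := q) ?_ ⟨p, Or.inl hp⟩ ?_
  · rintro t (h | h)
    · exact hR t h
    · exact hX h
  · rintro t (h | h) c htc
    · by_cases hcX : c ∈ X
      · exact Or.inl (Or.inr hcX)
      · obtain ⟨M, h1, h2, h3, h4⟩ := h
        exact Or.inl (Or.inl ⟨insert c M, h1.insert h3 htc, Or.inr h2, Or.inl rfl,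
          Set.disjoint_insert_left.2 ⟨hcX, h4⟩⟩)
    · rcases hN t h c htc with h' | rfl | h'
      · exact Or.inl (Or.inr h')
      · exact Or.inl (Or.inl hp)
      · exact Or.inr h'

omit hdeg hA hmin in
/-- The piece `A` with its two attachments `u` and `v`, which are joined by a new edge. -/
def torso (Γ : SimpleGraph V) (A : Set V) (u v : V) : SimpleGraph V where
  Adj a b := a ≠ b ∧ (a ∈ A ∨ a = u ∨ a = v) ∧ (b ∈ A ∨ b = u ∨ b = v) ∧ (Γ.Adj a b ∨ s(a, b) = s(u, v))
  symm := ⟨fun a b h => ⟨h.1.symm, h.2.2.1, h.2.1, by rw [Sym2.eq_swap]; exact h.2.2.2.imp (fun k => k.symm) id⟩⟩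
  loopless := ⟨fun a h => h.1 rfl⟩

/-- The torso of a smallest piece is `3`-connected. -/
lemma Piece.tri : Tri (torso Γ A u v) {a | a ∈ A ∨ a = u ∨ a = v} := by
  set U : Set V := {a | a ∈ A ∨ a = u ∨ a = v} with hU
  have hcard : 4 ≤ U.ncard := by
    obtain ⟨a, ha⟩ := hA.nonempty
    have h1 := hdeg a (hA.sub ha)
    have h2 : insert a (Γ.neighborSet a) ⊆ U := by
      rintro x (rfl | hx)
      · exact Or.inl ha
      · exact hA.bdy a ha x hx
    have h3 := Set.ncard_le_ncard h2 (Set.toFinite _)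
    rw [Set.ncard_insert_of_notMem (by simp) (Set.toFinite _)] at h3
    omega
  refine ⟨fun a b h => h.2.1, hcard, fun P hP => ?_⟩
  -- a separation of `U \ P` into `X` and `Y`, where `X` avoids `u` and `v`, is impossible; `N` is the
  -- set of outside neighbours of `X`, contained in `P`
  have key : ∀ X Y : Set V, (∀ x, x ∈ U → x ∉ P → x ∈ X ∨ x ∈ Y) → X ⊆ U \ P → Y ⊆ U \ P →
      X.Nonempty → Y.Nonempty → Disjoint X Y →
      (∀ x ∈ X, ∀ y ∈ Y, ¬ (torso Γ A u v).Adj x y) → u ∉ X → v ∉ X → False := by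
    intro X Y hcov hXU hYU hX hY hXY hno huX hvX
    have hXA : X ⊆ A := by
      intro x hx
      rcases (hXU hx).1 with h | rfl | rfl
      · exact h
      · exact absurd hx huX
      · exact absurd hx hvX
    let N : Set V := {c | c ∉ X ∧ ∃ x ∈ X, Γ.Adj x c}
    have hNU : ∀ c ∈ N, c ∈ U := fun c ⟨_, x, hx, h⟩ => hA.bdy x (hXA hx) c h
    have hNP : N ⊆ P := by
      rintro c ⟨hc, x, hx, h⟩
      by_contra hcP
      have hcU : c ∈ U := hA.bdy x (hXA hx) c h
      rcases hcov c hcU hcP with h' | h'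
      · exact hc h'
      · exact hno x hx c h' ⟨h.ne, Or.inl (hXA hx), hcU, Or.inl h⟩
    by_cases hs : N.Subsingleton
    · obtain ⟨q, hq⟩ : ∃ q, N ⊆ {q} := by
        rcases hs.eq_empty_or_singleton with h | ⟨q, h⟩
        · exact ⟨u, h ▸ Set.empty_subset _⟩
        · exact ⟨q, h.le⟩
      refine hA.no_pendant hdeg hmin hXA hX (q := q) fun x hx c hxc => ?_
      by_cases hc : c ∈ X
      · exact Or.inl hc
      · exact Or.inr (hq ⟨hc, x, hx, hxc⟩)
    · rw [Set.not_subsingleton_iff] at hs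
      obtain ⟨p, hp, q, hq, hpq⟩ := hs
      have hPe : P = {p, q} := by
        refine (Set.eq_of_subset_of_ncard_le ?_ ?_ (Set.toFinite _)).symm
        · rintro x (rfl | rfl)
          · exact hNP hp
          · exact hNP hq
        · rw [Set.ncard_pair hpq]; exact hP
      have hN : ∀ x ∈ X, ∀ c, Γ.Adj x c → c ∈ X ∨ c = p ∨ c = q := by
        intro x hx c hxc
        by_cases hc : c ∈ X
        · exact Or.inl hc
        · have : c ∈ P := hNP ⟨hc, x, hx, hxc⟩
          rw [hPe] at this
          exact Or.inr this
      -- `X` is itself a piece attached at `p` and `q`, so `X = A` by minimality, which leaves no vertex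
      -- for `Y`
      have h1 := hA.no_unlinked hdeg hmin hXA hp.1 (hNU p hp) hN
      have h2 := hA.no_unlinked hdeg hmin hXA hq.1 (hNU q hq) fun x hx c h => (hN x hx c h).imp id Or.symm
      have h3 := hmin X p q ⟨hX, hXA.trans hA.sub, hp.1, hq.1, hpq, hN, h1.trans h2.symm⟩
      have h4 : X = A := Set.eq_of_subset_of_ncard_le hXA h3 (Set.toFinite _)
      obtain ⟨y, hy⟩ := hY
      have hyX : y ∉ A := fun h => Set.disjoint_left.1 hXY (h4 ▸ h) hy
      have hyP := (hYU hy).2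
      rw [hPe] at hyP
      have hpu : p = u ∨ p = v := (hNU p hp).resolve_left (h4 ▸ hp.1)
      have hqu : q = u ∨ q = v := (hNU q hq).resolve_left (h4 ▸ hq.1)
      have hyu : y = u ∨ y = v := (hYU hy).1.resolve_left hyX
      have e1 : y ≠ p := fun h => hyP (Or.inl h)
      have e2 : y ≠ q := fun h => hyP (Or.inr h)
      grind
  refine conn_of_cut ?_ fun D hD h0 h1 => ?_
  · obtain ⟨b, hb, -⟩ := exists_other (k := 2) hcard u hP
    exact ⟨b, hb⟩
  · by_contra hcon
    push Not at hcon
    -- `u` and `v` are adjacent in the torso, so one of the two sides avoids both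
    by_cases h : u ∈ D ∨ v ∈ D
    · refine key ((U \ P) \ D) D (fun x h1 h2 => ?_) Set.sdiff_subset hD h1 h0 Set.disjoint_sdiff_left
        (fun x hx y hy hxy => hcon y hy x hx hxy.symm) (fun hu => ?_) (fun hv => ?_)
      · by_cases h3 : x ∈ D
        · exact Or.inr h3
        · exact Or.inl ⟨⟨h1, h2⟩, h3⟩
      · exact hcon v (h.resolve_left hu.2) u hu
          ⟨hA.huv.symm, Or.inr (Or.inr rfl), Or.inr (Or.inl rfl), Or.inr Sym2.eq_swap⟩
      · exact hcon u (h.resolve_right hv.2) v hv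
          ⟨hA.huv, Or.inr (Or.inl rfl), Or.inr (Or.inr rfl), Or.inr rfl⟩
    · push Not at h
      refine key D ((U \ P) \ D) (fun x h1 h2 => ?_) hD Set.sdiff_subset h0 h1 Set.disjoint_sdiff_right
        hcon h.1 h.2
      by_cases h3 : x ∈ D
      · exact Or.inl h3
      · exact Or.inr ⟨⟨h1, h2⟩, h3⟩

omit hdeg hmin in
/-- Contracting a link between `u` and `v` shows that minors of the torso are minors of `Γ`. -/
lemma Piece.minor {H : SimpleGraph W} (hM : MinorIn (torso Γ A u v) {a | a ∈ A ∨ a = u ∨ a = v} H) :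
    MinorIn Γ Set.univ H := by
  classical
  obtain ⟨L, hL, huL, hvL, hLA⟩ := hA.link
  -- `M` is a connected part of the link that contains `u` and a neighbour of `v`, but not `v`; it is
  -- contracted to `u`
  obtain ⟨a, ⟨M, hM1, hM2, hM3, hM4⟩, b, hb, hab⟩ := conn_cut hL
    (D := {t | ∃ M, Conn Γ M ∧ u ∈ M ∧ t ∈ M ∧ M ⊆ L \ {v}}) (fun t ⟨M, _, _, h, h'⟩ => (h' h).1)
    ⟨u, {u}, conn_singleton u, rfl, rfl, by rintro _ rfl; exact ⟨huL, hA.huv⟩⟩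
    ⟨v, hvL, fun ⟨M, _, _, h, h'⟩ => (h' h).2 rfl⟩
  have hbv : b = v := by
    by_contra hbv
    refine hb.2 ⟨insert b M, hM1.insert hM3 hab, Or.inr hM2, Or.inl rfl, ?_⟩
    rintro x (rfl | hx)
    · exact ⟨hb.1, hbv⟩
    · exact hM4 hx
  subst hbv
  have hMd : ∀ x, (x ∈ A ∨ x = u ∨ x = b) → x ≠ u → x ∉ M := by
    rintro x (h | h | rfl) hx hxM
    · exact Set.disjoint_left.1 hLA (hM4 hxM).1 h
    · exact hx h
    · exact (hM4 hxM).2 rfl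
  refine hM.lift (φ := fun x => if x = u then M else {x}) (fun _ _ => Set.subset_univ _) (fun x hx => ?_)
    (fun x hx y hy hxy => ?_) fun x hx y hy hxy => ?_
  · split_ifs
    · exact hM1
    · exact conn_singleton x
  · split_ifs with h1 h2 h2
    · exact absurd (h1.trans h2.symm) hxy
    · exact Set.disjoint_singleton_right.2 (hMd y hy h2)
    · exact Set.disjoint_singleton_left.2 (hMd x hx h1)
    · exact Set.disjoint_singleton.2 hxy
  · have hmem : ∀ z, z ∈ (if z = u then M else {z} : Set V) := by
      intro z
      split_ifs with h
      · exact h ▸ hM2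
      · rfl
    rcases hxy.2.2.2 with h | h
    · exact ⟨x, hmem x, y, hmem y, h⟩
    · rcases Sym2.eq_iff.1 h with ⟨rfl, rfl⟩ | ⟨rfl, rfl⟩
      · exact ⟨a, by simpa using hM3, y, hmem y, hab⟩
      · exact ⟨x, hmem x, a, by simpa using hM3, hab.symm⟩

end Minimal

/-- If the graph were not `2`-degenerate, a smallest piece of a subgraph of minimum degree three would
have a `3`-connected torso without `K₅` and `K₃,₃` minor, all of whose cycles avoiding the added edge
`u v` have length at least seven. -/
lemma td_of_planar [Fintype V] {G : SimpleGraph V} (hP : Planar G) (hg : (7 : ℕ∞) ≤ G.girth) : TD G := by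
  refine td_of_not_dense fun S hS => ?_
  let Γ : SimpleGraph V :=
    { Adj := fun a b => a ∈ S ∧ b ∈ S ∧ G.Adj a b
      symm := ⟨fun a b h => ⟨h.2.1, h.1, h.2.2.symm⟩⟩
      loopless := ⟨fun a h => G.loopless.irrefl a h.2.2⟩ }
  have hΓ : ∀ {a b}, Γ.Adj a b → G.Adj a b := fun h => h.2.2
  have hdeg : ∀ s ∈ S, 3 ≤ (Γ.neighborSet s).ncard := by
    intro s hs
    refine (hS.2 s hs).trans (Set.ncard_le_ncard ?_ (Set.toFinite _))
    exact fun t ht => ⟨hs, ht.1, ht.2⟩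
  -- removing the two ends of any edge from `S` leaves a piece
  have hex : ∃ A u v, Piece Γ S A u v := by
    obtain ⟨s, hs⟩ := hS.1
    obtain ⟨t, ht, -⟩ := exists_nbr_ne (hdeg s hs) s s
    refine ⟨S \ {s, t}, s, t, ?_, Set.sdiff_subset, fun h => h.2 (Or.inl rfl), fun h => h.2 (Or.inr rfl), ht.ne, ?_,
      {s, t}, conn_pair ht, Or.inl rfl, Or.inr rfl, Set.disjoint_sdiff_right⟩
    · obtain ⟨c, hc, h1, h2⟩ := exists_nbr_ne (hdeg s hs) s t
      exact ⟨c, hc.2.1, by rintro (h | h); exacts [h1 h, h2 h]⟩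
    · intro a ha b hab
      by_cases h1 : b = s
      · exact Or.inr (Or.inl h1)
      by_cases h2 : b = t
      · exact Or.inr (Or.inr h2)
      exact Or.inl ⟨hab.2.1, by rintro (h | h); exacts [h1 h, h2 h]⟩
  obtain ⟨A, ⟨u, v, hA⟩, hmin⟩ := (measure (fun A : Set V => A.ncard)).wf.has_min
    {A | ∃ u v, Piece Γ S A u v} hex
  have hmin' : ∀ A' u' v', Piece Γ S A' u' v' → A.ncard ≤ A'.ncard :=
    fun A' u' v' h => not_lt.1 (hmin A' ⟨u', v', h⟩)
  have hminor : ∀ {n : Type} {H : SimpleGraph n},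
      MinorIn (torso Γ A u v) {a | a ∈ A ∨ a = u ∨ a = v} H → HasMinor G H := by
    intro n H h
    obtain ⟨F, -, h2, h3, h4⟩ := hA.minor h
    refine ⟨F, fun w => (h2 w).mono_graph fun _ _ _ _ => hΓ, h3, fun w₁ w₂ h => ?_⟩
    obtain ⟨a, ha, b, hb, hab⟩ := h4 w₁ w₂ h
    exact ⟨a, ha, b, hb, hΓ hab⟩
  have htri := hA.tri hdeg hmin'
  obtain ⟨l, r, hD⟩ := exists_dual _ _ _ rfl htri (fun h => hP.1 (hminor h)) fun h => hP.2 (hminor h)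
  refine no_dual_of_long htri hD (u := u) (v := v)
    ⟨hA.huv, Or.inr (Or.inl rfl), Or.inr (Or.inr rfl), Or.inr rfl⟩ fun n w hw hne => ?_
  have hw' : Cyc G n w := ⟨hw.three, fun i => hΓ ((hw.adj i).2.2.2.resolve_right (hne i)), hw.per, hw.inj⟩
  obtain ⟨x, c, hc, hlen, -⟩ := hw'.toWalk
  have := girth_le_length hc
  rw [hlen] at this
  exact (by exact_mod_cast hg : 7 ≤ G.girth).trans this

end Reduction

/-! ### Invariance under isomorphism and conclusion -/

section Transport
variable {G : SimpleGraph V} {H : SimpleGraph W}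

lemma TD.of_equiv [Finite V] (hH : TD H) (e : V ≃ W) (he : ∀ a b, G.Adj a b → H.Adj (e a) (e b)) : TD G := by
  have : Finite W := Finite.of_equiv V e
  intro S hS
  obtain ⟨_, ⟨s, hs, rfl⟩, h2⟩ := hH (e '' S) (hS.image e)
  refine ⟨s, hs, ?_⟩
  rw [← Set.ncard_image_of_injective _ e.injective]
  refine (Set.ncard_le_ncard ?_ (Set.toFinite _)).trans h2
  rintro _ ⟨a, ⟨ha, hsa⟩, rfl⟩
  exact ⟨⟨a, ha, rfl⟩, he _ _ hsa⟩

lemma ncard_neighborSet_iso [Finite V] (e : G ≃g H) (w : W) :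
    (G.neighborSet (e.symm w)).ncard ≤ (H.neighborSet w).ncard := by
  have : Finite W := Finite.of_equiv V e.toEquiv
  rw [← Set.ncard_image_of_injective _ e.injective]
  refine Set.ncard_le_ncard ?_ (Set.toFinite _)
  rintro _ ⟨a, ha, rfl⟩
  have h1 : H.Adj (e (e.symm w)) (e a) := e.map_adj_iff.2 ha
  rwa [e.apply_symm_apply] at h1

lemma Good.iso [Finite V] (hH : Good H) (e : G ≃g H) : Good G := by
  rcases hH with h | h | ⟨u, v, hu, hv, h⟩
  · exact Or.inl (h.of_hom e.toHom)
  · exact Or.inr (Or.inl (h.of_equiv e.toEquiv fun a b hab => e.map_adj_iff.2 hab))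
  · refine Or.inr (Or.inr ⟨e.symm u, e.symm v, (ncard_neighborSet_iso e u).trans hu,
      (ncard_neighborSet_iso e v).trans hv, h.of_equiv e.toEquiv fun a b hab => ?_⟩)
    rw [SimpleGraph.deleteEdges_adj] at hab ⊢
    refine ⟨e.map_adj_iff.2 hab.1, fun hc => hab.2 ?_⟩
    have hc' : s(e a, e b) = s(u, v) := hc
    have := congrArg (Sym2.map e.symm) hc'
    simpa using this

end Transport

/-- If `Δ(G) ≥ 4` and every block of `G` is bipartite, chordless,
series-parallel, a wheel graph, or planar with girth at least 7, then `χ'_trans(G) ≤ 4`. -/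
theorem edge_chromatic_transformation_index_le_four_of_blocks
    {V : Type*} [Fintype V] (G : SimpleGraph V) (hΔ : 4 ≤ maxDeg G)
    (hblocks : ∀ B : G.Subgraph, IsBlock G B →
      B.coe.Colorable 2 ∨ Chordless B.coe ∨ SeriesParallel B.coe ∨ IsWheel B.coe ∨
        (Planar B.coe ∧ (7 : ℕ∞) ≤ B.coe.girth)) :
    transIdx G ≤ 4 ∧
    ∀ f g, IsProperEdgeColoring G (chromIdx G) f → IsProperEdgeColoring G (chromIdx G) g →
      NEquiv G (chromIdx G) 4 f g := by
  refine main_of_good fun B hB => ?_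
  have := Fintype.ofFinite B.verts
  rcases hblocks B hB with h | h | h | ⟨n, hn, ⟨e⟩⟩ | ⟨hP, hg⟩
  · exact Or.inl h
  · exact Or.inr (Or.inl (td_of_chordless h))
  · exact Or.inr (Or.inl (td_of_seriesParallel h))
  · exact (good_wheel hn).iso e
  · exact Or.inr (Or.inl (td_of_planar hP hg))

end EdgeTrans
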